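/- arXiv:1508.04589 — 4 statements merged into one kernel-verified Lean document; each statement's English description precedes it below -/
import Mathlib

section
/- Let m ≥ 3 be an integer and let Q_m ∈ (0,1) be the unique root in (0,1) of 1 + Q^m − ((1−Q²)/2)m = 0, and let v_m(w) = w^{m+1}/(1 − Q_m w²). Then for every α ∈ (0,1) there exist a > 0 and continuous maps ε ∈ (−a,a) ↦ Q(ε) ∈ (0,1) and ε ∈ (−a,a) ↦ f_ε (continuous into the C^{1+α}(𝕋) norm), where each f_ε : 𝕋 → ℂ extends holomorphically to the open unit disc with Fourier expansion f_ε(w) = Σ_{n≥2} a_n(ε) wⁿ with real coefficients, such that: Q(0) = Q_m, f_0 = 0, ‖f_ε − ε v_m‖_{C^{1+α}(𝕋)} = o(ε) as ε → 0 (in particular f_ε ≠ 0 for small ε ≠ 0), and, setting Φ_ε(w) = w + Q(ε)/w + f_ε(w) and Ω_ε = (1 − Q(ε)²)/4, for every ε ∈ (−a,a) and every w ∈ 𝕋 one has Im{ ( 2Ω_ε·conj(Φ_ε(w)) + (1/(2πi))∮_{|ξ|=1} (conj(Φ_ε(ξ)) − conj(Φ_ε(w)))/(Φ_ε(ξ)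 − Φ_ε(w)) · Φ_ε′(ξ) dξ ) · w · Φ_ε′(w) } = 0. -/
open Metric

/-- The function on the circle given by a power series with real
coefficients `b`. -/
noncomputable def seriesFun (b : ℕ → ℝ) (w : ℂ) : ℂ :=
  ∑' n : ℕ, (b n : ℂ) * w ^ n

/-- The derivative of the power series with real coefficients `b`. -/
noncomputable def seriesDeriv (b : ℕ → ℝ) (w : ℂ) : ℂ :=
  ∑' n : ℕ, (n : ℂ) * (b n : ℂ) * w ^ (n - 1)

/-- `g`, together with its tangential derivative `g'`, has `C^{1+α}` size at
most `M` on the unit circle: `g` and `g'` are bounded by `M` and `g'` is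
`α`-Hölder with constant `M`. -/
def C1AlphaBound (α M : ℝ) (g g' : ℂ → ℂ) : Prop :=
  (∀ w ∈ sphere (0:ℂ) 1, ‖g w‖ ≤ M) ∧
  (∀ w ∈ sphere (0:ℂ) 1, ‖g' w‖ ≤ M) ∧
  ∀ w₁ ∈ sphere (0:ℂ) 1, ∀ w₂ ∈ sphere (0:ℂ) 1,
    ‖g' w₁ - g' w₂‖ ≤ M * ‖w₁ - w₂‖ ^ α

/-!
On the ellipse `w + Q/w` every integral in the contour equation is a residue of a geometric series.
The perturbation is written `ε • h`, in spaces of power series weighted so as to converge on an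
annulus; there the contour functional is smooth because inversion in a Banach algebra is. The
ellipses are solutions, so the functional is divisible by `ε`, and the value of the quotient at
`ε = 0` is the linearisation applied to `h`. After multiplication of `h` by `1 - Q w²` the
linearisation is diagonal, with the entry `1 + Q^(n+1) - (1 - Q²)(n+1)/2` on the mode `w^(n+2)`.
Normalising the coefficient of the mode `n + 1 = m` to `1` and using `Q` as the unknown in its
place, the derivative of the quotient is still diagonal at `Q_m`. Its entry on the bifurcating mode
is the derivative of the vanishing eigenvalue in `Q`, which is positive, and the other entries are
nonzero and grow linearly, so the implicit function theorem gives the branch.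
-/

open Filter Asymptotics Topology
open scoped Ring

/-! ### Weighted `ℓ¹` spaces and convolution algebras -/

/-- A family of strictly positive weights. -/
structure Weight (ι : Type*) where
  toFun : ι → ℝ
  pos : ∀ i, 0 < toFun i

namespace Weight

instance {ι : Type*} : CoeFun (Weight ι) fun _ => ι → ℝ := ⟨toFun⟩

/-- Submultiplicativity, the condition under which weighted `ℓ¹` families form an algebra under
convolution. -/
class IsSubmultiplicative {G : Type*} [Add G] (ω : Weight G) : Prop where
  add_le : ∀ g h, ω (g + h) ≤ ω g * ω h

end Weight

/-- The space of real families `x` with `∑ i, |x i| * ω i < ∞`. It is encoded as unweighted `ℓ¹`,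
the basis vector of index `i` having norm `ω i`; see `WeightedL1.monomial` and
`WeightedL1.coeff`. -/
def WeightedL1 {ι : Type*} (_ω : Weight ι) : Type _ := lp (fun _ : ι => ℝ) 1

namespace WeightedL1

section Module

variable {ι : Type*} {ω : Weight ι}

noncomputable instance : NormedAddCommGroup (WeightedL1 ω) :=
  inferInstanceAs (NormedAddCommGroup (lp (fun _ : ι => ℝ) 1))

noncomputable instance : NormedSpace ℝ (WeightedL1 ω) :=
  inferInstanceAs (NormedSpace ℝ (lp (fun _ : ι => ℝ) 1))

instance : CompleteSpace (WeightedL1 ω) :=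
  inferInstanceAs (CompleteSpace (lp (fun _ : ι => ℝ) 1))

/-- The coordinate of index `i`. -/
noncomputable def coeff (i : ι) : WeightedL1 ω →L[ℝ] ℝ :=
  (ω i)⁻¹ • lp.evalCLM ℝ (fun _ : ι => ℝ) 1 i

theorem hasSum_norm (x : WeightedL1 ω) : HasSum (fun i => |coeff i x| * ω i) ‖x‖ := by
  have h : HasSum _ (‖x‖ ^ (1 : ENNReal).toReal) := lp.hasSum_norm (p := 1) (by simp) x
  rw [ENNReal.toReal_one, Real.rpow_one] at h
  refine h.congr_fun fun i => ?_
  change |(ω i)⁻¹ * x.1 i| * ω i = ‖x.1 i‖ ^ (1 : ℝ)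
  rw [Real.rpow_one, Real.norm_eq_abs, abs_mul, abs_inv, abs_of_pos (ω.pos i), mul_right_comm,
    inv_mul_cancel₀ (ω.pos i).ne', one_mul]

theorem summable_abs_coeff_mul (x : WeightedL1 ω) {v : ι → ℝ} (hv₀ : ∀ i, 0 ≤ v i) {C : ℝ}
    (hv : ∀ i, v i ≤ C * ω i) : Summable fun i => |coeff i x| * v i := by
  refine .of_nonneg_of_le (fun i => mul_nonneg (abs_nonneg _) (hv₀ i)) (fun i => ?_)
    (x.hasSum_norm.summable.mul_left C)
  calc |coeff i x| * v i ≤ |coeff i x| * (C * ω i) := by gcongr; exact hv i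
    _ = C * (|coeff i x| * ω i) := by ring

theorem ext_coeff {x y : WeightedL1 ω} (h : ∀ i, coeff i x = coeff i y) : x = y := by
  rw [← sub_eq_zero, ← norm_eq_zero]
  refine (hasSum_norm (x - y)).unique (hasSum_zero.congr_fun fun i => ?_)
  rw [map_sub, h i, sub_self, abs_zero, zero_mul]

variable {F : Type*} [NormedAddCommGroup F] [NormedSpace ℝ F]

theorem norm_coeff_smul_le {y : ι → F} {C : ℝ} (hy : ∀ i, ‖y i‖ ≤ C * ω i) (x : WeightedL1 ω)
    (i : ι) : ‖coeff i x • y i‖ ≤ C * (|coeff i x| * ω i) :=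
  calc ‖coeff i x • y i‖ = |coeff i x| * ‖y i‖ := norm_smul _ _
    _ ≤ |coeff i x| * (C * ω i) := by gcongr; exact hy i
    _ = C * (|coeff i x| * ω i) := by ring

/-- The continuous linear map sending `monomial i` to `y i`. -/
noncomputable def lift [CompleteSpace F] (y : ι → F) {C : ℝ} (hy : ∀ i, ‖y i‖ ≤ C * ω i) :
    WeightedL1 ω →L[ℝ] F :=
  have hs (x : WeightedL1 ω) : Summable fun i => coeff i x • y i :=
    .of_norm_bounded (x.hasSum_norm.summable.mul_left C) (norm_coeff_smul_le hy x)
  LinearMap.mkContinuous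
    { toFun := fun x => ∑' i, coeff i x • y i
      map_add' := fun a b => by
        simp only [map_add, add_smul]
        exact (hs a).tsum_add (hs b)
      map_smul' := fun c a => by
        simp only [map_smul, smul_assoc]
        exact (hs a).tsum_const_smul c }
    C fun x => tsum_of_norm_bounded (x.hasSum_norm.mul_left C) (norm_coeff_smul_le hy x)

theorem norm_lift_le [CompleteSpace F] {y : ι → F} {C : ℝ} (hy : ∀ i, ‖y i‖ ≤ C * ω i)
    (hC : 0 ≤ C) : ‖lift y hy‖ ≤ C :=
  LinearMap.mkContinuous_norm_le (C := C) _ hC fun x =>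
    tsum_of_norm_bounded (x.hasSum_norm.mul_left C) (norm_coeff_smul_le hy x)

variable [DecidableEq ι]

/-- The basis vector of index `i`. -/
noncomputable def monomial (i : ι) : WeightedL1 ω :=
  (lp.single 1 i (ω i) : lp (fun _ : ι => ℝ) 1)

theorem coeff_monomial (i j : ι) :
    coeff i (monomial j : WeightedL1 ω) = if i = j then 1 else 0 := by
  change (ω i)⁻¹ * lp.single (E := fun _ : ι => ℝ) 1 j (ω j) i = _
  rw [lp.single_apply, Pi.single_apply]
  split_ifs with h
  · rw [h, inv_mul_cancel₀ (ω.pos j).ne']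
  · rw [mul_zero]

theorem norm_monomial (i : ι) : ‖(monomial i : WeightedL1 ω)‖ = ω i :=
  (lp.norm_single (p := 1) one_pos i _).trans (abs_of_pos (ω.pos i))

theorem hasSum_coeff_smul_monomial (x : WeightedL1 ω) :
    HasSum (fun i => coeff i x • (monomial i : WeightedL1 ω)) x := by
  refine (lp.hasSum_single (E := fun _ : ι => ℝ) (p := 1) (by simp) x).congr_fun fun i => ?_
  change ((ω i)⁻¹ * x.1 i) • lp.single (E := fun _ : ι => ℝ) 1 i (ω i) = lp.single 1 i (x.1 i)
  rw [← lp.single_smul, smul_eq_mul, mul_right_comm, inv_mul_cancel₀ (ω.pos i).ne', one_mul]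

theorem hasSum_apply (T : WeightedL1 ω →L[ℝ] F) (x : WeightedL1 ω) :
    HasSum (fun i => coeff i x • T (monomial i)) (T x) := by
  simpa only [map_smul] using x.hasSum_coeff_smul_monomial.mapL T

theorem norm_apply_le (T : WeightedL1 ω →L[ℝ] F) {C : ℝ} (hT : ∀ i, ‖T (monomial i)‖ ≤ C * ω i)
    (x : WeightedL1 ω) : ‖T x‖ ≤ C * ‖x‖ :=
  (hasSum_apply T x).norm_le_of_bounded (x.hasSum_norm.mul_left C) (norm_coeff_smul_le hT x)

theorem hom_ext {S T : WeightedL1 ω →L[ℝ] F}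
    (h : ∀ i, S (monomial i) = T (monomial i)) : S = T := by
  ext x
  exact (hasSum_apply S x).unique ((hasSum_apply T x).congr_fun fun i => by rw [h])

theorem lift_monomial [CompleteSpace F] {y : ι → F} {C : ℝ} (hy : ∀ i, ‖y i‖ ≤ C * ω i)
    (i : ι) : lift y hy (monomial i) = y i := by
  change ∑' j, coeff j (monomial i : WeightedL1 ω) • y j = y i
  rw [tsum_eq_single i fun j hj => by rw [coeff_monomial, if_neg hj, zero_smul],
    coeff_monomial, if_pos rfl, one_smul]

theorem coeff_lift_diagonal {ω' : Weight ι} {d : ι → ℝ} {C : ℝ}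
    (hd : ∀ i, ‖d i • (monomial i : WeightedL1 ω')‖ ≤ C * ω i) (x : WeightedL1 ω) (i : ι) :
    coeff i (lift (fun j => d j • (monomial j : WeightedL1 ω')) hd x) = d i * coeff i x := by
  suffices (coeff i).comp (lift _ hd) = d i • coeff i from congr($this x)
  refine hom_ext fun j => ?_
  rw [ContinuousLinearMap.comp_apply, lift_monomial, map_smul, smul_apply,
    coeff_monomial, coeff_monomial, smul_eq_mul, smul_eq_mul]
  split_ifs with h
  · rw [h]
  · rw [mul_zero, mul_zero]

omit [DecidableEq ι] in
theorem isInvertible_of_diagonal {ω' : Weight ι} {A : WeightedL1 ω →L[ℝ] WeightedL1 ω'}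
    {d : ι → ℝ} (hA : ∀ x i, coeff i (A x) = d i * coeff i x) {C : ℝ}
    (hC : ∀ i, ω i ≤ C * |d i| * ω' i) : A.IsInvertible := by
  classical
  have hd (i : ι) : d i ≠ 0 := fun h => (ω.pos i).not_ge <| by simpa [h] using hC i
  have hb (i : ι) : ‖(d i)⁻¹ • (monomial i : WeightedL1 ω)‖ ≤ C * ω' i := by
    rw [norm_smul, norm_monomial, Real.norm_eq_abs, abs_inv, inv_mul_le_iff₀ (abs_pos.2 (hd i))]
    exact (hC i).trans_eq (by ring)
  refine .of_inverse (g := lift _ hb) ?_ ?_ <;> ext x : 1 <;> refine ext_coeff fun i => ?_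
  · rw [ContinuousLinearMap.comp_apply, hA, coeff_lift_diagonal, mul_inv_cancel_left₀ (hd i)]
    rfl
  · rw [ContinuousLinearMap.comp_apply, coeff_lift_diagonal, hA, inv_mul_cancel_left₀ (hd i)]
    rfl

end Module

section Algebra

variable {G : Type*} [DecidableEq G] [AddCommMonoid G] {ω : Weight G} [ω.IsSubmultiplicative]

theorem norm_monomial_add_le (g h : G) : ‖(monomial (g + h) : WeightedL1 ω)‖ ≤ ω g * ω h := by
  rw [norm_monomial]
  exact Weight.IsSubmultiplicative.add_le g h

theorem norm_lift_monomial_add_le (g : G) :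
    ‖lift (fun h => (monomial (g + h) : WeightedL1 ω)) (norm_monomial_add_le g)‖ ≤ 1 * ω g :=
  (norm_lift_le _ (ω.pos g).le).trans_eq (one_mul _).symm

/-- Convolution, the bilinear map with `eᵢ * eⱼ = eᵢ₊ⱼ` on basis vectors. -/
noncomputable def convolution : WeightedL1 ω →L[ℝ] WeightedL1 ω →L[ℝ] WeightedL1 ω :=
  lift (fun g => lift (fun h => monomial (g + h)) (norm_monomial_add_le g))
    norm_lift_monomial_add_le

theorem convolution_monomial (g h : G) :
    convolution (monomial g : WeightedL1 ω) (monomial h) = monomial (g + h) := by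
  rw [convolution, lift_monomial, lift_monomial]

theorem convolution_comm (x y : WeightedL1 ω) : convolution x y = convolution y x := by
  suffices convolution = (convolution (ω := ω)).flip from congr($this x y)
  refine hom_ext fun g => hom_ext fun h => ?_
  rw [ContinuousLinearMap.flip_apply, convolution_monomial, convolution_monomial, add_comm]

theorem monomial_zero_convolution (x : WeightedL1 ω) : convolution (monomial 0) x = x := by
  suffices convolution (monomial 0) = ContinuousLinearMap.id ℝ (WeightedL1 ω) from congr($this x)
  refine hom_ext fun h => ?_
  rw [convolution_monomial, zero_add, ContinuousLinearMap.id_apply]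

theorem convolution_assoc (x y z : WeightedL1 ω) :
    convolution (convolution x y) z = convolution x (convolution y z) := by
  suffices convolution (convolution x y) = (convolution x).comp (convolution y) from
    congr($this z)
  refine hom_ext fun k => ?_
  suffices (convolution.flip (monomial k)).comp (convolution x) =
      (convolution x).comp (convolution.flip (monomial k)) from congr($this y)
  refine hom_ext fun h => ?_
  suffices (convolution.flip (monomial k)).comp (convolution.flip (monomial h)) =
      (convolution (ω := ω)).flip (convolution (monomial h) (monomial k)) from congr($this x)
  refine hom_ext fun g => ?_
  simp only [ContinuousLinearMap.comp_apply, ContinuousLinearMap.flip_apply,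
    convolution_monomial, add_assoc]

theorem norm_convolution_le (x y : WeightedL1 ω) : ‖convolution x y‖ ≤ ‖x‖ * ‖y‖ := by
  have h : ‖convolution (ω := ω)‖ ≤ 1 := norm_lift_le norm_lift_monomial_add_le zero_le_one
  simpa only [one_mul] using convolution.le_of_opNorm₂_le_of_le h le_rfl le_rfl

noncomputable instance : NormedCommRing (WeightedL1 ω) where
  __ := (inferInstance : NormedAddCommGroup (WeightedL1 ω))
  mul x y := convolution x y
  one := monomial 0
  norm_mul_le := norm_convolution_le
  left_distrib x := map_add (convolution x)
  right_distrib x y z := congr($(map_add convolution x y) z)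
  zero_mul x := congr($(map_zero convolution) x)
  mul_zero x := map_zero (convolution x)
  mul_assoc := convolution_assoc
  mul_comm := convolution_comm
  one_mul := monomial_zero_convolution
  mul_one x := (convolution_comm x _).trans (monomial_zero_convolution x)

noncomputable instance : NormedAlgebra ℝ (WeightedL1 ω) where
  __ := Algebra.ofModule (fun c x y => DFunLike.congr_fun (map_smul convolution c x) y)
    fun c x y => map_smul (convolution x) c y
  norm_smul_le := norm_smul_le

theorem monomial_mul_monomial (g h : G) :
    (monomial g : WeightedL1 ω) * monomial h = monomial (g + h) :=
  convolution_monomial g h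

variable {A : Type*} [NormedRing A] [NormedAlgebra ℝ A] [CompleteSpace A]

/-- The extension of a bounded multiplicative character to the convolution algebra. -/
noncomputable def liftAlgHom (χ : Multiplicative G →* A) {C : ℝ}
    (hχ : ∀ g, ‖χ (.ofAdd g)‖ ≤ C * ω g) : WeightedL1 ω →A[ℝ] A where
  toAlgHom := .ofLinearMap (lift (fun g => χ (.ofAdd g)) hχ).toLinearMap
    (by
      change lift _ hχ (monomial 0) = 1
      rw [lift_monomial, ofAdd_zero, map_one])
    fun x y => by
      let T := lift (fun g => χ (.ofAdd g)) hχ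
      suffices T.comp (convolution x) = (ContinuousLinearMap.mul ℝ A (T x)).comp T from
        congr($this y)
      refine hom_ext fun h => ?_
      suffices T.comp (convolution.flip (monomial h)) =
          ((ContinuousLinearMap.mul ℝ A).flip (T (monomial h))).comp T from congr($this x)
      refine hom_ext fun g => ?_
      simp only [ContinuousLinearMap.comp_apply, ContinuousLinearMap.flip_apply,
        convolution_monomial, ContinuousLinearMap.mul_apply', T, lift_monomial, ofAdd_add, map_mul]
  cont := (lift (fun g => χ (.ofAdd g)) hχ).continuous

theorem liftAlgHom_monomial (χ : Multiplicative G →* A) {C : ℝ}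
    (hχ : ∀ g, ‖χ (.ofAdd g)‖ ≤ C * ω g) (g : G) :
    liftAlgHom χ hχ (monomial g) = χ (.ofAdd g) :=
  lift_monomial hχ g

end Algebra

end WeightedL1

/-! ### Residues, powers and inverses -/

section CircleResidue

/-- The residue `f ↦ (2πi)⁻¹ ∮ f(ξ) dξ` on the unit circle. -/
noncomputable def circleResidue : C(Circle, ℂ) →L[ℂ] ℂ :=
  (2 * Real.pi * Complex.I : ℂ)⁻¹ • LinearMap.mkContinuous
    { toFun := fun f => ∫ θ in (0 : ℝ)..2 * Real.pi, (Circle.exp θ * Complex.I) * f (Circle.exp θ)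
      map_add' := fun f g => by
        simp only [ContinuousMap.add_apply, mul_add]
        exact intervalIntegral.integral_add (Continuous.intervalIntegrable (by fun_prop) _ _)
          (Continuous.intervalIntegrable (by fun_prop) _ _)
      map_smul' := fun c f => by
        simp only [ContinuousMap.smul_apply, smul_eq_mul, mul_left_comm _ c, RingHom.id_apply]
        exact intervalIntegral.integral_const_mul c _ }
    (2 * Real.pi) fun f => by
      refine (intervalIntegral.norm_integral_le_of_norm_le_const (C := ‖f‖) fun θ _ => ?_).trans_eq
        ?_
      · rw [norm_mul, norm_mul, Circle.norm_coe, Complex.norm_I, one_mul, one_mul]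
        exact f.norm_coe_le_norm _
      · rw [sub_zero, abs_of_pos Real.two_pi_pos, mul_comm]

theorem circleIntegral_div_two_pi_I_of_eq_on_compl_singleton (w : Circle) {F : ℂ → ℂ}
    {f : C(Circle, ℂ)} (h : ∀ ξ : Circle, ξ ≠ w → F ξ = f ξ) :
    (∮ ξ in C(0, 1), F ξ) / (2 * Real.pi * Complex.I) = circleResidue f := by
  rw [div_eq_inv_mul]
  refine congrArg _ (intervalIntegral.integral_congr_ae ?_)
  have hnull := (Set.countable_singleton (w : ℂ)).preimage_circleMap 0 one_ne_zero
  filter_upwards [hnull.ae_notMem MeasureTheory.volume] with θ hθ _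
  have hexp : circleMap 0 1 θ = Circle.exp θ := by simp [circleMap]
  rw [deriv_circleMap, hexp, smul_eq_mul, h]
  rintro rfl
  exact hθ hexp

theorem circleResidue_zpow {f : C(Circle, ℂ)} (j : ℤ) (hf : ∀ ξ : Circle, f ξ = (ξ : ℂ) ^ j) :
    circleResidue f = if j = -1 then 1 else 0 := by
  rw [← circleIntegral_div_two_pi_I_of_eq_on_compl_singleton 1 (F := fun ξ => (ξ - 0) ^ j)
    fun ξ _ => by rw [hf, sub_zero]]
  split_ifs with hj
  · simp only [hj, zpow_neg_one]
    rw [circleIntegral.integral_sub_center_inv _ one_ne_zero, div_self Complex.two_pi_I_ne_zero]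
  · rw [circleIntegral.integral_sub_zpow_of_ne hj, zero_div]

end CircleResidue

theorem contDiffAt_inverse_comp {E R : Type*} [NormedAddCommGroup E] [NormedSpace ℝ E]
    [NormedRing R] [NormedAlgebra ℝ R] [HasSummableGeomSeries R] {f : E → R} {x : E}
    {n : WithTop ℕ∞} (hf : ContDiffAt ℝ n f x) (hu : IsUnit (f x)) :
    ContDiffAt ℝ n (fun y => (f y)⁻¹ʳ) x := by
  obtain ⟨u, hu⟩ := hu
  exact ContDiffAt.comp x (hu ▸ contDiffAt_ringInverse ℝ u) hf

theorem le_mul_rpow {R d α : ℝ} (hR : 1 ≤ R) (hd : 0 ≤ d) (hdR : d ≤ R)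
    (hα : α ∈ Set.Icc (0 : ℝ) 1) : d ≤ R * d ^ α := by
  calc d = d ^ (1 - α + α) := by rw [sub_add_cancel, Real.rpow_one]
    _ = d ^ (1 - α) * d ^ α :=
      Real.rpow_add_of_nonneg hd (sub_nonneg.2 hα.2) hα.1
    _ ≤ R * d ^ α := by
      gcongr
      exact (Real.rpow_le_rpow hd hdR (sub_nonneg.2 hα.2)).trans
        (Real.rpow_le_self_of_one_le hR (sub_le_self 1 hα.1))

theorem norm_circle_pow_sub_pow_le (w₁ w₂ : Circle) (n : ℕ) :
    ‖(w₁ : ℂ) ^ n - (w₂ : ℂ) ^ n‖ ≤ n * ‖(w₁ : ℂ) - w₂‖ := by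
  rw [← geom_sum₂_mul, norm_mul]
  gcongr
  refine (norm_sum_le _ _).trans_eq ?_
  simp only [norm_mul, norm_pow, Circle.norm_coe, one_pow, mul_one, Finset.sum_const,
    Finset.card_range, nsmul_eq_mul]

theorem tendsto_mul_norm_smul_sub_div {E : Type*} [NormedAddCommGroup E] [NormedSpace ℝ E]
    {h : ℝ → E} (hh : ContinuousAt h 0) (C : ℝ) :
    Tendsto (fun ε => C * ‖ε • h ε - ε • h 0‖ / |ε|) (𝓝[≠] 0) (𝓝 0) := by
  have hc : Tendsto (fun ε => C * ‖h ε - h 0‖) (𝓝 0) (𝓝 0) := by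
    have hcont : ContinuousAt (fun ε => C * ‖h ε - h 0‖) 0 := by fun_prop
    simpa only [ContinuousAt, sub_self, norm_zero, mul_zero] using hcont
  refine (hc.mono_left nhdsWithin_le_nhds).congr' ?_
  filter_upwards [self_mem_nhdsWithin] with ε hε
  rw [← smul_sub, norm_smul, Real.norm_eq_abs, mul_left_comm, mul_div_cancel_left₀ _
    (abs_ne_zero.2 hε)]

theorem C1AlphaBound.mono {α M N : ℝ} {g g' : ℂ → ℂ} (h : C1AlphaBound α M g g')
    (hMN : M ≤ N) : C1AlphaBound α N g g' :=
  ⟨fun w hw => (h.1 w hw).trans hMN, fun w hw => (h.2.1 w hw).trans hMN,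
    fun w₁ hw₁ w₂ hw₂ => (h.2.2 w₁ hw₁ w₂ hw₂).trans (by gcongr)⟩

/-! ### Laurent series in two variables and sine series -/

namespace VState

open WeightedL1

section Spaces

variable (τ : ℝ) [hτ : Fact (0 < τ)]

/-- The weight `(1+τ)^(|j|+|k|)` on the monomials `ξ^j w^k`. -/
noncomputable def laurentWeight : Weight (ℤ × ℤ) where
  toFun p := (1 + τ) ^ (p.1.natAbs + p.2.natAbs)
  pos _ := pow_pos (add_pos one_pos hτ.out) _

instance : (laurentWeight τ).IsSubmultiplicative where
  add_le p q := by
    simp only [laurentWeight, ← pow_add]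
    refine pow_le_pow_right₀ (by linarith [hτ.out]) ?_
    have h₁ := Int.natAbs_add_le p.1 q.1
    have h₂ := Int.natAbs_add_le p.2 q.2
    simp only [Prod.fst_add, Prod.snd_add]
    omega

/-- The algebra of Laurent series in two variables `ξ, w` with real coefficients, absolutely
convergent on the annuli `(1+τ)⁻¹ ≤ |ξ|, |w| ≤ 1+τ`. -/
abbrev Laurent : Type := WeightedL1 (laurentWeight τ)

/-- The weight `(1+τn)(1+τ)^n` on the perturbation `w^(n+2)`. The factor `1+τn` compensates the
loss of one derivative in the contour equation. -/
noncomputable def perturbationWeight : Weight ℕ where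
  toFun n := (1 + τ * n) * (1 + τ) ^ n
  pos n := by have := hτ.out; positivity

/-- The space of perturbations `∑ n, xₙ w^(n+2)` of the conformal parametrisation. -/
abbrev Perturbation : Type := WeightedL1 (perturbationWeight τ)

/-- The weight `(1+τ)^n` on the sine mode `Im w^(n+1)`. -/
noncomputable def sineWeight : Weight ℕ where
  toFun n := (1 + τ) ^ n
  pos _ := pow_pos (add_pos one_pos hτ.out) _

/-- The space of sine series `∑ n, yₙ Im w^(n+1)`, in which the contour equation takes its
values. -/
abbrev SineSeries : Type := WeightedL1 (sineWeight τ)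

end Spaces

variable {τ : ℝ} [hτ : Fact (0 < τ)]

section Laurent

/-- The Laurent monomial `ξ^j w^k`. -/
noncomputable def mon (j k : ℤ) : Laurent τ := monomial (j, k)

theorem mon_mul_mon (j k j' k' : ℤ) :
    (mon j k : Laurent τ) * mon j' k' = mon (j + j') (k + k') :=
  monomial_mul_monomial (j, k) (j', k')

theorem mon_zero_zero : (mon 0 0 : Laurent τ) = 1 := rfl

theorem norm_mon (j k : ℤ) : ‖(mon j k : Laurent τ)‖ = (1 + τ) ^ (j.natAbs + k.natAbs) :=
  norm_monomial (j, k)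

/-- The character `(j, k) ↦ ξ^j w^k` at a point `w` of the unit circle, as a function of `ξ` in the
unit circle. -/
noncomputable def laurentChar (w : Circle) : Multiplicative (ℤ × ℤ) →* C(Circle, ℂ) where
  toFun p := ⟨fun ξ => ((ξ ^ p.toAdd.1 * w ^ p.toAdd.2 : Circle) : ℂ),
    Continuous.comp (g := ((↑) : Circle → ℂ)) (by fun_prop) (by fun_prop)⟩
  map_one' := by ext ξ; simp
  map_mul' p q := by
    ext ξ
    simp only [toAdd_mul, Prod.fst_add, Prod.snd_add, zpow_add, ContinuousMap.coe_mk,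
      ContinuousMap.mul_apply, Circle.coe_mul]
    ring

theorem norm_laurentChar_le (w : Circle) (p : ℤ × ℤ) :
    ‖laurentChar w (.ofAdd p)‖ ≤ 1 * laurentWeight τ p := by
  rw [one_mul]
  refine (ContinuousMap.norm_le _ ((laurentWeight τ).pos p).le).2 fun ξ => ?_
  exact (Circle.norm_coe _).trans_le (one_le_pow₀ (by linarith [hτ.out]))

/-- Evaluation at a point `w` of the unit circle, as a function of `ξ` in the unit circle. -/
noncomputable def laurentEval (w : Circle) : Laurent τ →A[ℝ] C(Circle, ℂ) :=
  liftAlgHom (laurentChar w) (norm_laurentChar_le w)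

theorem laurentEval_mon (w ξ : Circle) (j k : ℤ) :
    laurentEval w (mon j k : Laurent τ) ξ = (ξ : ℂ) ^ j * (w : ℂ) ^ k := by
  rw [laurentEval, mon, liftAlgHom_monomial]
  simp [laurentChar]

theorem laurentEval_inverse (w ξ : Circle) {x : Laurent τ} (hx : IsUnit x) :
    laurentEval w x⁻¹ʳ ξ = (laurentEval w x ξ)⁻¹ := by
  refine eq_inv_of_mul_eq_one_left ?_
  rw [← ContinuousMap.mul_apply, ← map_mul, Ring.inverse_mul_cancel _ hx, map_one,
    ContinuousMap.one_apply]

end Laurent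

section Sine

/-- The sine mode `Im w^k` for an arbitrary integer `k`. -/
noncomputable def sine (k : ℤ) : SineSeries τ := (k.sign : ℝ) • monomial (k.natAbs - 1)

theorem sine_neg (k : ℤ) : sine (-k) = -(sine k : SineSeries τ) := by
  simp [sine]

theorem sine_natCast_add_one (n : ℕ) : (sine (n + 1) : SineSeries τ) = monomial n := by
  rw [sine, Int.sign_eq_one_of_pos (by omega), Int.cast_one, one_smul]
  rfl

theorem norm_sine_le (k : ℤ) : ‖(sine k : SineSeries τ)‖ ≤ (1 + τ) ^ k.natAbs := by
  have hbase : (1 : ℝ) ≤ 1 + τ := by linarith [hτ.out]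
  have hsign : |(k.sign : ℝ)| ≤ 1 := by
    rcases lt_trichotomy k 0 with h | h | h <;>
      simp [Int.sign_eq_one_of_pos, Int.sign_eq_neg_one_of_neg, h]
  calc ‖(sine k : SineSeries τ)‖ = |(k.sign : ℝ)| * (1 + τ) ^ (k.natAbs - 1) := by
        rw [sine, norm_smul, norm_monomial]; rfl
    _ ≤ 1 * (1 + τ) ^ k.natAbs := by gcongr; omega
    _ = (1 + τ) ^ k.natAbs := one_mul _

theorem norm_residue_mon_le (p : ℤ × ℤ) :
    ‖(if p.1 = -1 then sine p.2 else 0 : SineSeries τ)‖ ≤ 1 * laurentWeight τ p := by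
  have hbase : (1 : ℝ) ≤ 1 + τ := by linarith [hτ.out]
  rw [one_mul]
  split_ifs
  · exact (norm_sine_le _).trans (pow_le_pow_right₀ hbase (Nat.le_add_left _ _))
  · rw [norm_zero]
    exact ((laurentWeight τ).pos p).le

/-- The imaginary part, as a sine series in `w`, of the residue in `ξ`. -/
noncomputable def imResidue : Laurent τ →L[ℝ] SineSeries τ :=
  lift _ norm_residue_mon_le

theorem imResidue_mon (j k : ℤ) :
    imResidue (mon j k : Laurent τ) = if j = -1 then sine k else 0 :=
  lift_monomial norm_residue_mon_le (j, k)

theorem norm_im_pow_le (w : Circle) (n : ℕ) :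
    ‖((w : ℂ) ^ (n + 1)).im‖ ≤ 1 * sineWeight τ n := by
  rw [one_mul]
  refine (Complex.abs_im_le_norm _).trans ?_
  rw [norm_pow, Circle.norm_coe, one_pow]
  exact one_le_pow₀ (by linarith [hτ.out])

/-- Evaluation of a sine series at a point of the unit circle. -/
noncomputable def sineEval (w : Circle) : SineSeries τ →L[ℝ] ℝ := lift _ (norm_im_pow_le w)

theorem sineEval_sine (w : Circle) (k : ℤ) :
    sineEval w (sine k : SineSeries τ) = ((w : ℂ) ^ k).im := by
  have hpos (n : ℕ) : sineEval w (sine (n + 1) : SineSeries τ) = ((w : ℂ) ^ (n + 1)).im := by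
    rw [sine_natCast_add_one, sineEval, lift_monomial]
  rcases lt_trichotomy k 0 with h | rfl | h
  · obtain ⟨n, rfl⟩ : ∃ n : ℕ, k = -(n + 1) := ⟨(-k - 1).toNat, by omega⟩
    rw [sine_neg, map_neg, hpos, zpow_neg, ← Circle.coe_zpow, ← Circle.coe_inv,
      Circle.coe_inv_eq_conj, Complex.conj_im, Circle.coe_zpow]
    norm_cast
  · simp [sine]
  · obtain ⟨n, rfl⟩ : ∃ n : ℕ, k = n + 1 := ⟨(k - 1).toNat, by omega⟩
    rw [hpos]
    norm_cast

theorem im_circleResidue_laurentEval (w : Circle) (x : Laurent τ) :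
    (circleResidue (laurentEval w x)).im = sineEval w (imResidue x) := by
  suffices Complex.imCLM.comp ((circleResidue.restrictScalars ℝ).comp
      (laurentEval w).toContinuousLinearMap) = (sineEval w).comp (imResidue (τ := τ)) from
    congr($this x)
  refine hom_ext fun p => ?_
  change (circleResidue (laurentEval w (mon p.1 p.2))).im = sineEval w (imResidue (mon p.1 p.2))
  have h : laurentEval w (mon p.1 p.2 : Laurent τ) =
      ((w : ℂ) ^ p.2) • laurentEval w (mon p.1 0 : Laurent τ) := by
    ext ξ
    simp [laurentEval_mon, mul_comm]
  rw [h, map_smul, circleResidue_zpow p.1 fun ξ => by simp [laurentEval_mon], imResidue_mon]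
  split_ifs
  · rw [sineEval_sine, smul_eq_mul, mul_one]
  · simp

end Sine

section PerturbationMaps

theorem add_two_le_mul (n : ℕ) : (n + 2 : ℝ) ≤ (2 + τ⁻¹) * (1 + τ * n) := by
  have hτ₀ := hτ.out
  have h : (2 + τ⁻¹) * (1 + τ * n) = n + 2 + (2 * (τ * n) + τ⁻¹) := by
    field_simp
    ring
  rw [h]
  have : 0 ≤ 2 * (τ * n) + τ⁻¹ := by positivity
  linarith

theorem add_two_mul_pow_le (n : ℕ) :
    (n + 2) * (1 + τ) ^ (n + 2) ≤ (2 + τ⁻¹) * (1 + τ) ^ 2 * perturbationWeight τ n := by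
  have hτ₀ := hτ.out
  calc (n + 2) * (1 + τ) ^ (n + 2)
      ≤ ((2 + τ⁻¹) * (1 + τ * n)) * (1 + τ) ^ (n + 2) := by
        gcongr
        exact add_two_le_mul n
    _ = (2 + τ⁻¹) * (1 + τ) ^ 2 * perturbationWeight τ n := by
        simp only [perturbationWeight]
        ring

variable {F : Type*} [NormedAddCommGroup F] [NormedSpace ℝ F] [CompleteSpace F]

/-- The continuous linear map on perturbations sending `w^(n+2)` to `y n`, for any `y n` growing
at most like the derivative of `w^(n+2)` on the annulus. -/
noncomputable def liftPerturbation (y : ℕ → F) (hy : ∀ n, ‖y n‖ ≤ (n + 2) * (1 + τ) ^ (n + 2)) :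
    Perturbation τ →L[ℝ] F :=
  lift y fun n => (hy n).trans (add_two_mul_pow_le n)

theorem liftPerturbation_monomial {y : ℕ → F} (hy : ∀ n, ‖y n‖ ≤ (n + 2) * (1 + τ) ^ (n + 2))
    (n : ℕ) : liftPerturbation y hy (monomial n) = y n :=
  lift_monomial _ n

theorem norm_sum_mon_le (n : ℕ) {j k : ℕ → ℤ}
    (h : ∀ i ∈ Finset.range (n + 2), (j i).natAbs + (k i).natAbs ≤ n + 2) :
    ‖∑ i ∈ Finset.range (n + 2), (mon (j i) (k i) : Laurent τ)‖ ≤ (n + 2) * (1 + τ) ^ (n + 2) := by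
  have hbase : (1 : ℝ) ≤ 1 + τ := by linarith [hτ.out]
  calc _ ≤ ∑ i ∈ Finset.range (n + 2), (1 + τ) ^ (n + 2) :=
        norm_sum_le_of_le _ fun i hi => (norm_mon _ _).trans_le (pow_le_pow_right₀ hbase (h i hi))
    _ = (n + 2) * (1 + τ) ^ (n + 2) := by simp

theorem norm_smul_mon_le (n : ℕ) {a : ℝ} {j k : ℤ} (ha₀ : 0 ≤ a) (ha : a ≤ n + 2)
    (h : j.natAbs + k.natAbs ≤ n + 2) :
    ‖a • (mon j k : Laurent τ)‖ ≤ (n + 2) * (1 + τ) ^ (n + 2) := by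
  have hbase : (1 : ℝ) ≤ 1 + τ := by linarith [hτ.out]
  rw [norm_smul, norm_mon, Real.norm_of_nonneg ha₀]
  gcongr

/-- The divided difference `(f(ξ) - f(w)) / (ξ - w)` of a perturbation `f`. -/
noncomputable def divDiff : Perturbation τ →L[ℝ] Laurent τ :=
  liftPerturbation (fun n => ∑ i ∈ Finset.range (n + 2), mon i (n + 1 - i)) fun n =>
    norm_sum_mon_le n fun i hi => by rw [Finset.mem_range] at hi; omega

/-- The divided difference `(f(1/ξ) - f(1/w)) / (1/ξ - 1/w)` of a perturbation `f`. -/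
noncomputable def divDiffInv : Perturbation τ →L[ℝ] Laurent τ :=
  liftPerturbation (fun n => ∑ i ∈ Finset.range (n + 2), mon (-i) (-(n + 1 - i))) fun n =>
    norm_sum_mon_le n fun i hi => by rw [Finset.mem_range] at hi; omega

/-- The derivative `f'(ξ)` of a perturbation `f`. -/
noncomputable def derivξ : Perturbation τ →L[ℝ] Laurent τ :=
  liftPerturbation (fun n => (n + 2 : ℝ) • mon (n + 1) 0) fun n =>
    norm_smul_mon_le n (by positivity) le_rfl (by omega)

/-- The Euler derivative `w f'(w)` of a perturbation `f`. -/
noncomputable def eulerW : Perturbation τ →L[ℝ] Laurent τ :=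
  liftPerturbation (fun n => (n + 2 : ℝ) • mon 0 (n + 2)) fun n =>
    norm_smul_mon_le n (by positivity) le_rfl (by omega)

/-- The reflection `f(1/w)` of a perturbation `f`, its complex conjugate on the unit circle. -/
noncomputable def reflW : Perturbation τ →L[ℝ] Laurent τ :=
  liftPerturbation (fun n => (1 : ℝ) • mon 0 (-(n + 2))) fun n =>
    norm_smul_mon_le n zero_le_one (by linarith [n.cast_nonneg (α := ℝ)]) (by omega)

theorem divDiff_monomial (n : ℕ) :
    divDiff (monomial n : Perturbation τ) = ∑ i ∈ Finset.range (n + 2), mon i (n + 1 - i) :=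
  liftPerturbation_monomial _ n

theorem divDiffInv_monomial (n : ℕ) :
    divDiffInv (monomial n : Perturbation τ) =
      ∑ i ∈ Finset.range (n + 2), mon (-i) (-(n + 1 - i)) :=
  liftPerturbation_monomial _ n

theorem derivξ_monomial (n : ℕ) :
    derivξ (monomial n : Perturbation τ) = (n + 2 : ℝ) • mon (n + 1) 0 :=
  liftPerturbation_monomial _ n

theorem eulerW_monomial (n : ℕ) :
    eulerW (monomial n : Perturbation τ) = (n + 2 : ℝ) • mon 0 (n + 2) :=
  liftPerturbation_monomial _ n

theorem reflW_monomial (n : ℕ) : reflW (monomial n : Perturbation τ) = mon 0 (-(n + 2)) :=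
  (liftPerturbation_monomial _ n).trans (one_smul _ _)

theorem norm_mul_circle_pow_le (n k : ℕ) {a : ℂ} (ha : ‖a‖ ≤ n + 2) (w : Circle) :
    ‖a * (w : ℂ) ^ k‖ ≤ (n + 2) * (1 + τ) ^ (n + 2) := by
  rw [norm_mul, norm_pow, Circle.norm_coe, one_pow]
  exact mul_le_mul ha (one_le_pow₀ (by linarith [hτ.out])) zero_le_one (by positivity)

/-- The value `f(w)` of a perturbation `f`. -/
noncomputable def perturbationEval (w : Circle) : Perturbation τ →L[ℝ] ℂ :=
  liftPerturbation (fun n => 1 * (w : ℂ) ^ (n + 2)) fun n =>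
    norm_mul_circle_pow_le n _ (by rw [norm_one]; linarith [n.cast_nonneg (α := ℝ)]) w

/-- The value `f'(w)` of the derivative of a perturbation `f`. -/
noncomputable def perturbationDeriv (w : Circle) : Perturbation τ →L[ℝ] ℂ :=
  liftPerturbation (fun n => (n + 2 : ℂ) * (w : ℂ) ^ (n + 1)) fun n =>
    norm_mul_circle_pow_le n _ (by norm_cast) w

theorem perturbationEval_monomial (w : Circle) (n : ℕ) :
    perturbationEval w (monomial n : Perturbation τ) = (w : ℂ) ^ (n + 2) :=
  (liftPerturbation_monomial _ n).trans (one_mul _)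

theorem perturbationDeriv_monomial (w : Circle) (n : ℕ) :
    perturbationDeriv w (monomial n : Perturbation τ) = (n + 2) * (w : ℂ) ^ (n + 1) :=
  liftPerturbation_monomial _ n

end PerturbationMaps

section Evaluation

variable (ξ w : Circle) (g : Perturbation τ)

/-- Evaluation of a Laurent series at a pair of points of the unit circle. -/
noncomputable def pointEval : Laurent τ →L[ℝ] ℂ :=
  (ContinuousMap.evalCLM ℝ ξ).comp (laurentEval w).toContinuousLinearMap

theorem pointEval_mon (j k : ℤ) : pointEval ξ w (mon j k : Laurent τ) = (ξ : ℂ) ^ j * (w : ℂ) ^ k :=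
  laurentEval_mon w ξ j k

theorem laurentEval_derivξ : laurentEval w (derivξ g) ξ = perturbationDeriv ξ g := by
  suffices (pointEval ξ w).comp derivξ = perturbationDeriv (τ := τ) ξ from congr($this g)
  refine hom_ext fun n => ?_
  rw [ContinuousLinearMap.comp_apply, derivξ_monomial, map_smul, pointEval_mon,
    perturbationDeriv_monomial, zpow_zero, mul_one, Complex.real_smul]
  norm_cast

theorem laurentEval_eulerW : laurentEval w (eulerW g) ξ = w * perturbationDeriv w g := by
  suffices (pointEval ξ w).comp eulerW = (w : ℂ) • perturbationDeriv (τ := τ) w from congr($this g)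
  refine hom_ext fun n => ?_
  rw [ContinuousLinearMap.comp_apply, eulerW_monomial, map_smul, pointEval_mon, smul_apply,
    perturbationDeriv_monomial, zpow_zero, one_mul, Complex.real_smul, smul_eq_mul]
  have hw : (w : ℂ) ^ ((n : ℤ) + 2) = w * (w : ℂ) ^ (n + 1) := by
    rw [← pow_succ']
    norm_cast
  rw [hw, mul_left_comm]
  norm_cast

theorem conj_perturbationEval :
    starRingEnd ℂ (perturbationEval w g) = perturbationEval w⁻¹ g := by
  suffices Complex.conjCLE.toContinuousLinearMap.comp (perturbationEval (τ := τ) w) =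
    perturbationEval w⁻¹ from congr($this g)
  refine hom_ext fun n => ?_
  rw [ContinuousLinearMap.comp_apply, perturbationEval_monomial, perturbationEval_monomial,
    Circle.coe_inv_eq_conj]
  exact map_pow (starRingEnd ℂ) _ _

theorem laurentEval_reflW : laurentEval w (reflW g) ξ = perturbationEval w⁻¹ g := by
  suffices (pointEval ξ w).comp reflW = perturbationEval (τ := τ) w⁻¹ from congr($this g)
  refine hom_ext fun n => ?_
  rw [ContinuousLinearMap.comp_apply, reflW_monomial, pointEval_mon, perturbationEval_monomial,
    zpow_zero, one_mul, zpow_neg, Circle.coe_inv, inv_pow]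
  norm_cast

theorem sub_mul_laurentEval_divDiff :
    ((ξ : ℂ) - w) * laurentEval w (divDiff g) ξ = perturbationEval ξ g - perturbationEval w g := by
  suffices ((ξ : ℂ) - w) • (pointEval ξ w).comp divDiff =
    perturbationEval (τ := τ) ξ - perturbationEval w from congr($this g)
  refine hom_ext fun n => ?_
  have hsum : pointEval ξ w (divDiff (monomial n : Perturbation τ)) =
      ∑ i ∈ Finset.range (n + 2), (ξ : ℂ) ^ i * (w : ℂ) ^ (n + 2 - 1 - i) := by
    rw [divDiff_monomial, map_sum]
    refine Finset.sum_congr rfl fun i hi => ?_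
    rw [Finset.mem_range] at hi
    rw [pointEval_mon, ← zpow_natCast, ← zpow_natCast]
    congr 2
    omega
  rw [smul_apply, ContinuousLinearMap.comp_apply, hsum, sub_apply, perturbationEval_monomial,
    perturbationEval_monomial, smul_eq_mul]
  exact (Commute.all _ _).mul_geom_sum₂ _

theorem laurentEval_divDiffInv :
    laurentEval w (divDiffInv g) ξ = laurentEval w⁻¹ (divDiff g) ξ⁻¹ := by
  suffices (pointEval ξ w).comp divDiffInv = (pointEval (τ := τ) ξ⁻¹ w⁻¹).comp divDiff from
    congr($this g)
  refine hom_ext fun n => ?_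
  rw [ContinuousLinearMap.comp_apply, ContinuousLinearMap.comp_apply, divDiffInv_monomial,
    divDiff_monomial, map_sum, map_sum]
  refine Finset.sum_congr rfl fun i _ => ?_
  rw [pointEval_mon, pointEval_mon, Circle.coe_inv, Circle.coe_inv, inv_zpow', inv_zpow']

end Evaluation

/-! ### The contour equation of a perturbed ellipse -/

/-- The contour equation of a patch with boundary `Φ`, rotating with angular velocity `Ω`. The
function `Φ'` stands for the derivative of `Φ`. -/
def IsRotatingPatch (Ω : ℝ) (Φ Φ' : ℂ → ℂ) : Prop :=
  ∀ w ∈ sphere (0 : ℂ) 1,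
    ((2 * (Ω : ℂ) * starRingEnd ℂ (Φ w) +
      (∮ ξ in C(0, 1),
        (starRingEnd ℂ (Φ ξ) - starRingEnd ℂ (Φ w)) / (Φ ξ - Φ w) * Φ' ξ) /
        (2 * Real.pi * Complex.I)) * w * Φ' w).im = 0

section Patch

/-- The parametrisation `w + Q/w + g(w)` of the perturbed ellipse. -/
noncomputable def patch (Q : ℝ) (g : Perturbation τ) (w : Circle) : ℂ :=
  w + Q / w + perturbationEval w g

/-- The derivative of `patch`. -/
noncomputable def patchDeriv (Q : ℝ) (g : Perturbation τ) (w : Circle) : ℂ :=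
  1 - Q / w ^ 2 + perturbationDeriv w g

theorem conj_patch (Q : ℝ) (g : Perturbation τ) (w : Circle) :
    starRingEnd ℂ (patch Q g w) = patch Q g w⁻¹ := by
  rw [patch, patch, map_add, map_add, map_div₀, Complex.conj_ofReal, conj_perturbationEval,
    Circle.coe_inv_eq_conj]

/-- The quotient `(Φ(ξ) - Φ(w)) / (ξ - w)` of the patch `Φ`. -/
noncomputable def chord (Q : ℝ) (g : Perturbation τ) : Laurent τ :=
  1 - Q • mon (-1) (-1) + divDiff g

/-- The quotient `(Φ(1/ξ) - Φ(1/w)) / (1/ξ - 1/w)` of the patch `Φ`. -/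
noncomputable def conjChord (Q : ℝ) (g : Perturbation τ) : Laurent τ :=
  1 - Q • mon 1 1 + divDiffInv g

/-- The derivative `Φ'(ξ)` of the patch `Φ`. -/
noncomputable def tangent (Q : ℝ) (g : Perturbation τ) : Laurent τ :=
  1 - Q • mon (-2) 0 + derivξ g

/-- The Euler derivative `w Φ'(w)` of the patch `Φ`. -/
noncomputable def euler (Q : ℝ) (g : Perturbation τ) : Laurent τ :=
  mon 0 1 - Q • mon 0 (-1) + eulerW g

/-- The reflection `Φ(1/w)` of the patch `Φ`. -/
noncomputable def conjPatch (Q : ℝ) (g : Perturbation τ) : Laurent τ :=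
  mon 0 (-1) + Q • mon 0 1 + reflW g

/-- The integrand of the contour equation at angular velocity `(1 - Q²) / 4`; the constant term
`2Ω Φ(1/w)` is turned into a residue by the factor `1/ξ`. -/
noncomputable def kernel (Q : ℝ) (g : Perturbation τ) : Laurent τ :=
  ((1 - Q ^ 2) / 2) • (mon (-1) 0 * conjPatch Q g * euler Q g) -
    (chord Q g)⁻¹ʳ * (mon (-1) (-1) * conjChord Q g * tangent Q g * euler Q g)

variable (Q : ℝ) (g : Perturbation τ) (ξ w : Circle)

theorem laurentEval_one_sub_smul_mon (j k : ℤ) :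
    laurentEval w (1 - Q • mon j k : Laurent τ) ξ = 1 - Q * ((ξ : ℂ) ^ j * (w : ℂ) ^ k) := by
  rw [map_sub, map_one, map_smul, ContinuousMap.sub_apply, ContinuousMap.smul_apply,
    laurentEval_mon, ContinuousMap.one_apply, Complex.real_smul]

theorem sub_mul_laurentEval_chord :
    ((ξ : ℂ) - w) * laurentEval w (chord Q g) ξ = patch Q g ξ - patch Q g w := by
  have hξ := Circle.coe_ne_zero ξ
  have hw := Circle.coe_ne_zero w
  rw [chord, map_add, ContinuousMap.add_apply, mul_add, sub_mul_laurentEval_divDiff,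
    laurentEval_one_sub_smul_mon, patch, patch]
  simp only [zpow_neg_one]
  field_simp
  ring

theorem laurentEval_conjChord :
    laurentEval w (conjChord Q g) ξ = laurentEval w⁻¹ (chord Q g) ξ⁻¹ := by
  rw [conjChord, chord, map_add, map_add, ContinuousMap.add_apply, ContinuousMap.add_apply,
    laurentEval_divDiffInv, laurentEval_one_sub_smul_mon, laurentEval_one_sub_smul_mon,
    Circle.coe_inv, Circle.coe_inv, zpow_neg_one, zpow_neg_one, inv_inv, inv_inv, zpow_one,
    zpow_one]

theorem laurentEval_tangent : laurentEval w (tangent Q g) ξ = patchDeriv Q g ξ := by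
  rw [tangent, map_add, ContinuousMap.add_apply, laurentEval_one_sub_smul_mon, laurentEval_derivξ,
    patchDeriv, zpow_zero, mul_one, div_eq_mul_inv]
  norm_cast

theorem laurentEval_euler : laurentEval w (euler Q g) ξ = w * patchDeriv Q g w := by
  have hw := Circle.coe_ne_zero w
  rw [euler, map_add, map_sub, map_smul, ContinuousMap.add_apply, ContinuousMap.sub_apply,
    ContinuousMap.smul_apply, laurentEval_mon, laurentEval_mon, laurentEval_eulerW, patchDeriv,
    Complex.real_smul, zpow_neg_one]
  field_simp

theorem laurentEval_conjPatch : laurentEval w (conjPatch Q g) ξ = starRingEnd ℂ (patch Q g w) := by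
  rw [conj_patch, conjPatch, map_add, map_add, map_smul, ContinuousMap.add_apply,
    ContinuousMap.add_apply, ContinuousMap.smul_apply, laurentEval_mon, laurentEval_mon,
    laurentEval_reflW, patch, Complex.real_smul, Circle.coe_inv]
  simp

theorem laurentEval_mul (x y : Laurent τ) :
    laurentEval w (x * y) ξ = laurentEval w x ξ * laurentEval w y ξ := by
  rw [map_mul, ContinuousMap.mul_apply]

variable {Q g ξ w}

theorem laurentEval_conj_quotient (hg : IsUnit (chord Q g)) (hξ : ξ ≠ w) :
    laurentEval w (-((chord Q g)⁻¹ʳ * (mon (-1) (-1) * conjChord Q g * tangent Q g))) ξ =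
      (starRingEnd ℂ (patch Q g ξ) - starRingEnd ℂ (patch Q g w)) / (patch Q g ξ - patch Q g w) *
        patchDeriv Q g ξ := by
  have hξ₀ := Circle.coe_ne_zero ξ
  have hw₀ := Circle.coe_ne_zero w
  have hsub : (ξ : ℂ) - w ≠ 0 := sub_ne_zero.2 fun h => hξ (Circle.ext h)
  rw [conj_patch, conj_patch, ← sub_mul_laurentEval_chord, ← sub_mul_laurentEval_chord, map_neg,
    ContinuousMap.neg_apply]
  simp only [laurentEval_mul, laurentEval_inverse w ξ hg, laurentEval_mon, laurentEval_conjChord,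
    laurentEval_tangent, zpow_neg_one, Circle.coe_inv]
  field_simp
  ring

theorem isRotatingPatch_of_imResidue_kernel_eq_zero (hg : IsUnit (chord Q g))
    (hker : imResidue (kernel Q g) = 0) {Φ Φ' : ℂ → ℂ} (hΦ : ∀ w : Circle, Φ w = patch Q g w)
    (hΦ' : ∀ w : Circle, Φ' w = patchDeriv Q g w) : IsRotatingPatch ((1 - Q ^ 2) / 4) Φ Φ' := by
  intro w₀ hw₀
  obtain ⟨w, rfl⟩ : ∃ w : Circle, (w : ℂ) = w₀ := ⟨⟨w₀, hw₀⟩, rfl⟩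
  let b : ℂ := (((1 - Q ^ 2) / 2 : ℝ) : ℂ) * starRingEnd ℂ (patch Q g w)
  let f := laurentEval w (-((chord Q g)⁻¹ʳ * (mon (-1) (-1) * conjChord Q g * tangent Q g)))
  have hint : (∮ ξ in C(0, 1), (starRingEnd ℂ (Φ ξ) - starRingEnd ℂ (Φ w)) / (Φ ξ - Φ w) * Φ' ξ) /
      (2 * Real.pi * Complex.I) = circleResidue f :=
    circleIntegral_div_two_pi_I_of_eq_on_compl_singleton w fun ξ hξ => by
      rw [laurentEval_conj_quotient hg hξ, hΦ, hΦ, hΦ']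
  have hres : circleResidue (laurentEval w (mon (-1) 0 : Laurent τ)) = 1 :=
    circleResidue_zpow (-1) fun ξ => by rw [laurentEval_mon, zpow_zero, mul_one]
  have hkernel : laurentEval w (kernel Q g) =
      (w * patchDeriv Q g w) • (b • laurentEval w (mon (-1) 0 : Laurent τ) + f) := by
    ext ξ
    simp only [kernel, f, map_sub, map_smul, map_neg, ContinuousMap.sub_apply,
      ContinuousMap.add_apply, ContinuousMap.smul_apply, ContinuousMap.neg_apply, laurentEval_mul,
      laurentEval_euler, laurentEval_conjPatch, smul_eq_mul, Complex.real_smul, b]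
    ring
  have him := im_circleResidue_laurentEval w (kernel Q g)
  rw [hker, map_zero, hkernel, map_smul, map_add, map_smul, hres] at him
  rw [hint, hΦ, hΦ', ← him]
  congr 1
  simp only [b, smul_eq_mul]
  push_cast
  ring

end Patch

/-! ### Residue calculus at the ellipse -/

section EllipseResidues

theorem chord_zero (Q : ℝ) : chord Q (0 : Perturbation τ) = 1 - Q • mon (-1) (-1) := by
  rw [chord, map_zero, add_zero]

theorem conjChord_zero (Q : ℝ) : conjChord Q (0 : Perturbation τ) = 1 - Q • mon 1 1 := by
  rw [conjChord, map_zero, add_zero]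

theorem tangent_zero (Q : ℝ) : tangent Q (0 : Perturbation τ) = 1 - Q • mon (-2) 0 := by
  rw [tangent, map_zero, add_zero]

theorem euler_zero (Q : ℝ) : euler Q (0 : Perturbation τ) = mon 0 1 - Q • mon 0 (-1) := by
  rw [euler, map_zero, add_zero]

theorem conjPatch_zero (Q : ℝ) :
    conjPatch Q (0 : Perturbation τ) = mon 0 (-1) + Q • mon 0 1 := by
  rw [conjPatch, map_zero, add_zero]

/-- The smallness of the annulus width `τ` that makes both the chord `1 - Q/(ξw)` of the ellipse
and the multiplication by `1 - Qw²` on perturbations invertible. -/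
def Admissible (τ Q : ℝ) : Prop := |Q| * ((1 + 2 * τ) * (1 + τ) ^ 2) < 1

variable {Q : ℝ} (hQ : Admissible τ Q)
include hQ

theorem Admissible.norm_smul_mon_lt_one : ‖Q • (mon (-1) (-1) : Laurent τ)‖ < 1 := by
  have hτ₀ := hτ.out
  rw [norm_smul, norm_mon, Real.norm_eq_abs]
  exact (mul_le_mul_of_nonneg_left (by norm_num; nlinarith [sq_nonneg (1 + τ)])
    (abs_nonneg Q)).trans_lt hQ

theorem Admissible.isUnit_chord_zero : IsUnit (chord Q (0 : Perturbation τ)) := by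
  rw [chord_zero]
  exact isUnit_one_sub_of_norm_lt_one hQ.norm_smul_mon_lt_one

theorem Admissible.hasSum_apply_inverse_chord_mul_mon {F : Type*} [NormedAddCommGroup F]
    [NormedSpace ℝ F] (T : Laurent τ →L[ℝ] F) (j k : ℤ) :
    HasSum (fun i : ℕ => Q ^ i • T (mon (j - i) (k - i)))
      (T ((chord Q (0 : Perturbation τ))⁻¹ʳ * mon j k)) := by
  have hpow (i : ℕ) : (Q • (mon (-1) (-1) : Laurent τ)) ^ i = Q ^ i • mon (-i) (-i) := by
    induction i with
    | zero => simp [mon_zero_zero]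
    | succ i ih =>
      rw [pow_succ, ih, smul_mul_smul_comm, mon_mul_mon, pow_succ]
      push_cast
      ring_nf
  rw [chord_zero]
  convert ((hasSum_geom_series_inverse _ hQ.norm_smul_mon_lt_one).mul_right (mon j k)).mapL T
    using 2 with i
  rw [hpow, smul_mul_assoc, mon_mul_mon, map_smul, neg_add_eq_sub, neg_add_eq_sub]

theorem Admissible.imResidue_inverse_mul_of_lt {j : ℤ} (hj : j < -1) (k : ℤ) :
    imResidue ((chord Q (0 : Perturbation τ))⁻¹ʳ * mon j k) = 0 := by
  refine (hQ.hasSum_apply_inverse_chord_mul_mon imResidue j k).unique ?_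
  convert hasSum_zero (α := SineSeries τ) (β := ℕ) using 2 with i
  rw [imResidue_mon, if_neg (by omega), smul_zero]

theorem Admissible.imResidue_inverse_mul {j k l : ℤ} (p : ℕ) (hj : j = p - 1) (hl : l = k - p) :
    imResidue ((chord Q (0 : Perturbation τ))⁻¹ʳ * mon j k) = Q ^ p • sine l := by
  refine (hQ.hasSum_apply_inverse_chord_mul_mon imResidue j k).unique ?_
  convert hasSum_single p fun i hi => ?_ using 1
  · rw [imResidue_mon, if_pos (by omega), hl]
  · rw [imResidue_mon, if_neg (by omega), smul_zero]

theorem Admissible.hasSum_imResidue_inverse_mul_inverse_mul (j k : ℤ) :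
    HasSum (fun i : ℕ =>
        Q ^ i • imResidue ((chord Q (0 : Perturbation τ))⁻¹ʳ * mon (j - i) (k - i)))
      (imResidue ((chord Q (0 : Perturbation τ))⁻¹ʳ * ((chord Q (0 : Perturbation τ))⁻¹ʳ *
        mon j k))) :=
  hQ.hasSum_apply_inverse_chord_mul_mon
    (imResidue.comp (ContinuousLinearMap.mul ℝ _ (chord Q (0 : Perturbation τ))⁻¹ʳ)) j k

theorem Admissible.imResidue_inverse_mul_inverse_mul_of_lt {j : ℤ} (hj : j < -1) (k : ℤ) :
    imResidue ((chord Q (0 : Perturbation τ))⁻¹ʳ * ((chord Q (0 : Perturbation τ))⁻¹ʳ *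
      mon j k)) = 0 := by
  refine (hQ.hasSum_imResidue_inverse_mul_inverse_mul j k).unique ?_
  convert hasSum_zero (α := SineSeries τ) (β := ℕ) using 2 with i
  rw [hQ.imResidue_inverse_mul_of_lt (by omega), smul_zero]

theorem Admissible.imResidue_inverse_mul_inverse_mul {j k l : ℤ} (p : ℕ) (hj : j = p - 1)
    (hl : l = k - p) :
    imResidue ((chord Q (0 : Perturbation τ))⁻¹ʳ * ((chord Q (0 : Perturbation τ))⁻¹ʳ *
      mon j k)) = ((p + 1) * Q ^ p) • sine l := by
  refine (hQ.hasSum_imResidue_inverse_mul_inverse_mul j k).unique ?_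
  convert hasSum_sum_of_ne_finset_zero (s := Finset.range (p + 1)) fun i hi => ?_ using 1
  · have hterm (i) (hi : i ∈ Finset.range (p + 1)) : Q ^ i • imResidue
        ((chord Q (0 : Perturbation τ))⁻¹ʳ * mon (j - i) (k - i)) = Q ^ p • sine l := by
      rw [Finset.mem_range] at hi
      rw [hQ.imResidue_inverse_mul (p - i) (l := l) (by omega) (by omega), smul_smul, ← pow_add,
        Nat.add_sub_cancel' (by omega)]
    rw [Finset.sum_congr rfl hterm, Finset.sum_const, Finset.card_range, ← Nat.cast_smul_eq_nsmul ℝ,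
      smul_smul, Nat.cast_succ]
  · rw [Finset.mem_range] at hi
    rw [hQ.imResidue_inverse_mul_of_lt (by omega), smul_zero]
  · infer_instance

omit hQ

variable (Q) in
/-- The residue against the quotient of the conjugate chord by the chord of the ellipse. -/
noncomputable def chordResidue : Laurent τ →L[ℝ] SineSeries τ :=
  imResidue.comp (ContinuousLinearMap.mul ℝ _ ((chord Q (0 : Perturbation τ))⁻¹ʳ *
    (mon (-1) (-1) * conjChord Q (0 : Perturbation τ))))

variable (Q) in
/-- The residue against the quotient of the conjugate chord by the square of the chord of the
ellipse. -/
noncomputable def chordSqResidue : Laurent τ →L[ℝ] SineSeries τ :=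
  (chordResidue Q).comp (ContinuousLinearMap.mul ℝ _ (chord Q (0 : Perturbation τ))⁻¹ʳ)

theorem mon_mul_conjChord_zero_mul_mon (Q : ℝ) (j k : ℤ) :
    mon (-1) (-1) * conjChord Q (0 : Perturbation τ) * mon j k =
      mon (j - 1) (k - 1) - Q • mon j k := by
  simp only [conjChord_zero, mul_sub, sub_mul, mul_one, mul_smul_comm, smul_mul_assoc,
    mon_mul_mon, neg_add_cancel, zero_add, neg_add_eq_sub]

theorem chordResidue_mon (Q : ℝ) (j k : ℤ) : chordResidue Q (mon j k : Laurent τ) =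
    imResidue ((chord Q (0 : Perturbation τ))⁻¹ʳ * mon (j - 1) (k - 1)) -
      Q • imResidue ((chord Q (0 : Perturbation τ))⁻¹ʳ * mon j k) := by
  rw [chordResidue, ContinuousLinearMap.comp_apply, ContinuousLinearMap.mul_apply',
    mul_assoc, mon_mul_conjChord_zero_mul_mon, mul_sub, mul_smul_comm, map_sub, map_smul]

theorem chordSqResidue_mon (Q : ℝ) (j k : ℤ) : chordSqResidue Q (mon j k : Laurent τ) =
    imResidue ((chord Q (0 : Perturbation τ))⁻¹ʳ * ((chord Q (0 : Perturbation τ))⁻¹ʳ *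
      mon (j - 1) (k - 1))) -
      Q • imResidue ((chord Q (0 : Perturbation τ))⁻¹ʳ * ((chord Q (0 : Perturbation τ))⁻¹ʳ *
        mon j k)) := by
  rw [chordSqResidue, chordResidue, ContinuousLinearMap.comp_apply, ContinuousLinearMap.comp_apply,
    ContinuousLinearMap.mul_apply', ContinuousLinearMap.mul_apply', mul_assoc,
    mul_left_comm (_ * _), mon_mul_conjChord_zero_mul_mon, mul_sub, mul_smul_comm, mul_sub,
    mul_smul_comm, map_sub, map_smul]

include hQ

theorem Admissible.chordResidue_mon_of_lt {j : ℤ} (hj : j < -1) (k : ℤ) :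
    chordResidue Q (mon j k : Laurent τ) = 0 := by
  rw [chordResidue_mon, hQ.imResidue_inverse_mul_of_lt hj,
    hQ.imResidue_inverse_mul_of_lt (by omega), smul_zero, sub_zero]

theorem Admissible.chordResidue_mon_natCast (p : ℕ) {j k l : ℤ} (hj : j = p) (hl : l = k - 1 - p) :
    chordResidue Q (mon j k : Laurent τ) = ((1 - Q ^ 2) * Q ^ p) • sine l := by
  rw [chordResidue_mon, hQ.imResidue_inverse_mul p (l := l) (by omega) hl,
    hQ.imResidue_inverse_mul (p + 1) (l := l) (by push_cast; omega) (by push_cast; omega)]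
  module

theorem Admissible.chordSqResidue_mon_of_lt {j : ℤ} (hj : j < -1) (k : ℤ) :
    chordSqResidue Q (mon j k : Laurent τ) = 0 := by
  rw [chordSqResidue_mon, hQ.imResidue_inverse_mul_inverse_mul_of_lt hj,
    hQ.imResidue_inverse_mul_inverse_mul_of_lt (by omega), smul_zero, sub_zero]

theorem Admissible.chordSqResidue_mon_natCast (p : ℕ) {j k l : ℤ} (hj : j = p)
    (hl : l = k - 1 - p) : chordSqResidue Q (mon j k : Laurent τ) =
      ((p + 1) * Q ^ p - (p + 2) * Q ^ (p + 2)) • sine l := by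
  rw [chordSqResidue_mon, hQ.imResidue_inverse_mul_inverse_mul p (l := l) (by omega) hl,
    hQ.imResidue_inverse_mul_inverse_mul (p + 1) (l := l) (by push_cast; omega)
      (by push_cast; omega)]
  push_cast
  module

theorem Admissible.smul_chordSqResidue_mon_sub_one (p : ℕ) {j k l : ℤ} (hj : j = p - 1)
    (hl : l = k - p) : Q • chordSqResidue Q (mon j k : Laurent τ) =
      (p * Q ^ p - (p + 1) * Q ^ (p + 2)) • sine l := by
  obtain rfl | ⟨p, rfl⟩ : p = 0 ∨ ∃ q, p = q + 1 := by cases p <;> simp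
  · rw [chordSqResidue_mon, hQ.imResidue_inverse_mul_inverse_mul_of_lt (by omega),
      hQ.imResidue_inverse_mul_inverse_mul 0 (l := l) (by omega) (by omega)]
    module
  · rw [hQ.chordSqResidue_mon_natCast p (l := l) (by push_cast at hj; omega)
      (by push_cast at hl; omega)]
    push_cast
    module

end EllipseResidues

section Linearization

/-- The difference quotient in `ε` of the integrand `kernel Q (ε • h)` at the ellipse. -/
noncomputable def excess (ε Q : ℝ) (h : Perturbation τ) : Laurent τ :=
  ((1 - Q ^ 2) / 2) • (mon (-1) 0 *
      (reflW h * euler Q (ε • h) + conjPatch Q (0 : Perturbation τ) * eulerW h)) -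
    (chord Q (0 : Perturbation τ))⁻¹ʳ * (mon (-1) (-1) * conjChord Q (0 : Perturbation τ)) *
      (derivξ h * euler Q (ε • h) + tangent Q (0 : Perturbation τ) * eulerW h) +
    (chord Q (0 : Perturbation τ))⁻¹ʳ * (mon (-1) (-1) * conjChord Q (0 : Perturbation τ)) *
      ((chord Q (ε • h))⁻¹ʳ * (divDiff h * (tangent Q (ε • h) * euler Q (ε • h)))) -
    (chord Q (ε • h))⁻¹ʳ *
      (mon (-1) (-1) * (divDiffInv h * (tangent Q (ε • h) * euler Q (ε • h))))

theorem kernel_smul (ε : ℝ) {Q : ℝ} {h : Perturbation τ}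
    (h₀ : IsUnit (chord Q (0 : Perturbation τ))) (hε : IsUnit (chord Q (ε • h))) :
    kernel Q (ε • h) = kernel Q (0 : Perturbation τ) + ε • excess ε Q h := by
  have hcancel₀ := Ring.inverse_mul_cancel _ h₀
  have hcancel := Ring.mul_inverse_cancel _ hε
  have hchord : chord Q (ε • h) = chord Q (0 : Perturbation τ) + ε • divDiff h := by
    rw [chord_zero, chord, map_smul]
  have hinverse : (chord Q (0 : Perturbation τ))⁻¹ʳ - (chord Q (ε • h))⁻¹ʳ =
      ε • ((chord Q (0 : Perturbation τ))⁻¹ʳ * (chord Q (ε • h))⁻¹ʳ * divDiff h) := by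
    rw [Algebra.smul_def] at hchord ⊢
    linear_combination (chord Q (ε • h))⁻¹ʳ * hcancel₀ - (chord Q (0 : Perturbation τ))⁻¹ʳ * hcancel
      + (chord Q (0 : Perturbation τ))⁻¹ʳ * (chord Q (ε • h))⁻¹ʳ * hchord
  have hconjChord : conjChord Q (ε • h) = conjChord Q (0 : Perturbation τ) + ε • divDiffInv h := by
    rw [conjChord_zero, conjChord, map_smul]
  have htangent : tangent Q (ε • h) = tangent Q (0 : Perturbation τ) + ε • derivξ h := by
    rw [tangent_zero, tangent, map_smul]
  have heuler : euler Q (ε • h) = euler Q (0 : Perturbation τ) + ε • eulerW h := by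
    rw [euler_zero, euler, map_smul]
  have hconjPatch : conjPatch Q (ε • h) = conjPatch Q (0 : Perturbation τ) + ε • reflW h := by
    rw [conjPatch_zero, conjPatch, map_smul]
  rw [kernel, kernel, excess, hconjChord, hconjPatch]
  simp only [Algebra.smul_def] at htangent heuler hinverse ⊢
  linear_combination (mon (-1) (-1) * conjChord Q (0 : Perturbation τ) * tangent Q (ε • h) *
      euler Q (ε • h)) * hinverse +
    (algebraMap ℝ (Laurent τ) ((1 - Q ^ 2) / 2) * mon (-1) 0 * conjPatch Q (0 : Perturbation τ) -
      (chord Q (0 : Perturbation τ))⁻¹ʳ * mon (-1) (-1) * conjChord Q (0 : Perturbation τ) *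
        tangent Q (0 : Perturbation τ)) * heuler -
    ((chord Q (0 : Perturbation τ))⁻¹ʳ * mon (-1) (-1) * conjChord Q (0 : Perturbation τ) *
      euler Q (ε • h)) * htangent

variable (Q : ℝ)

/-- The linearisation of the contour equation at the ellipse. -/
noncomputable def linearization : Perturbation τ →L[ℝ] SineSeries τ :=
  let E := ContinuousLinearMap.mul ℝ (Laurent τ) (euler Q (0 : Perturbation τ))
  let B := ContinuousLinearMap.mul ℝ (Laurent τ) (conjPatch Q (0 : Perturbation τ))
  let P := ContinuousLinearMap.mul ℝ (Laurent τ) (tangent Q (0 : Perturbation τ))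
  let I := ContinuousLinearMap.mul ℝ (Laurent τ) (chord Q (0 : Perturbation τ))⁻¹ʳ
  let S (j k : ℤ) := ContinuousLinearMap.mul ℝ (Laurent τ) (mon j k)
  ((1 - Q ^ 2) / 2) • imResidue ∘L S (-1) 0 ∘L (E ∘L reflW + B ∘L eulerW) -
    chordResidue Q ∘L (E ∘L derivξ + P ∘L eulerW) +
    chordSqResidue Q ∘L P ∘L E ∘L divDiff -
    imResidue ∘L I ∘L S (-1) (-1) ∘L P ∘L E ∘L divDiffInv

theorem linearization_apply (h : Perturbation τ) : linearization Q h =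
    ((1 - Q ^ 2) / 2) • imResidue (mon (-1) 0 * (euler Q (0 : Perturbation τ) * reflW h +
      conjPatch Q (0 : Perturbation τ) * eulerW h)) -
    chordResidue Q (euler Q (0 : Perturbation τ) * derivξ h +
      tangent Q (0 : Perturbation τ) * eulerW h) +
    chordSqResidue Q (tangent Q (0 : Perturbation τ) * (euler Q (0 : Perturbation τ) * divDiff h)) -
    imResidue ((chord Q (0 : Perturbation τ))⁻¹ʳ * (mon (-1) (-1) *
      (tangent Q (0 : Perturbation τ) * (euler Q (0 : Perturbation τ) * divDiffInv h)))) :=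
  rfl

theorem imResidue_excess_zero (h : Perturbation τ) :
    imResidue (excess 0 Q h) = linearization Q h := by
  rw [linearization_apply, excess, zero_smul, chordSqResidue, chordResidue]
  simp only [ContinuousLinearMap.comp_apply, ContinuousLinearMap.mul_apply', ← map_smul, ← map_add,
    ← map_sub]
  ring_nf

variable {Q} (hQ : Admissible τ Q)

/-- The eigenvalue `1 + Q^k - (1 - Q²) k / 2` of the linearised contour equation. -/
noncomputable def symbol (Q : ℝ) (k : ℕ) : ℝ := 1 + Q ^ k - (1 - Q ^ 2) / 2 * k

theorem imResidue_angular_monomial (n : ℕ) :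
    imResidue (mon (-1) 0 * (euler Q (0 : Perturbation τ) * reflW (monomial n) +
      conjPatch Q (0 : Perturbation τ) * eulerW (monomial n))) =
      (n + 1 : ℝ) • sine (n + 1) + (Q * (n + 3)) • sine (n + 3) := by
  have h₁ : (sine (1 + -(n + 2)) : SineSeries τ) = -sine (n + 1) := by rw [← sine_neg]; ring_nf
  have h₃ : (sine (-1 + -(n + 2)) : SineSeries τ) = -sine (n + 3) := by rw [← sine_neg]; ring_nf
  have e₁ : (-1 + (n + 2) : ℤ) = n + 1 := by ring
  have e₃ : (1 + (n + 2) : ℤ) = n + 3 := by ring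
  simp only [euler_zero, conjPatch_zero, reflW_monomial, eulerW_monomial, mul_add, mul_sub,
    add_mul, sub_mul, smul_mul_assoc, mul_smul_comm, mon_mul_mon, add_zero, zero_add, map_add,
    map_sub, map_smul, imResidue_mon, if_true, h₁, h₃, e₁, e₃]
  module

include hQ

theorem Admissible.chordResidue_monomial (n : ℕ) :
    chordResidue Q (euler Q (0 : Perturbation τ) * derivξ (monomial n) +
      tangent Q (0 : Perturbation τ) * eulerW (monomial n)) =
      ((n + 2) * (1 - Q ^ 2)) •
        (sine (n + 1) - Q ^ (n + 1) • (sine (n + 1) - Q • sine (n + 3))) := by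
  have h₁ : (sine (-(n + 1)) : SineSeries τ) = -sine (n + 1) := sine_neg _
  have h₃ : (sine (-(n + 3)) : SineSeries τ) = -sine (n + 3) := sine_neg _
  have r₁ : chordResidue Q (mon (n + 1) 1 : Laurent τ) =
    ((1 - Q ^ 2) * Q ^ (n + 1)) • sine (-(n + 1)) :=
    hQ.chordResidue_mon_natCast (n + 1) (by push_cast; ring) (by push_cast; ring)
  have r₃ : chordResidue Q (mon (n + 1) (-1) : Laurent τ) =
    ((1 - Q ^ 2) * Q ^ (n + 1)) • sine (-(n + 3)) :=
    hQ.chordResidue_mon_natCast (n + 1) (by push_cast; ring) (by push_cast; ring)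
  have r₀ : chordResidue Q (mon 0 (n + 2) : Laurent τ) = ((1 - Q ^ 2) * Q ^ 0) • sine (n + 1) :=
    hQ.chordResidue_mon_natCast 0 (by simp) (by push_cast; ring)
  simp only [euler_zero, tangent_zero, derivξ_monomial, eulerW_monomial, sub_mul, one_mul,
    smul_mul_assoc, mul_smul_comm, mon_mul_mon, add_zero, zero_add, map_add, map_sub, map_smul,
    r₀, r₁, r₃, hQ.chordResidue_mon_of_lt (show (-2 : ℤ) < -1 by norm_num), h₁, h₃]
  module

theorem Admissible.sum_chordSqResidue (k : ℤ) (N : ℕ) :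
    ∑ i ∈ Finset.range (N + 1), chordSqResidue Q (tangent Q (0 : Perturbation τ) *
      (euler Q (0 : Perturbation τ) * mon i (k - 1 - i))) =
    (1 - Q ^ 2) • (sine (k - 1) - Q ^ N • sine (k - 1 - 2 * N)) +
      ((N + 1) * Q ^ N - (N + 2) * Q ^ (N + 2)) •
        (sine (k - 1 - 2 * N) - Q • sine (k - 3 - 2 * N)) := by
  have hterm (i : ℕ) : chordSqResidue Q (tangent Q (0 : Perturbation τ) *
      (euler Q (0 : Perturbation τ) * mon i (k - 1 - i))) =
      chordSqResidue Q (mon i (k - i)) - Q • chordSqResidue Q (mon i (k - 2 - i)) -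
      (Q • chordSqResidue Q (mon (i - 2) (k - i)) -
        Q • Q • chordSqResidue Q (mon (i - 2) (k - 2 - i))) := by
    have e₀ : 1 + (k - 1 - i) = k - i := by ring
    have e₂ : -1 + (k - 1 - i) = k - 2 - i := by ring
    simp only [euler_zero, tangent_zero, sub_mul, mul_sub, one_mul, smul_mul_assoc, mul_smul_comm,
      mon_mul_mon, zero_add, map_sub, map_smul, e₀, e₂, neg_add_eq_sub]
    module
  simp only [hterm]
  induction N with
  | zero =>
    have r₁ : chordSqResidue Q (mon 0 k : Laurent τ) =
      _ • sine (k - 1) := hQ.chordSqResidue_mon_natCast 0 (by simp) (by simp)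
    have r₃ : chordSqResidue Q (mon 0 (k - 2) : Laurent τ) =
      _ • sine (k - 3) := hQ.chordSqResidue_mon_natCast 0 (by simp) (by simp; ring)
    simp only [zero_add, Finset.sum_range_one, Nat.cast_zero, sub_zero, mul_zero, zero_sub, r₁, r₃,
      hQ.chordSqResidue_mon_of_lt (show (-2 : ℤ) < -1 by norm_num)]
    module
  | succ N ih =>
    rw [Finset.sum_range_succ, ih,
      hQ.chordSqResidue_mon_natCast (N + 1) (l := k - 1 - 2 * (N + 1 : ℕ)) rfl (by push_cast; ring),
      hQ.chordSqResidue_mon_natCast (N + 1) (l := k - 3 - 2 * (N + 1 : ℕ)) rfl (by push_cast; ring),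
      hQ.smul_chordSqResidue_mon_sub_one N (l := k - 1 - 2 * N) (by push_cast; ring)
        (by push_cast; ring),
      hQ.smul_chordSqResidue_mon_sub_one N (l := k - 3 - 2 * N) (by push_cast; ring)
        (by push_cast; ring)]
    have e : k - 1 - 2 * (N + 1 : ℕ) = k - 3 - 2 * N := by push_cast; ring
    rw [e]
    push_cast
    module

theorem Admissible.chordSqResidue_monomial (n : ℕ) :
    chordSqResidue Q (tangent Q (0 : Perturbation τ) *
      (euler Q (0 : Perturbation τ) * divDiff (monomial n))) =
      ((1 - Q ^ 2) * (1 + Q ^ (n + 1))) • sine (n + 1) -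
        ((n + 2) * Q ^ (n + 1) - (n + 3) * Q ^ (n + 3)) • (sine (n + 1) - Q • sine (n + 3)) := by
  have h₁ : (sine (n + 1 - 2 * (n + 1)) : SineSeries τ) = -sine (n + 1) := by
    rw [← sine_neg]; ring_nf
  have h₃ : (sine (n + 2 - 3 - 2 * (n + 1)) : SineSeries τ) = -sine (n + 3) := by
    rw [← sine_neg]; ring_nf
  have e : (n + 2 - 1 : ℤ) = n + 1 := by ring
  have hsum := hQ.sum_chordSqResidue (n + 2) (n + 1)
  push_cast at hsum
  rw [e, h₁, h₃] at hsum
  rw [divDiff_monomial, Finset.mul_sum, Finset.mul_sum, map_sum, hsum]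
  module

theorem Admissible.imResidue_inverse_mul_monomial (n : ℕ) :
    imResidue ((chord Q (0 : Perturbation τ))⁻¹ʳ * (mon (-1) (-1) *
      (tangent Q (0 : Perturbation τ) *
        (euler Q (0 : Perturbation τ) * divDiffInv (monomial n))))) =
      Q • sine (n + 3) - sine (n + 1) := by
  have hterm (i : ℕ) : imResidue ((chord Q (0 : Perturbation τ))⁻¹ʳ * (mon (-1) (-1) *
      (tangent Q (0 : Perturbation τ) *
        (euler Q (0 : Perturbation τ) * mon (-i) (-(n + 1 - i)))))) =
      if i = 0 then Q • sine (n + 3) - sine (n + 1) else 0 := by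
    have e₁ : -1 + (1 + -(n + 1 - i)) = (-(n + 1 - i) : ℤ) := by ring
    have e₃ : -1 + (-1 + -(n + 1 - i)) = (-(n + 3 - i) : ℤ) := by ring
    simp only [euler_zero, tangent_zero, sub_mul, mul_sub, one_mul, smul_mul_assoc, mul_smul_comm,
      mon_mul_mon, zero_add, map_sub, map_smul, e₁, e₃]
    rw [hQ.imResidue_inverse_mul_of_lt (show -1 + (-2 + -(i : ℤ)) < -1 by omega),
      hQ.imResidue_inverse_mul_of_lt (show -1 + (-2 + -(i : ℤ)) < -1 by omega)]
    split_ifs with hi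
    · rw [hi, hQ.imResidue_inverse_mul 0 (l := -(n + 1)) (by simp) (by simp),
        hQ.imResidue_inverse_mul 0 (l := -(n + 3)) (by simp) (by simp), sine_neg, sine_neg]
      module
    · rw [hQ.imResidue_inverse_mul_of_lt (show -1 + -(i : ℤ) < -1 by omega),
        hQ.imResidue_inverse_mul_of_lt (show -1 + -(i : ℤ) < -1 by omega)]
      module
  rw [divDiffInv_monomial, Finset.mul_sum, Finset.mul_sum, Finset.mul_sum, Finset.mul_sum, map_sum,
    Finset.sum_congr rfl fun i _ => hterm i, Finset.sum_ite_eq' _ _ fun _ => _,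
    if_pos (Finset.mem_range.2 (by omega))]

theorem Admissible.imResidue_kernel_zero : imResidue (kernel Q (0 : Perturbation τ)) = 0 := by
  have hs : (sine (-2) : SineSeries τ) = -sine 2 := sine_neg 2
  have hs₀ : (sine 0 : SineSeries τ) = 0 := by simp [sine]
  have hangular : imResidue (mon (-1) 0 * conjPatch Q (0 : Perturbation τ) *
      euler Q (0 : Perturbation τ)) = (2 * Q) • sine 2 := by
    simp only [conjPatch_zero, euler_zero, mul_add, mul_sub, add_mul, smul_mul_assoc,
      mul_smul_comm, mon_mul_mon, map_add, map_sub, map_smul, imResidue_mon]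
    norm_num [hs, hs₀]
    module
  have hvelocity : chordResidue Q (tangent Q (0 : Perturbation τ) *
      euler Q (0 : Perturbation τ)) = ((1 - Q ^ 2) * Q) • sine 2 := by
    simp only [euler_zero, tangent_zero, sub_mul, mul_sub, one_mul, smul_mul_assoc, mul_smul_comm,
      mon_mul_mon, map_sub, map_smul, add_zero, zero_add,
      hQ.chordResidue_mon_of_lt (show (-2 : ℤ) < -1 by norm_num)]
    rw [hQ.chordResidue_mon_natCast 0 (l := 0) (by simp) (by simp),
      hQ.chordResidue_mon_natCast 0 (l := -2) (by simp) (by simp), hs, hs₀]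
    module
  rw [chordResidue, ContinuousLinearMap.comp_apply, ContinuousLinearMap.mul_apply'] at hvelocity
  rw [kernel, map_sub, map_smul, hangular, mul_assoc (mon (-1) (-1) * _), ← mul_assoc, hvelocity]
  module

theorem Admissible.linearization_monomial (n : ℕ) :
    linearization Q (monomial n : Perturbation τ) =
      symbol Q (n + 1) • monomial n - (Q * symbol Q (n + 3)) • monomial (n + 2) := by
  rw [linearization_apply, imResidue_angular_monomial, hQ.chordResidue_monomial,
    hQ.chordSqResidue_monomial, hQ.imResidue_inverse_mul_monomial, ← sine_natCast_add_one,
    ← sine_natCast_add_one, symbol, symbol]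
  push_cast
  ring_nf
  module

end Linearization

/-! ### The bifurcating branch -/

section Branch

theorem norm_monomial_add_two_le (n : ℕ) : ‖(monomial (n + 2) : Perturbation τ)‖ ≤
    (1 + 2 * τ) * (1 + τ) ^ 2 * perturbationWeight τ n := by
  have hτ₀ := hτ.out
  have h : 1 + τ * (n + 2) ≤ (1 + 2 * τ) * (1 + τ * n) := by
    linarith [show 0 ≤ τ * (τ * n) by positivity]
  rw [norm_monomial]
  calc (1 + τ * (n + 2 : ℕ)) * (1 + τ) ^ (n + 2)
      = (1 + τ * (n + 2)) * ((1 + τ) ^ 2 * (1 + τ) ^ n) := by push_cast; ring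
    _ ≤ (1 + 2 * τ) * (1 + τ * n) * ((1 + τ) ^ 2 * (1 + τ) ^ n) := by gcongr
    _ = (1 + 2 * τ) * (1 + τ) ^ 2 * ((1 + τ * n) * (1 + τ) ^ n) := by ring

/-- Multiplication by `1 - Q w²` on perturbations. -/
noncomputable def mulOneSubSq (Q : ℝ) : Perturbation τ →L[ℝ] Perturbation τ :=
  1 - Q • lift (fun n => monomial (n + 2)) norm_monomial_add_two_le

theorem mulOneSubSq_monomial (Q : ℝ) (n : ℕ) :
    mulOneSubSq Q (monomial n : Perturbation τ) = monomial n - Q • monomial (n + 2) := by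
  rw [mulOneSubSq, sub_apply, smul_apply, lift_monomial]
  rfl

variable {Q : ℝ} {k : ℕ}

theorem Admissible.isUnit_mulOneSubSq (hQ : Admissible τ Q) :
    IsUnit (mulOneSubSq Q : Perturbation τ →L[ℝ] Perturbation τ) := by
  have hτ₀ := hτ.out
  refine isUnit_one_sub_of_norm_lt_one (lt_of_le_of_lt ?_ hQ)
  rw [norm_smul, Real.norm_eq_abs]
  exact mul_le_mul_of_nonneg_left (norm_lift_le _ (by positivity)) (abs_nonneg Q)

theorem Admissible.coeff_linearization (hQ : Admissible τ Q) (h : Perturbation τ) (n : ℕ) :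
    coeff n (linearization Q h) = symbol Q (n + 1) * coeff n (mulOneSubSq Q h) := by
  suffices (coeff n).comp (linearization (τ := τ) Q) =
    symbol Q (n + 1) • (coeff n).comp (mulOneSubSq Q) from congr($this h)
  refine hom_ext fun i => ?_
  rw [ContinuousLinearMap.comp_apply, smul_apply, ContinuousLinearMap.comp_apply,
    hQ.linearization_monomial, mulOneSubSq_monomial]
  simp only [map_sub, map_smul, coeff_monomial, smul_eq_mul]
  rcases eq_or_ne n i with rfl | h₁
  · rw [if_pos rfl, if_neg (by omega)]
    ring
  rcases eq_or_ne n (i + 2) with rfl | h₂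
  · rw [if_neg h₁, if_pos rfl]
    ring_nf
  · rw [if_neg h₁, if_neg h₂]
    ring

variable (Q k) in
/-- The aspect parameter encoded by `z`: the coordinate of `z` along the bifurcating mode measures
the variation of `Q`. -/
noncomputable def branchParameter (z : Perturbation τ) : ℝ := Q + coeff k z

variable (k) in
/-- The perturbation `w^(k+2) + ⋯` encoded by `z`, before division by `1 - Q w²`. -/
noncomputable def branchNumerator (z : Perturbation τ) : Perturbation τ :=
  z + (1 - coeff k z) • monomial k

variable (Q k) in
/-- The perturbation encoded by `z`. -/
noncomputable def branchPerturbation (z : Perturbation τ) : Perturbation τ :=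
  (mulOneSubSq (branchParameter Q k z))⁻¹ʳ (branchNumerator k z)

variable (Q k) in
/-- The contour functional in the variables `(ε, z)`, divided by `ε`. -/
noncomputable def branchFun (p : ℝ × Perturbation τ) : SineSeries τ :=
  imResidue (excess p.1 (branchParameter Q k p.2) (branchPerturbation Q k p.2))

theorem branchParameter_zero : branchParameter Q k (0 : Perturbation τ) = Q := by
  rw [branchParameter, map_zero, add_zero]

theorem coeff_branchNumerator (z : Perturbation τ) (n : ℕ) :
    coeff n (branchNumerator k z) = if n = k then 1 else coeff n z := by
  rw [branchNumerator, map_add, map_smul, coeff_monomial, smul_eq_mul]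
  split_ifs with h
  · rw [h]; ring
  · ring

theorem mulOneSubSq_branchPerturbation {z : Perturbation τ}
    (hz : Admissible τ (branchParameter Q k z)) :
    mulOneSubSq (branchParameter Q k z) (branchPerturbation Q k z) = branchNumerator k z :=
  DFunLike.congr_fun (Ring.mul_inverse_cancel _ hz.isUnit_mulOneSubSq) _

theorem coeff_branchFun_zero {z : Perturbation τ} (hz : Admissible τ (branchParameter Q k z))
    (n : ℕ) : coeff n (branchFun Q k (0, z)) =
      symbol (branchParameter Q k z) (n + 1) * if n = k then 1 else coeff n z := by
  rw [branchFun, imResidue_excess_zero, hz.coeff_linearization, mulOneSubSq_branchPerturbation hz,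
    coeff_branchNumerator]

theorem contDiffAt_excess {E : Type*} [NormedAddCommGroup E] [NormedSpace ℝ E]
    {ε q : E → ℝ} {h : E → Perturbation τ} {x : E} {n : WithTop ℕ∞} (hε : ContDiffAt ℝ n ε x)
    (hq : ContDiffAt ℝ n q x) (hh : ContDiffAt ℝ n h x)
    (h₀ : IsUnit (chord (q x) (0 : Perturbation τ))) (h₁ : IsUnit (chord (q x) (ε x • h x))) :
    ContDiffAt ℝ n (fun y => excess (ε y) (q y) (h y)) x := by
  have hinverse₀ : ContDiffAt ℝ n (fun y => (chord (q y) (0 : Perturbation τ))⁻¹ʳ) x :=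
    contDiffAt_inverse_comp (by unfold chord; fun_prop) h₀
  have hinverse : ContDiffAt ℝ n (fun y => (chord (q y) (ε y • h y))⁻¹ʳ) x :=
    contDiffAt_inverse_comp (by unfold chord; fun_prop) h₁
  unfold excess conjChord tangent euler conjPatch
  fun_prop

theorem contDiffAt_branchPerturbation {z : Perturbation τ} {n : WithTop ℕ∞}
    (hz : Admissible τ (branchParameter Q k z)) : ContDiffAt ℝ n (branchPerturbation Q k) z := by
  have hinverse : ContDiffAt ℝ n
      (fun z : Perturbation τ => (mulOneSubSq (τ := τ) (branchParameter Q k z))⁻¹ʳ) z :=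
    contDiffAt_inverse_comp (by unfold mulOneSubSq branchParameter; fun_prop)
      hz.isUnit_mulOneSubSq
  unfold branchPerturbation branchNumerator
  fun_prop

theorem Admissible.contDiffAt_branchFun {n : WithTop ℕ∞} (hQ : Admissible τ Q) :
    ContDiffAt ℝ n (branchFun Q k) ((0, 0) : ℝ × Perturbation τ) := by
  have hparameter : ContDiffAt ℝ n (fun p : ℝ × Perturbation τ => branchParameter Q k p.2)
      (0, 0) := by
    unfold branchParameter
    fun_prop
  have hunit : IsUnit (chord (branchParameter Q k (0 : Perturbation τ)) (0 : Perturbation τ)) := by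
    rw [branchParameter_zero]
    exact hQ.isUnit_chord_zero
  have hperturbation : ContDiffAt ℝ n (branchPerturbation Q k) (0 : Perturbation τ) :=
    contDiffAt_branchPerturbation (by rwa [branchParameter_zero])
  refine imResidue.contDiff.contDiffAt.comp _ (contDiffAt_excess contDiffAt_fst
    hparameter
    (hperturbation.comp ((0, 0) : ℝ × Perturbation τ) contDiffAt_snd) hunit ?_)
  rwa [zero_smul]

end Branch

section ImplicitFunction

variable {Q : ℝ} {k : ℕ}

theorem hasDerivAt_symbol (Q : ℝ) (k : ℕ) :
    HasDerivAt (fun q => symbol q (k + 1)) ((k + 1) * (Q ^ k + Q)) Q := by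
  have h := ((hasDerivAt_pow (k + 1) Q).const_add 1).sub
    ((((hasDerivAt_pow 2 Q).const_sub 1).div_const 2).mul_const ((k + 1 : ℕ) : ℝ))
  refine h.congr_deriv ?_
  rw [Nat.add_sub_cancel]
  push_cast
  ring

theorem symbol_strictAnti (hQ : Q ∈ Set.Ioo (0 : ℝ) 1) : StrictAnti (symbol Q) := by
  refine strictAnti_nat_of_succ_lt fun n => ?_
  have hpow : Q ^ (n + 1) ≤ Q ^ n := pow_le_pow_of_le_one hQ.1.le hQ.2.le n.le_succ
  have hsq : Q ^ 2 < 1 := pow_lt_one₀ hQ.1.le hQ.2 two_ne_zero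
  rw [symbol, symbol, Nat.cast_add_one]
  linarith

theorem isBigO_natCast_symbol (hQ : Q ∈ Set.Ioo (0 : ℝ) 1) :
    (fun n : ℕ => (n : ℝ)) =O[atTop] symbol Q := by
  have hslope : (1 - Q ^ 2) / 2 ≠ 0 := by
    have := pow_lt_one₀ hQ.1.le hQ.2 two_ne_zero
    linarith
  have hbounded : (fun n : ℕ => 1 + Q ^ n) =O[atTop] (fun _ => (1 : ℝ)) :=
    ((tendsto_pow_atTop_nhds_zero_of_lt_one hQ.1.le hQ.2).const_add 1).isBigO_one ℝ
  have hlinear : (fun n : ℕ => (n : ℝ)) =O[atTop] (fun n : ℕ => (1 - Q ^ 2) / 2 * n) :=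
    isBigO_self_const_mul hslope _ _
  have hlittle : (fun n : ℕ => 1 + Q ^ n) =o[atTop] (fun n : ℕ => (1 - Q ^ 2) / 2 * n) :=
    (hbounded.trans_isLittleO
      (isLittleO_const_id_atTop (1 : ℝ) |>.comp_tendsto tendsto_natCast_atTop_atTop)).trans_isBigO
      hlinear
  exact (hlinear.trans hlittle.right_isBigO_sub).neg_right.congr_right fun _ => neg_sub _ _

variable (Q k) in
/-- The diagonal entries of the partial derivative of `branchFun` in `z` at the ellipse. In the
bifurcating direction the entry is the derivative of the eigenvalue in `Q`. -/
noncomputable def branchEntry (n : ℕ) : ℝ :=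
  if n = k then (k + 1) * (Q ^ k + Q) else symbol Q (n + 1)

theorem branchEntry_ne_zero (hQ : Q ∈ Set.Ioo (0 : ℝ) 1) (hk : symbol Q (k + 1) = 0) (n : ℕ) :
    branchEntry Q k n ≠ 0 := by
  have hQ₀ := hQ.1
  rw [branchEntry]
  split_ifs with h
  · positivity
  · rw [← hk]
    exact (symbol_strictAnti hQ).injective.ne (by omega)

variable (τ) in
theorem exists_perturbationWeight_le_branchEntry (hQ : Q ∈ Set.Ioo (0 : ℝ) 1)
    (hk : symbol Q (k + 1) = 0) :
    ∃ C, ∀ n, perturbationWeight τ n ≤ C * |branchEntry Q k n| * sineWeight τ n := by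
  have hτ₀ := hτ.out
  have hlinear : (fun n : ℕ => 1 + τ * n) =O[atTop] (fun n : ℕ => ((n + 1 : ℕ) : ℝ)) :=
    .of_bound (1 + τ) <| .of_forall fun n => by
      rw [Real.norm_of_nonneg (by positivity), Real.norm_of_nonneg (by positivity)]
      push_cast
      nlinarith [(n.cast_nonneg : (0 : ℝ) ≤ n)]
  have hentry : (fun n : ℕ => symbol Q (n + 1)) =ᶠ[atTop] branchEntry Q k := by
    filter_upwards [eventually_ne_atTop k] with n hn
    rw [branchEntry, if_neg hn]
  obtain ⟨C, -, hC⟩ := bound_of_isBigO_nat_atTop <| hlinear.trans <|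
    ((isBigO_natCast_symbol hQ).comp_tendsto (tendsto_add_atTop_nat 1)).trans_eventuallyEq hentry
  refine ⟨C, fun n => mul_le_mul_of_nonneg_right ?_ (by positivity)⟩
  exact (le_abs_self _).trans (hC (branchEntry_ne_zero hQ hk n))

theorem continuous_branchParameter : Continuous (branchParameter Q k : Perturbation τ → ℝ) := by
  unfold branchParameter
  fun_prop

theorem Admissible.eventually_branchParameter (hQ : Admissible τ Q) :
    ∀ᶠ z : Perturbation τ in 𝓝 0, Admissible τ (branchParameter Q k z) := by
  have hparameter := continuous_branchParameter.tendsto' (0 : Perturbation τ) Q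
    (branchParameter_zero (k := k))
  exact (hparameter.abs.mul_const _).eventually_lt_const hQ

theorem Admissible.hasFDerivAt_coeff_branchFun (hQ : Admissible τ Q) (n : ℕ) :
    HasFDerivAt (fun z : Perturbation τ => coeff n (branchFun Q k (0, z)))
      (branchEntry Q k n • coeff n) 0 := by
  have hparameter : HasFDerivAt (branchParameter Q k : Perturbation τ → ℝ) (coeff k) 0 :=
    (coeff k).hasFDerivAt.const_add Q
  have hsymbol : HasFDerivAt (fun z : Perturbation τ => symbol (branchParameter Q k z) (n + 1))
      (((n + 1) * (Q ^ n + Q)) • coeff k) 0 :=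
    HasDerivAt.comp_hasFDerivAt (h₂ := fun q => symbol q (n + 1)) 0
      (by rw [branchParameter_zero]; exact hasDerivAt_symbol Q n) hparameter
  suffices h : HasFDerivAt (fun z : Perturbation τ => symbol (branchParameter Q k z) (n + 1) *
      if n = k then 1 else coeff n z) (branchEntry Q k n • coeff n) 0 from
    h.congr_of_eventuallyEq (hQ.eventually_branchParameter.mono fun z hz =>
      coeff_branchFun_zero hz n)
  rw [branchEntry]
  split_ifs with hn
  · subst hn
    simpa only [mul_one] using hsymbol
  · refine (hsymbol.mul (coeff n).hasFDerivAt).congr_fderiv ?_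
    rw [branchParameter_zero, map_zero, zero_smul, add_zero]

theorem Admissible.coeff_fderiv_branchFun (hQ : Admissible τ Q) (ζ : Perturbation τ) (n : ℕ) :
    coeff n ((fderiv ℝ (branchFun Q k) ((0, 0) : ℝ × Perturbation τ) ∘L .inr ℝ ℝ _) ζ) =
      branchEntry Q k n * coeff n ζ := by
  have hfderiv := (hQ.contDiffAt_branchFun (k := k).differentiableAt one_ne_zero).hasFDerivAt
  have hpartial := (coeff n).hasFDerivAt.comp (0 : Perturbation τ)
    (hfderiv.comp (0 : Perturbation τ) (hasFDerivAt_prodMk_right (0 : ℝ) 0))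
  exact DFunLike.congr_fun (hpartial.unique (hQ.hasFDerivAt_coeff_branchFun n)) ζ

theorem branchFun_zero (hQ : Admissible τ Q) (hk : symbol Q (k + 1) = 0) :
    branchFun Q k ((0, 0) : ℝ × Perturbation τ) = 0 := by
  refine ext_coeff fun n => ?_
  rw [coeff_branchFun_zero (by rwa [branchParameter_zero]), branchParameter_zero, map_zero,
    map_zero]
  split_ifs with h
  · rw [h, hk, zero_mul]
  · rw [mul_zero]

theorem exists_branchFun_eq_zero (hQ : Admissible τ Q) (hQ₁ : Q ∈ Set.Ioo (0 : ℝ) 1)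
    (hk : symbol Q (k + 1) = 0) :
    ∃ z : ℝ → Perturbation τ, z 0 = 0 ∧
      ∀ᶠ ε in 𝓝 0, ContinuousAt z ε ∧ branchFun Q k (ε, z ε) = 0 := by
  obtain ⟨C, hC⟩ := exists_perturbationWeight_le_branchEntry τ hQ₁ hk
  have hinvertible := isInvertible_of_diagonal hQ.coeff_fderiv_branchFun hC
  have hsmooth := hQ.contDiffAt_branchFun (n := 1) (k := k)
  have hcontinuous := (hsmooth.contDiffAt_implicitFunction one_ne_zero hinvertible).eventually
    (by simp)
  have hzero := hsmooth.eventually_apply_implicitFunction one_ne_zero hinvertible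
  rw [branchFun_zero hQ hk] at hzero
  exact ⟨_, hsmooth.implicitFunction_apply_self one_ne_zero hinvertible,
    (hcontinuous.mono fun _ h => h.continuousAt).and hzero⟩

theorem branchPerturbation_ne_zero {z : Perturbation τ}
    (hz : Admissible τ (branchParameter Q k z)) : branchPerturbation Q k z ≠ 0 := by
  intro h
  have hcoeff := congrArg (coeff k) (mulOneSubSq_branchPerturbation hz)
  rw [h, map_zero, map_zero, coeff_branchNumerator, if_pos rfl] at hcoeff
  exact zero_ne_one hcoeff

theorem Admissible.mulOneSubSq_branchPerturbation_zero (hQ : Admissible τ Q) :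
    mulOneSubSq Q (branchPerturbation Q k (0 : Perturbation τ)) = monomial k := by
  have h := mulOneSubSq_branchPerturbation (k := k) (z := (0 : Perturbation τ))
    (by rwa [branchParameter_zero])
  rwa [branchParameter_zero, branchNumerator, map_zero, sub_zero, one_smul, zero_add] at h

theorem eventually_isUnit_chord_smul {q : ℝ → ℝ} {h : ℝ → Perturbation τ}
    (hq : ContinuousAt q 0) (hh : ContinuousAt h 0) (hq₀ : Admissible τ (q 0)) :
    ∀ᶠ ε in 𝓝 0, IsUnit (chord (q ε) (ε • h ε)) := by
  have hchord : ContinuousAt (fun ε => chord (q ε) (ε • h ε)) 0 := by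
    unfold chord
    fun_prop
  refine hchord.eventually_mem (Units.isOpen.mem_nhds ?_)
  rw [zero_smul]
  exact hq₀.isUnit_chord_zero

theorem exists_branch (hQ : Admissible τ Q) (hQ₁ : Q ∈ Set.Ioo (0 : ℝ) 1)
    (hk : symbol Q (k + 1) = 0) :
    ∃ (q : ℝ → ℝ) (h : ℝ → Perturbation τ), q 0 = Q ∧ mulOneSubSq Q (h 0) = monomial k ∧
      ∀ᶠ ε in 𝓝 0, ContinuousAt q ε ∧ ContinuousAt h ε ∧ q ε ∈ Set.Ioo 0 1 ∧ h ε ≠ 0 ∧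
        IsUnit (chord (q ε) (ε • h ε)) ∧ imResidue (kernel (q ε) (ε • h ε)) = 0 := by
  obtain ⟨z, hz₀, hz⟩ := exists_branchFun_eq_zero hQ hQ₁ hk
  set q : ℝ → ℝ := fun ε => branchParameter Q k (z ε)
  set h : ℝ → Perturbation τ := fun ε => branchPerturbation Q k (z ε)
  have hq₀ : q 0 = Q := (congrArg _ hz₀).trans branchParameter_zero
  have hcontinuous : ∀ᶠ ε in 𝓝 0, ContinuousAt q ε ∧ ContinuousAt h ε ∧ Admissible τ (q ε) := by
    have hadmissible : ∀ᶠ ε in 𝓝 0, Admissible τ (q ε) :=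
      hz.self_of_nhds.1.eventually (hz₀ ▸ hQ.eventually_branchParameter)
    filter_upwards [hz, hadmissible] with ε ⟨hε, _⟩ hadm
    exact ⟨continuous_branchParameter.continuousAt.comp hε,
      .comp (contDiffAt_branchPerturbation (n := 0) hadm).continuousAt hε, hadm⟩
  obtain ⟨hq, hh, hadm₀⟩ := hcontinuous.self_of_nhds
  have hmem : ∀ᶠ ε in 𝓝 0, q ε ∈ Set.Ioo 0 1 :=
    hq.eventually_mem (isOpen_Ioo.mem_nhds (hq₀ ▸ hQ₁))
  refine ⟨q, h, hq₀, ?_, ?_⟩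
  · exact (congrArg (fun z => mulOneSubSq Q (branchPerturbation Q k z)) hz₀).trans
      hQ.mulOneSubSq_branchPerturbation_zero
  · filter_upwards [hz, hcontinuous, hmem, eventually_isUnit_chord_smul hq hh hadm₀] with
      ε ⟨_, hzero⟩ ⟨hqε, hhε, hadm⟩ hmem hunit
    refine ⟨hqε, hhε, hmem, branchPerturbation_ne_zero hadm, hunit, ?_⟩
    rw [kernel_smul ε hadm.isUnit_chord_zero hunit, map_add, map_smul,
      hadm.imResidue_kernel_zero, zero_add]
    exact (congrArg _ hzero).trans (smul_zero _)

end ImplicitFunction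

/-! ### Hölder bounds for the branch -/

section PowerSeries

/-- The coefficients of the power series on the circle represented by a perturbation. -/
noncomputable def seriesCoeff (g : Perturbation τ) : ℕ → ℝ
  | 0 => 0
  | 1 => 0
  | n + 2 => coeff n g

theorem seriesFun_seriesCoeff (g : Perturbation τ) (w : Circle) :
    seriesFun (seriesCoeff g) w = perturbationEval w g := by
  refine ((hasSum_nat_add_iff' 2).1 ?_).tsum_eq
  have hsum := hasSum_apply (perturbationEval w) g
  simp only [perturbationEval_monomial, Complex.real_smul] at hsum
  simpa [Finset.sum_range_succ, seriesCoeff] using hsum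

theorem seriesDeriv_seriesCoeff (g : Perturbation τ) (w : Circle) :
    seriesDeriv (seriesCoeff g) w = perturbationDeriv w g := by
  refine ((hasSum_nat_add_iff' 2).1 ?_).tsum_eq
  have hsum := hasSum_apply (perturbationDeriv w) g
  simp only [perturbationDeriv_monomial, Complex.real_smul] at hsum
  simpa [Finset.sum_range_succ, seriesCoeff, mul_assoc, mul_left_comm] using hsum

theorem summable_mul_abs_seriesCoeff (g : Perturbation τ) :
    Summable fun n : ℕ => (n : ℝ) * |seriesCoeff g n| := by
  have hτ₀ := hτ.out
  rw [← summable_nat_add_iff 2]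
  refine (summable_abs_coeff_mul g (v := fun n => n + 2) (C := 2 + τ⁻¹) (fun n => by positivity)
    fun n => (add_two_le_mul (τ := τ) n).trans ?_).congr fun n => ?_
  · exact mul_le_mul_of_nonneg_left (le_mul_of_one_le_right (by positivity)
      (one_le_pow₀ (by linarith))) (by positivity)
  · rw [mul_comm, Nat.cast_add, Nat.cast_two]
    rfl

theorem exists_seriesCoeff_ne_zero {g : Perturbation τ} (hg : g ≠ 0) :
    ∃ n, seriesCoeff g n ≠ 0 := by
  contrapose! hg
  exact ext_coeff fun n => (hg (n + 2)).trans (map_zero _).symm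

theorem seriesCoeff_zero (n : ℕ) : seriesCoeff (0 : Perturbation τ) n = 0 := by
  match n with
  | 0 | 1 => rfl
  | n + 2 => exact map_zero (coeff n)

end PowerSeries

section HolderBound

theorem add_two_sq_le (n : ℕ) : ((n : ℝ) + 2) ^ 2 ≤ (2 + τ⁻¹) ^ 2 * perturbationWeight τ n := by
  have hτ₀ := hτ.out
  have hbernoulli : 1 + τ * n ≤ (1 + τ) ^ n := by
    rw [mul_comm]
    exact one_add_mul_le_pow (by linarith) n
  calc ((n : ℝ) + 2) ^ 2 ≤ ((2 + τ⁻¹) * (1 + τ * n)) ^ 2 := by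
        gcongr
        exact add_two_le_mul n
    _ = (2 + τ⁻¹) ^ 2 * ((1 + τ * n) * (1 + τ * n)) := by ring
    _ ≤ (2 + τ⁻¹) ^ 2 * ((1 + τ * n) * (1 + τ) ^ n) := by gcongr

theorem norm_perturbationEval_le (w : Circle) (g : Perturbation τ) :
    ‖perturbationEval w g‖ ≤ (2 + τ⁻¹) ^ 2 * ‖g‖ := by
  refine norm_apply_le _ (fun n => le_trans ?_ (add_two_sq_le n)) g
  rw [perturbationEval_monomial, norm_pow, Circle.norm_coe, one_pow]
  exact one_le_pow₀ (by linarith [n.cast_nonneg (α := ℝ)])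

theorem norm_natCast_add_two (n : ℕ) : ‖(n + 2 : ℂ)‖ = n + 2 := by
  exact_mod_cast Complex.norm_natCast (n + 2)

theorem norm_perturbationDeriv_le (w : Circle) (g : Perturbation τ) :
    ‖perturbationDeriv w g‖ ≤ (2 + τ⁻¹) ^ 2 * ‖g‖ := by
  refine norm_apply_le _ (fun n => le_trans ?_ (add_two_sq_le n)) g
  rw [perturbationDeriv_monomial, norm_mul, norm_pow, Circle.norm_coe, one_pow, mul_one,
    norm_natCast_add_two]
  exact le_self_pow₀ (by linarith [n.cast_nonneg (α := ℝ)]) two_ne_zero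

theorem norm_perturbationDeriv_sub_le (w₁ w₂ : Circle) (g : Perturbation τ) :
    ‖perturbationDeriv w₁ g - perturbationDeriv w₂ g‖ ≤
      (2 + τ⁻¹) ^ 2 * ‖(w₁ : ℂ) - w₂‖ * ‖g‖ := by
  refine norm_apply_le (perturbationDeriv w₁ - perturbationDeriv w₂) (fun n => ?_) g
  rw [sub_apply, perturbationDeriv_monomial, perturbationDeriv_monomial, ← mul_sub, norm_mul,
    norm_natCast_add_two]
  calc (n + 2 : ℝ) * ‖(w₁ : ℂ) ^ (n + 1) - (w₂ : ℂ) ^ (n + 1)‖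
      ≤ (n + 2) * ((n + 2) * ‖(w₁ : ℂ) - w₂‖) := by
        gcongr
        refine (norm_circle_pow_sub_pow_le w₁ w₂ _).trans ?_
        gcongr
        push_cast
        linarith
    _ = (n + 2) ^ 2 * ‖(w₁ : ℂ) - w₂‖ := by ring
    _ ≤ (2 + τ⁻¹) ^ 2 * perturbationWeight τ n * ‖(w₁ : ℂ) - w₂‖ := by
        gcongr
        exact add_two_sq_le n
    _ = (2 + τ⁻¹) ^ 2 * ‖(w₁ : ℂ) - w₂‖ * perturbationWeight τ n := by ring

theorem c1AlphaBound_of_eq_perturbationEval {α : ℝ} (hα : α ∈ Set.Icc (0 : ℝ) 1)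
    (g : Perturbation τ) {f f' : ℂ → ℂ} (hf : ∀ w : Circle, f w = perturbationEval w g)
    (hf' : ∀ w : Circle, f' w = perturbationDeriv w g) :
    C1AlphaBound α (2 * (2 + τ⁻¹) ^ 2 * ‖g‖) f f' := by
  have hbound : (2 + τ⁻¹) ^ 2 * ‖g‖ ≤ 2 * (2 + τ⁻¹) ^ 2 * ‖g‖ := by
    rw [mul_assoc]
    exact le_mul_of_one_le_left (by positivity) one_le_two
  refine ⟨fun w hw => ?_, fun w hw => ?_, fun w₁ hw₁ w₂ hw₂ => ?_⟩
  · exact (hf ⟨w, hw⟩ ▸ norm_perturbationEval_le ⟨w, hw⟩ g).trans hbound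
  · exact (hf' ⟨w, hw⟩ ▸ norm_perturbationDeriv_le ⟨w, hw⟩ g).trans hbound
  · have hdist : ‖w₁ - w₂‖ ≤ 2 := by
      refine (norm_sub_le _ _).trans_eq ?_
      rw [mem_sphere_zero_iff_norm.1 hw₁, mem_sphere_zero_iff_norm.1 hw₂, one_add_one_eq_two]
    calc ‖f' w₁ - f' w₂‖ ≤ (2 + τ⁻¹) ^ 2 * ‖w₁ - w₂‖ * ‖g‖ :=
          hf' ⟨w₁, hw₁⟩ ▸ hf' ⟨w₂, hw₂⟩ ▸ norm_perturbationDeriv_sub_le ⟨w₁, hw₁⟩ ⟨w₂, hw₂⟩ g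
      _ ≤ (2 + τ⁻¹) ^ 2 * (2 * ‖w₁ - w₂‖ ^ α) * ‖g‖ := by
          gcongr
          exact le_mul_rpow one_le_two (norm_nonneg _) hdist hα
      _ = 2 * (2 + τ⁻¹) ^ 2 * ‖g‖ * ‖w₁ - w₂‖ ^ α := by ring

theorem exists_c1AlphaBound_series_sub {α : ℝ} (hα : α ∈ Set.Icc (0 : ℝ) 1)
    {X : Type*} [PseudoMetricSpace X] {g : X → Perturbation τ} {x₀ : X} (hg : ContinuousAt g x₀)
    {δ : ℝ} (hδ : 0 < δ) :
    ∃ η : ℝ, 0 < η ∧ ∀ x, dist x x₀ < η → C1AlphaBound α δ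
      (fun w => seriesFun (seriesCoeff (g x)) w - seriesFun (seriesCoeff (g x₀)) w)
      (fun w => seriesDeriv (seriesCoeff (g x)) w - seriesDeriv (seriesCoeff (g x₀)) w) := by
  have hc : ContinuousAt (fun x => 2 * (2 + τ⁻¹) ^ 2 * ‖g x - g x₀‖) x₀ := by fun_prop
  obtain ⟨η, hη, hlt⟩ := Metric.eventually_nhds_iff.1
    (hc.eventually_lt_const (u := δ) (by beta_reduce; rwa [sub_self, norm_zero, mul_zero]))
  refine ⟨η, hη, fun x hx => .mono (c1AlphaBound_of_eq_perturbationEval hα (g x - g x₀)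
    (fun w => ?_) fun w => ?_) (hlt hx).le⟩
  · rw [seriesFun_seriesCoeff, seriesFun_seriesCoeff, map_sub]
  · rw [seriesDeriv_seriesCoeff, seriesDeriv_seriesCoeff, map_sub]

end HolderBound

section Mode

variable {Q : ℝ} {k : ℕ} (w : Circle)

theorem perturbationEval_mulOneSubSq (g : Perturbation τ) :
    perturbationEval w (mulOneSubSq Q g) = (1 - Q * (w : ℂ) ^ 2) * perturbationEval w g := by
  suffices (perturbationEval w).comp (mulOneSubSq Q) =
    (1 - Q * (w : ℂ) ^ 2) • perturbationEval (τ := τ) w from congr($this g)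
  refine hom_ext fun n => ?_
  rw [ContinuousLinearMap.comp_apply, mulOneSubSq_monomial, map_sub, map_smul, smul_apply,
    perturbationEval_monomial, perturbationEval_monomial, Complex.real_smul, smul_eq_mul]
  ring

theorem perturbationDeriv_mulOneSubSq (g : Perturbation τ) :
    perturbationDeriv w (mulOneSubSq Q g) =
      (1 - Q * (w : ℂ) ^ 2) * perturbationDeriv w g - 2 * Q * w * perturbationEval w g := by
  suffices (perturbationDeriv w).comp (mulOneSubSq Q) =
    (1 - Q * (w : ℂ) ^ 2) • perturbationDeriv (τ := τ) w -
      (2 * Q * w : ℂ) • perturbationEval (τ := τ) w from congr($this g)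
  refine hom_ext fun n => ?_
  rw [ContinuousLinearMap.comp_apply, mulOneSubSq_monomial, map_sub, map_smul, sub_apply,
    smul_apply, smul_apply, perturbationEval_monomial, perturbationDeriv_monomial,
    perturbationDeriv_monomial, Complex.real_smul, smul_eq_mul, smul_eq_mul]
  push_cast
  ring

theorem one_sub_mul_circle_sq_ne_zero (hQ : |Q| < 1) : 1 - (Q : ℂ) * (w : ℂ) ^ 2 ≠ 0 := by
  intro h
  have hnorm := congrArg norm (sub_eq_zero.1 h)
  rw [norm_one, norm_mul, norm_pow, Circle.norm_coe, Complex.norm_real, one_pow, mul_one,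
    Real.norm_eq_abs] at hnorm
  exact hQ.ne' hnorm

variable {v : Perturbation τ}

theorem perturbationEval_of_mulOneSubSq_eq (hQ : |Q| < 1) (hv : mulOneSubSq Q v = monomial k) :
    perturbationEval w v = (w : ℂ) ^ (k + 2) / (1 - Q * (w : ℂ) ^ 2) := by
  rw [eq_div_iff (one_sub_mul_circle_sq_ne_zero w hQ), mul_comm, ← perturbationEval_mulOneSubSq,
    hv, perturbationEval_monomial]

theorem perturbationDeriv_of_mulOneSubSq_eq (hQ : |Q| < 1) (hv : mulOneSubSq Q v = monomial k) :
    perturbationDeriv w v = deriv (fun z : ℂ => z ^ (k + 2) / (1 - (Q : ℂ) * z ^ 2)) w := by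
  have hne := one_sub_mul_circle_sq_ne_zero w hQ
  have hderiv : HasDerivAt (fun z : ℂ => z ^ (k + 2) / (1 - (Q : ℂ) * z ^ 2)) _ (w : ℂ) :=
    (hasDerivAt_pow (k + 2) _).div (((hasDerivAt_pow 2 _).const_mul (Q : ℂ)).const_sub 1) hne
  have hmul := perturbationDeriv_mulOneSubSq (Q := Q) w v
  rw [hv, perturbationDeriv_monomial, perturbationEval_of_mulOneSubSq_eq w hQ hv,
    eq_sub_iff_add_eq'] at hmul
  rw [hderiv.deriv, ← mul_right_inj' hne, ← hmul]
  field_simp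
  push_cast
  ring

theorem c1AlphaBound_series_sub_mode {α : ℝ} (hα : α ∈ Set.Icc (0 : ℝ) 1) (hQ : |Q| < 1)
    (hv : mulOneSubSq Q v = monomial k) (g : Perturbation τ) (ε : ℝ) :
    C1AlphaBound α (2 * (2 + τ⁻¹) ^ 2 * ‖g - ε • v‖)
      (fun w => seriesFun (seriesCoeff g) w - ε * (w ^ (k + 2) / (1 - Q * w ^ 2)))
      (fun w => seriesDeriv (seriesCoeff g) w -
        ε * deriv (fun z : ℂ => z ^ (k + 2) / (1 - (Q : ℂ) * z ^ 2)) w) := by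
  refine c1AlphaBound_of_eq_perturbationEval hα _ (fun w => ?_) fun w => ?_
  · rw [seriesFun_seriesCoeff, ← perturbationEval_of_mulOneSubSq_eq w hQ hv, map_sub, map_smul,
      Complex.real_smul]
  · rw [seriesDeriv_seriesCoeff, ← perturbationDeriv_of_mulOneSubSq_eq w hQ hv, map_sub, map_smul,
      Complex.real_smul]

end Mode

theorem exists_admissible {Q : ℝ} (hQ : |Q| < 1) : ∃ τ, 0 < τ ∧ Admissible τ Q := by
  have hc : ContinuousAt (fun τ : ℝ => |Q| * ((1 + 2 * τ) * (1 + τ) ^ 2)) 0 := by fun_prop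
  have hlt := hc.eventually_lt_const (u := 1) (by simpa using hQ)
  exact ((eventually_mem_nhdsWithin (s := Set.Ioi 0)).and
    (hlt.filter_mono nhdsWithin_le_nhds)).exists

end VState

open VState

theorem bifurcation_from_ellipse_general (m : ℕ) (Qm : ℝ) (hQm : Qm ∈ Set.Ioo (0 : ℝ) 1)
    (hroot : 1 + Qm ^ m - (1 - Qm ^ 2) / 2 * m = 0) :
    ∃ a : ℝ, 0 < a ∧
    ∃ (Qf : ℝ → ℝ) (c : ℝ → ℕ → ℝ) (r : ℝ → ℝ), ∀ α ∈ Set.Icc (0 : ℝ) 1,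
      (∀ ε ∈ Set.Ioo (-a) a, c ε 0 = 0 ∧ c ε 1 = 0 ∧
        Summable fun n : ℕ => (n : ℝ) * |c ε n|) ∧
      ContinuousOn Qf (Set.Ioo (-a) a) ∧
      (∀ ε ∈ Set.Ioo (-a) a, Qf ε ∈ Set.Ioo (0 : ℝ) 1) ∧
      Qf 0 = Qm ∧
      (∀ n : ℕ, c 0 n = 0) ∧
      (∀ ε₀ ∈ Set.Ioo (-a) a, ∀ δ : ℝ, 0 < δ → ∃ η : ℝ, 0 < η ∧
        ∀ ε ∈ Set.Ioo (-a) a, |ε - ε₀| < η →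
          C1AlphaBound α δ
            (fun w => seriesFun (c ε) w - seriesFun (c ε₀) w)
            (fun w => seriesDeriv (c ε) w - seriesDeriv (c ε₀) w)) ∧
      (∀ ε ∈ Set.Ioo (-a) a,
        C1AlphaBound α (r ε)
          (fun w => seriesFun (c ε) w - (ε : ℂ) * (w ^ (m + 1) / (1 - (Qm : ℂ) * w ^ 2)))
          (fun w => seriesDeriv (c ε) w -
            (ε : ℂ) * deriv (fun z : ℂ => z ^ (m + 1) / (1 - (Qm : ℂ) * z ^ 2)) w)) ∧
      Tendsto (fun ε : ℝ => r ε / |ε|) (𝓝[≠] 0) (𝓝 0) ∧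
      (∃ a' : ℝ, 0 < a' ∧ a' ≤ a ∧
        ∀ ε : ℝ, ε ≠ 0 → |ε| < a' → ∃ n : ℕ, c ε n ≠ 0) ∧
      ∀ ε ∈ Set.Ioo (-a) a, IsRotatingPatch ((1 - Qf ε ^ 2) / 4)
        (fun w => w + (Qf ε : ℂ) / w + seriesFun (c ε) w)
        (fun w => 1 - (Qf ε : ℂ) / w ^ 2 + seriesDeriv (c ε) w) := by
  obtain ⟨k, rfl⟩ : ∃ k, m = k + 1 :=
    Nat.exists_eq_succ_of_ne_zero (by rintro rfl; norm_num at hroot)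
  have hQ : |Qm| < 1 := by rw [abs_of_pos hQm.1]; exact hQm.2
  obtain ⟨τ, hτ, hadm⟩ := exists_admissible hQ
  have : Fact (0 < τ) := ⟨hτ⟩
  obtain ⟨q, h, hq₀, hmode, hbranch⟩ := exists_branch hadm hQm hroot
  obtain ⟨a, ha, hbranch⟩ := (nhds_basis_zero_abs_lt ℝ).eventually_iff.1 hbranch
  choose! hq hh hmem hne hunit hzero using hbranch
  refine ⟨a, ha, q, fun ε => seriesCoeff (ε • h ε),
    fun ε => 2 * (2 + τ⁻¹) ^ 2 * ‖ε • h ε - ε • h 0‖, fun α hα =>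
    ⟨fun ε _ => ⟨rfl, rfl, summable_mul_abs_seriesCoeff _⟩,
    fun ε hε => (hq (abs_lt.2 hε)).continuousWithinAt, fun ε hε => hmem (abs_lt.2 hε), hq₀,
    fun n => by beta_reduce; rw [zero_smul, seriesCoeff_zero], fun ε₀ hε₀ δ hδ => ?_,
    fun ε _ => c1AlphaBound_series_sub_mode hα hQ hmode _ ε,
    tendsto_mul_norm_smul_sub_div (hh (abs_zero.trans_lt ha)) _,
    ⟨a, ha, le_rfl, fun ε hε hεa => exists_seriesCoeff_ne_zero (smul_ne_zero hε (hne hεa))⟩,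
    fun ε hε => ?_⟩⟩
  · obtain ⟨η, hη, hbound⟩ := exists_c1AlphaBound_series_sub hα
      (continuousAt_id.smul (hh (abs_lt.2 hε₀))) hδ
    exact ⟨η, hη, fun ε _ hε => hbound ε hε⟩
  · refine isRotatingPatch_of_imResidue_kernel_eq_zero (hunit (abs_lt.2 hε)) (hzero (abs_lt.2 hε))
      (fun w => ?_) fun w => ?_
    · rw [seriesFun_seriesCoeff, patch]
    · rw [seriesDeriv_seriesCoeff, patchDeriv]

/-- Main theorem: bifurcation of rotating vortex patches from the Kirchhoff
ellipse of parameter `Q_m`, the unique root in `(0,1)` of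
`1 + Q^m - ((1-Q²)/2)m = 0` for `m ≥ 3`.  There are a bifurcation interval
`(-a,a)`, a continuous curve `ε ↦ Q(ε) ∈ (0,1)` with `Q(0) = Q_m`, and a
family `f_ε(w) = Σ_{n≥2} a_n(ε) wⁿ` of perturbations with real Fourier
coefficients (holomorphic in the disc), continuous in `ε` for the
`C^{1+α}(𝕋)` norm, with `f_0 = 0`, `‖f_ε - ε v_m‖_{C^{1+α}} = o(ε)` where
`v_m(w) = w^{m+1}/(1 - Q_m w²)` (in particular `f_ε ≠ 0` for small `ε ≠ 0`),
such that `Φ_ε = α_{Q(ε)} + f_ε` solves the rotating-patch contour equation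
with angular velocity `Ω_ε = (1 - Q(ε)²)/4`. -/
theorem bifurcation_from_ellipse (m : ℕ) (hm : 3 ≤ m)
    (Qm : ℝ) (hQm : Qm ∈ Set.Ioo (0:ℝ) 1)
    (hroot : 1 + Qm ^ m - (1 - Qm ^ 2) / 2 * m = 0)
    (α : ℝ) (hα : α ∈ Set.Ioo (0:ℝ) 1) :
    ∃ a : ℝ, 0 < a ∧
    ∃ (Qf : ℝ → ℝ) (c : ℝ → ℕ → ℝ) (r : ℝ → ℝ),
      -- each f_ε is a power series Σ_{n≥2} a_n(ε) wⁿ with real coefficients,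
      -- absolutely convergent together with its derivative (hence extending
      -- holomorphically to the open unit disc)
      (∀ ε ∈ Set.Ioo (-a) a, c ε 0 = 0 ∧ c ε 1 = 0 ∧
        Summable fun n : ℕ => (n : ℝ) * |c ε n|) ∧
      -- ε ↦ Q(ε) is continuous with values in (0,1) and Q(0) = Q_m
      ContinuousOn Qf (Set.Ioo (-a) a) ∧
      (∀ ε ∈ Set.Ioo (-a) a, Qf ε ∈ Set.Ioo (0:ℝ) 1) ∧
      Qf 0 = Qm ∧
      -- f_0 = 0
      (∀ n : ℕ, c 0 n = 0) ∧
      -- ε ↦ f_ε is continuous into the C^{1+α}(𝕋) norm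
      (∀ ε₀ ∈ Set.Ioo (-a) a, ∀ δ : ℝ, 0 < δ → ∃ η : ℝ, 0 < η ∧
        ∀ ε ∈ Set.Ioo (-a) a, |ε - ε₀| < η →
          C1AlphaBound α δ
            (fun w => seriesFun (c ε) w - seriesFun (c ε₀) w)
            (fun w => seriesDeriv (c ε) w - seriesDeriv (c ε₀) w)) ∧
      -- ‖f_ε - ε v_m‖_{C^{1+α}(𝕋)} ≤ r(ε) with r(ε) = o(ε) as ε → 0
      (∀ ε ∈ Set.Ioo (-a) a,
        C1AlphaBound α (r ε)
          (fun w => seriesFun (c ε) w - (ε : ℂ) * (w ^ (m + 1) / (1 - (Qm : ℂ) * w ^ 2)))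
          (fun w => seriesDeriv (c ε) w -
            (ε : ℂ) * deriv (fun z : ℂ => z ^ (m + 1) / (1 - (Qm : ℂ) * z ^ 2)) w)) ∧
      Filter.Tendsto (fun ε : ℝ => r ε / |ε|) (nhdsWithin 0 {(0:ℝ)}ᶜ) (nhds 0) ∧
      -- in particular f_ε ≠ 0 for small ε ≠ 0
      (∃ a' : ℝ, 0 < a' ∧ a' ≤ a ∧
        ∀ ε : ℝ, ε ≠ 0 → |ε| < a' → ∃ n : ℕ, c ε n ≠ 0) ∧
      -- the rotating-patch (V-state) contour equation
      (∀ ε ∈ Set.Ioo (-a) a, ∀ w ∈ sphere (0:ℂ) 1,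
        ((2 * (((1 - Qf ε ^ 2) / 4 : ℝ) : ℂ) *
            starRingEnd ℂ (w + (Qf ε : ℂ) / w + seriesFun (c ε) w) +
          (∮ ξ in C(0, 1),
            (starRingEnd ℂ (ξ + (Qf ε : ℂ) / ξ + seriesFun (c ε) ξ) -
              starRingEnd ℂ (w + (Qf ε : ℂ) / w + seriesFun (c ε) w)) /
              ((ξ + (Qf ε : ℂ) / ξ + seriesFun (c ε) ξ) -
                (w + (Qf ε : ℂ) / w + seriesFun (c ε) w)) *
              (1 - (Qf ε : ℂ) / ξ ^ 2 + seriesDeriv (c ε) ξ)) /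
            (2 * Real.pi * Complex.I)) *
          w * (1 - (Qf ε : ℂ) / w ^ 2 + seriesDeriv (c ε) w)).im = 0) := by
  obtain ⟨a, ha, Qf, c, r, h⟩ := bifurcation_from_ellipse_general m Qm hQm hroot
  exact ⟨a, ha, Qf, c, r, h α (Set.Ioo_subset_Icc_self hα)⟩
end

section
/- (Crandall–Rabinowitz) Let X, Y be real Banach spaces, V a neighborhood of 0 in X, and F : ℝ × V → Y a map such that: (1) F(λ, 0) = 0 for all λ ∈ ℝ; (2) F is of class C¹ and the mixed partial derivative ∂_λ∂_x F exists and is continuous; (3) the linear operator L₀ = ∂_x F(0,0) has one-dimensional kernel, spanned by some x₀ ∈ X, and its range R(L₀) is closed of codimension one in Y; (4) ∂_λ∂_x F(0,0)x₀ ∉ R(L₀). Then for any closed complement Z of span{x₀} in X there exist a neighborhood U of (0,0) in ℝ × X, a number a > 0, and continuous functions φ : (−a,a) → ℝ and ψ : (−a,a) → Z with φ(0) = 0 and ψ(0) = 0, such that F⁻¹(0) ∩ U = { (φ(ε), ε x₀ + ε ψ(ε)) : |ε| < a } ∪ { (λ, 0) : (λ,0) ∈ U }. -/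
/-!
Write `L = ∂ₓF(0,0)` and `M = ∂_λ∂ₓF(0,0)`. Since `F` vanishes on the line `x = 0`, a zero
`(λ, s (x₀ + z))` off that line is a zero of the blow-up `s⁻¹ F(λ, s (x₀ + z))`. As `s → 0` the
blow-ups have at `(λ, z) = (0, 0)` the common strict derivative `(λ, z) ↦ λ M x₀ + L z`, uniformly
in `s`, and this map is an isomorphism `𝕜 × Z → Y` by transversality. An implicit function theorem
in which the parameter `s` enters only continuously then yields the branch `s ↦ (φ(s), ψ(s))`.
Conversely `L x = o(x)` along the zeros `(λ, x) → (0, 0)`, so the `Z`-component of such an `x` is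
negligible against its `x₀`-component: every zero off the line is seen by the blow-up, hence lies
on the branch.
-/

open Filter Topology Metric Asymptotics Set
open scoped NNReal

theorem exists_mem_nhds_forall_mem_of_eventually_prod {S E : Type*} [TopologicalSpace E]
    {l : Filter S} {w₀ : E} {r : S → E → E → Prop}
    (h : ∀ᶠ q in l ×ˢ 𝓝 (w₀, w₀), r q.1 q.2.1 q.2.2) :
    ∃ t ∈ 𝓝 w₀, ∀ᶠ s in l, ∀ v ∈ t, ∀ w ∈ t, r s v w := by
  obtain ⟨T, hT, U, hU, hTU⟩ := mem_prod_iff.1 h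
  rw [nhds_prod_eq, mem_prod_same_iff] at hU
  obtain ⟨t, ht, htU⟩ := hU
  exact ⟨t, ht, mem_of_superset hT fun s hs v hv w hw =>
    hTU (show (s, v, w) ∈ T ×ˢ U from ⟨hs, htU ⟨hv, hw⟩⟩)⟩

theorem exists_mem_nhds_inter_eq_image_ball_union {R T : Type*} [PseudoMetricSpace R]
    [TopologicalSpace T] {S L W : Set T} {π : T → R} {γ : R → T} {c : R} {r : ℝ} (hr : 0 < r)
    (hW : W ∈ 𝓝 (γ c)) (hπ : ContinuousAt π (γ c)) (hγ : ContinuousAt γ c) (hπγ : ∀ s, π (γ s) = s)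
    (hS : ∀ᶠ p in 𝓝 (γ c), p ∈ S ↔ p ∈ L ∨ p = γ (π p)) :
    ∃ U ∈ 𝓝 (γ c), U ⊆ W ∧ ∃ a : ℝ, 0 < a ∧ a ≤ r ∧ U ∩ S = γ '' ball c a ∪ U ∩ L := by
  have hgood := inter_mem hW hS
  obtain ⟨a₀, ha₀, hball⟩ := nhds_basis_ball.mem_iff.1 (hγ hgood)
  have hπball : π ⁻¹' ball c (min a₀ r) ∈ 𝓝 (γ c) :=
    hπ.preimage_mem_nhds (by rw [hπγ]; exact ball_mem_nhds c (lt_min ha₀ hr))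
  refine ⟨_, inter_mem hgood hπball, fun p hp => hp.1.1, min a₀ r, lt_min ha₀ hr,
    min_le_right _ _, ?_⟩
  ext p
  constructor
  · rintro ⟨hp, hpS⟩
    rcases hp.1.2.1 hpS with hL | hγp
    · exact Or.inr ⟨hp, hL⟩
    · exact Or.inl ⟨π p, hp.2, hγp.symm⟩
  · rintro (⟨s, hs, rfl⟩ | ⟨hp, hL⟩)
    · have hmem := hball (ball_subset_ball (min_le_left _ _) hs)
      exact ⟨⟨hmem, by rwa [mem_preimage, hπγ]⟩, hmem.2.2 (Or.inr (by rw [hπγ]))⟩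
    · exact ⟨hp, hp.1.2.2 (Or.inl hL)⟩

section UniformStrictDerivative

variable {𝕜 E F S : Type*} [NontriviallyNormedField 𝕜]
  [NormedAddCommGroup E] [NormedSpace 𝕜 E] [NormedAddCommGroup F] [NormedSpace 𝕜 F]

/-- Strict differentiability at `w₀` of all the maps `G s`, with one and the same derivative `A`,
uniformly along the filter `l` of parameters; nothing is assumed about how `G s` depends on `s`. -/
def HasUniformStrictFDerivAt (G : S → E → F) (A : E →L[𝕜] F) (l : Filter S) (w₀ : E) : Prop :=
  (fun q : S × E × E => G q.1 q.2.1 - G q.1 q.2.2 - A (q.2.1 - q.2.2))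
    =o[l ×ˢ 𝓝 (w₀, w₀)] fun q => q.2.1 - q.2.2

namespace HasUniformStrictFDerivAt

variable {G : S → E → F} {A : E ≃L[𝕜] F} {l : Filter S} {w₀ : E} {y : F}

theorem coprod {E₁ E₂ : Type*} [NormedAddCommGroup E₁] [NormedSpace 𝕜 E₁]
    [NormedAddCommGroup E₂] [NormedSpace 𝕜 E₂] {G : S → E₁ × E₂ → F} {A₁ : E₁ →L[𝕜] F}
    {A₂ : E₂ →L[𝕜] F} {x₀ : E₁} {y₀ : E₂}
    (h₁ : HasUniformStrictFDerivAt (fun (r : S × E₂) x => G r.1 (x, r.2)) A₁ (l ×ˢ 𝓝 y₀) x₀)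
    (h₂ : HasUniformStrictFDerivAt (fun (r : S × E₁) y => G r.1 (r.2, y)) A₂ (l ×ˢ 𝓝 x₀) y₀) :
    HasUniformStrictFDerivAt G (A₁.coprod A₂) l (x₀, y₀) := by
  have hs : Tendsto Prod.fst (l ×ˢ 𝓝 ((x₀, y₀), (x₀, y₀))) l := tendsto_fst
  have hv : Tendsto (fun q : S × (E₁ × E₂) × E₁ × E₂ => q.2.1)
    (l ×ˢ 𝓝 ((x₀, y₀), (x₀, y₀))) (𝓝 (x₀, y₀)) := tendsto_snd.fst_nhds
  have hw : Tendsto (fun q : S × (E₁ × E₂) × E₁ × E₂ => q.2.2)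
    (l ×ˢ 𝓝 ((x₀, y₀), (x₀, y₀))) (𝓝 (x₀, y₀)) := tendsto_snd.snd_nhds
  have hfst := (h₁.comp_tendsto ((hs.prodMk hw.snd_nhds).prodMk
    (hv.fst_nhds.prodMk_nhds hw.fst_nhds))).trans_isBigO
      (isBigO_fst_prod (g' := fun q : S × (E₁ × E₂) × E₁ × E₂ => q.2.1.2 - q.2.2.2))
  have hsnd := (h₂.comp_tendsto ((hs.prodMk hv.fst_nhds).prodMk
    (hv.snd_nhds.prodMk_nhds hw.snd_nhds))).trans_isBigO
      (isBigO_snd_prod (f' := fun q : S × (E₁ × E₂) × E₁ × E₂ => q.2.1.1 - q.2.2.1))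
  refine (hfst.add hsnd).congr_left fun q => ?_
  simp only [Function.comp_apply, ContinuousLinearMap.coprod_apply, Prod.fst_sub, Prod.snd_sub]
  abel

theorem comp_affine {E' : Type*} [NormedAddCommGroup E'] [NormedSpace 𝕜 E']
    {A : E →L[𝕜] F} {σ : E' → E} {i : E' →L[𝕜] E} {v₀ : E'} (hσ : ∀ v w, σ v - σ w = i (v - w))
    (h : HasUniformStrictFDerivAt G A l (σ v₀)) :
    HasUniformStrictFDerivAt (fun s v => G s (σ v)) (A ∘L i) l v₀ := by
  have hcont : Tendsto σ (𝓝 v₀) (𝓝 (σ v₀)) := by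
    rw [← tendsto_sub_nhds_zero_iff]
    simp only [hσ]
    exact Continuous.tendsto' (by fun_prop) _ _ (by simp)
  have hpair : Tendsto (fun q : S × E' × E' => (q.1, σ q.2.1, σ q.2.2))
      (l ×ˢ 𝓝 (v₀, v₀)) (l ×ˢ 𝓝 (σ v₀, σ v₀)) :=
    tendsto_fst.prodMk
      ((hcont.comp tendsto_snd.fst_nhds).prodMk_nhds (hcont.comp tendsto_snd.snd_nhds))
  have hcomp := h.comp_tendsto hpair
  simp only [Function.comp_def, hσ] at hcomp
  exact hcomp.trans_isBigO (i.isBigO_comp _ _)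

theorem isBigO_sub (h : HasUniformStrictFDerivAt G (A : E →L[𝕜] F) l w₀) :
    (fun q : S × E × E => q.2.1 - q.2.2) =O[l ×ˢ 𝓝 (w₀, w₀)]
      fun q => G q.1 q.2.1 - G q.1 q.2.2 := by
  have hA : (fun q : S × E × E => q.2.1 - q.2.2) =O[l ×ˢ 𝓝 (w₀, w₀)]
      fun q => A (q.2.1 - q.2.2) := A.isBigO_comp_rev _ _
  refine hA.trans ?_
  simpa using (h.trans_isBigO hA).right_isBigO_add

theorem eventually_injOn (h : HasUniformStrictFDerivAt G (A : E →L[𝕜] F) l w₀) :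
    ∃ t ∈ 𝓝 w₀, ∀ᶠ s in l, InjOn (G s) t := by
  obtain ⟨t, ht, hzero⟩ := exists_mem_nhds_forall_mem_of_eventually_prod
    (r := fun s v w => G s v - G s w = 0 → v - w = 0) h.isBigO_sub.eq_zero_imp
  exact ⟨t, ht, hzero.mono fun s hs v hv w hw heq =>
    sub_eq_zero.1 (hs v hv w hw (sub_eq_zero.2 heq))⟩

theorem eventually_approximatesLinearOn {A : E →L[𝕜] F}
    (h : HasUniformStrictFDerivAt G A l w₀) {c : ℝ≥0} (hc : 0 < c) :
    ∃ t ∈ 𝓝 w₀, ∀ᶠ s in l, ApproximatesLinearOn (G s) A t c :=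
  exists_mem_nhds_forall_mem_of_eventually_prod
    (r := fun s v w => ‖G s v - G s w - A (v - w)‖ ≤ c * ‖v - w‖) (h.bound hc)

theorem eventually_mem_image [CompleteSpace E]
    (h : HasUniformStrictFDerivAt G (A : E →L[𝕜] F) l w₀)
    (hy : Tendsto (fun s => G s w₀) l (𝓝 y)) {t : Set E} (ht : t ∈ 𝓝 w₀) :
    ∀ᶠ s in l, y ∈ G s '' t := by
  rcases A.subsingleton_or_nnnorm_symm_pos with hE | hN
  · have := A.symm.injective.subsingleton
    exact Eventually.of_forall fun s => ⟨w₀, mem_of_mem_nhds ht, Subsingleton.elim _ _⟩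
  set N := ‖(A.symm : F →L[𝕜] E)‖₊
  have hc : N⁻¹ / 2 < N⁻¹ := NNReal.half_lt_self (inv_ne_zero hN.ne')
  obtain ⟨u, hu, happrox⟩ := h.eventually_approximatesLinearOn (half_pos (inv_pos.2 hN))
  obtain ⟨ε, hε, hball⟩ := nhds_basis_closedBall.mem_iff.1 (inter_mem hu ht)
  have hgap : 0 < ((N : ℝ)⁻¹ - (N⁻¹ / 2 : ℝ≥0)) * ε := mul_pos (sub_pos.2 (mod_cast hc)) hε
  filter_upwards [happrox, hy (closedBall_mem_nhds y hgap)] with s hs hclose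
  have hsurj := hs.surjOn_closedBall_of_nonlinearRightInverse A.toNonlinearRightInverse hε.le
    (hball.trans inter_subset_left)
  exact image_mono (hball.trans inter_subset_right) (hsurj (mem_closedBall_comm.1 hclose))

theorem exists_implicitFunction [CompleteSpace E]
    (h : HasUniformStrictFDerivAt G (A : E →L[𝕜] F) l w₀)
    (hy : Tendsto (fun s => G s w₀) l (𝓝 y)) :
    ∃ w : S → E, Tendsto w l (𝓝 w₀) ∧ ∀ᶠ p in l ×ˢ 𝓝 w₀, G p.1 p.2 = y ↔ p.2 = w p.1 := by
  obtain ⟨t, ht, hinj⟩ := h.eventually_injOn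
  obtain ⟨w, hw⟩ := skolem.1 (h.eventually_mem_image hy ht)
  refine ⟨w, fun u hu => ?_, ?_⟩
  · rw [mem_map]
    filter_upwards [hinj, hw, h.eventually_mem_image hy (inter_mem hu ht)]
      with s hs hws ⟨v, hv, hGv⟩
    rw [mem_preimage, ← hs hv.2 hws.1 (hGv.trans hws.2.symm)]
    exact hv.1
  · filter_upwards [(hinj.and hw).prod_mk ht] with p ⟨⟨hs, hws⟩, hv⟩
    exact ⟨fun hp => hs hv hws.1 (hp.trans hws.2.symm), fun hp => hp ▸ hws.2⟩

theorem eventually_continuousWithinAt [TopologicalSpace S] {T : Set S} {s₀ : S} {w : S → E}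
    (h : HasUniformStrictFDerivAt G (A : E →L[𝕜] F) (𝓝[T] s₀) w₀)
    (hcont : ∀ᶠ p in 𝓝[T] s₀ ×ˢ 𝓝 w₀, ContinuousWithinAt (fun s => G s p.2) T p.1)
    (hw : Tendsto w (𝓝[T] s₀) (𝓝 w₀)) (hGw : ∀ᶠ s in 𝓝[T] s₀, G s (w s) = y) :
    ∀ᶠ s in 𝓝[T] s₀, ContinuousWithinAt w T s := by
  obtain ⟨c, hc⟩ := h.isBigO_sub.bound
  obtain ⟨t, ht, hct⟩ := exists_mem_nhds_forall_mem_of_eventually_prod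
    (r := fun s v w => ‖v - w‖ ≤ c * ‖G s v - G s w‖) hc
  have hgood := hct.and ((hw.eventually_mem ht).and hGw)
  filter_upwards [eventually_eventually_nhdsWithin.2 hgood, hgood,
    (tendsto_id.prodMk hw).eventually hcont] with s hnear ⟨_, hws, hys⟩ hGs
  have hlim : Tendsto (fun r => c * ‖y - G r (w s)‖) (𝓝[T] s) (𝓝 0) := by
    simpa [hys] using (hGs.tendsto.const_sub y).norm.const_mul c
  rw [ContinuousWithinAt, tendsto_iff_norm_sub_tendsto_zero]
  refine squeeze_zero' (Eventually.of_forall fun _ => norm_nonneg _) ?_ hlim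
  filter_upwards [hnear] with r ⟨hr, hwr, hyr⟩
  simpa only [hyr] using hr (w r) hwr (w s) hws

end HasUniformStrictFDerivAt

end UniformStrictDerivative

section MeanValue

variable {𝕜 E F P : Type*} [RCLike 𝕜]
  [NormedAddCommGroup E] [NormedSpace 𝕜 E] [NormedAddCommGroup F] [NormedSpace 𝕜 F]

theorem isLittleO_sub_of_hasFDerivAt_of_isLittleO {G : Type*} [NormedAddCommGroup G]
    {l : Filter P} {x₀ : E} {h : P → E → F} {h' : P → E → E →L[𝕜] F} {g : P → G}
    (hder : ∀ᶠ q in l ×ˢ 𝓝 x₀, HasFDerivAt (h q.1) (h' q.1 q.2) q.2)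
    (hh' : (fun q : P × E => h' q.1 q.2) =o[l ×ˢ 𝓝 x₀] fun q => g q.1) :
    (fun q : P × E × E => h q.1 q.2.1 - h q.1 q.2.2) =o[l ×ˢ 𝓝 (x₀, x₀)]
      fun q => ‖g q.1‖ * ‖q.2.1 - q.2.2‖ := by
  rw [isLittleO_iff]
  intro c hc
  obtain ⟨p, hp, B, hB, hball⟩ := eventually_prod_iff.1 (hder.and (hh'.bound hc))
  obtain ⟨ε, hε, hεB⟩ := eventually_nhds_iff_ball.1 hB
  filter_upwards [hp.prod_mk (prod_mem_nhds (ball_mem_nhds x₀ hε) (ball_mem_nhds x₀ hε))]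
    with ⟨s, x, y⟩ ⟨hs, hx, hy⟩
  let : NormedSpace ℝ E := .restrictScalars ℝ 𝕜 E
  have hmean := (convex_ball x₀ ε).norm_image_sub_le_of_norm_hasFDerivWithin_le
    (f := h s) (f' := h' s) (fun v hv => (hball hs (hεB v hv)).1.hasFDerivWithinAt)
    (fun v hv => show ‖h' s v‖ ≤ c * ‖g s‖ from (hball hs (hεB v hv)).2) hy hx
  simpa [mul_assoc] using hmean

theorem hasUniformStrictFDerivAt_of_hasFDerivAt_of_continuousAt [TopologicalSpace P]
    {f : P → E → F} {f' : P → E → E →L[𝕜] F} {p₀ : P} {x₀ : E}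
    (hder : ∀ᶠ q in 𝓝 (p₀, x₀), HasFDerivAt (f q.1) (f' q.1 q.2) q.2)
    (hcont : ContinuousAt (fun q : P × E => f' q.1 q.2) (p₀, x₀)) :
    HasUniformStrictFDerivAt f (f' p₀ x₀) (𝓝 p₀) x₀ := by
  rw [nhds_prod_eq] at hder
  have hsmall : (fun q : P × E => f' q.1 q.2 - f' p₀ x₀) =o[𝓝 p₀ ×ˢ 𝓝 x₀]
      fun _ => (1 : ℝ) := by
    rw [isLittleO_one_iff, ← nhds_prod_eq]
    exact tendsto_sub_nhds_zero_iff.2 hcont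
  have hmean := isLittleO_sub_of_hasFDerivAt_of_isLittleO
    (h := fun p x => f p x - f' p₀ x₀ x) (h' := fun p x => f' p x - f' p₀ x₀)
    (g := fun _ => (1 : ℝ))
    (hder.mono fun q hq => hq.sub (f' p₀ x₀).hasFDerivAt) hsmall
  refine (hmean.congr (fun q => ?_) fun q => ?_).of_norm_right
  · rw [map_sub]; abel
  · rw [norm_one, one_mul]

theorem hasUniformStrictFDerivAt_of_hasDerivAt_of_continuousAt [TopologicalSpace P]
    {f f' : P → 𝕜 → F} {p₀ : P} {t₀ : 𝕜}
    (hder : ∀ᶠ q in 𝓝 (p₀, t₀), HasDerivAt (f q.1) (f' q.1 q.2) q.2)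
    (hcont : ContinuousAt (fun q : P × 𝕜 => f' q.1 q.2) (p₀, t₀)) :
    HasUniformStrictFDerivAt f (.toSpanSingleton 𝕜 (f' p₀ t₀)) (𝓝 p₀) t₀ :=
  hasUniformStrictFDerivAt_of_hasFDerivAt_of_continuousAt
    (f' := fun p t => .toSpanSingleton 𝕜 (f' p t)) (hder.mono fun _ hq => hq.hasFDerivAt)
    (ContinuousLinearMap.toSpanSingletonCLE.continuous.continuousAt.comp hcont)

end MeanValue

section BlowUp

variable {𝕜 X Y : Type*} [RCLike 𝕜] [NormedAddCommGroup X] [NormedSpace 𝕜 X]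
  [NormedAddCommGroup Y] [NormedSpace 𝕜 Y] {F : 𝕜 × X → Y} {DxF DlDxF : 𝕜 × X → X →L[𝕜] Y}

theorem isLittleO_mixed_difference
    (htrivial : ∀ᶠ lam in 𝓝 0, F (lam, 0) = 0)
    (hDxF : ∀ᶠ p in 𝓝 (0, 0), HasFDerivAt (fun x => F (p.1, x)) (DxF p) p.2)
    (hDlDxF : ∀ᶠ p in 𝓝 (0, 0), HasDerivAt (fun lam => DxF (lam, p.2)) (DlDxF p) p.1)
    (hDlDxFcont : ContinuousAt DlDxF (0, 0)) :
    (fun q : (𝕜 × 𝕜) × X =>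
        F (q.1.1, q.2) - F (q.1.2, q.2) - (q.1.1 - q.1.2) • DlDxF (0, 0) q.2)
      =o[𝓝 ((0, 0), 0)] fun q => ‖q.1.1 - q.1.2‖ * ‖q.2‖ := by
  have hfst : Tendsto (fun q : (𝕜 × 𝕜) × X => (q.1.1, q.2)) (𝓝 ((0, 0), 0)) (𝓝 (0, 0)) :=
    Continuous.tendsto (by fun_prop) _
  have hsnd : Tendsto (fun q : (𝕜 × 𝕜) × X => (q.1.2, q.2)) (𝓝 ((0, 0), 0)) (𝓝 (0, 0)) :=
    Continuous.tendsto (by fun_prop) _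
  have hDxF_strict : HasUniformStrictFDerivAt (fun x lam => DxF (lam, x))
      (.toSpanSingleton 𝕜 (DlDxF (0, 0))) (𝓝 0) 0 :=
    hasUniformStrictFDerivAt_of_hasDerivAt_of_continuousAt (f' := fun x lam => DlDxF (lam, x))
      ((continuous_swap.tendsto ((0 : X), (0 : 𝕜))).eventually hDlDxF)
      (ContinuousAt.comp (f := Prod.swap) (x := ((0 : X), (0 : 𝕜))) hDlDxFcont
        continuous_swap.continuousAt)
  have hmean := isLittleO_sub_of_hasFDerivAt_of_isLittleO (g := fun r : 𝕜 × 𝕜 => r.1 - r.2)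
    (h := fun r x => F (r.1, x) - F (r.2, x) - (r.1 - r.2) • DlDxF (0, 0) x)
    (h' := fun r x => DxF (r.1, x) - DxF (r.2, x) - (r.1 - r.2) • DlDxF (0, 0))
    (by
      rw [← nhds_prod_eq]
      filter_upwards [hfst.eventually hDxF, hsnd.eventually hDxF] with q hlam hmu
      exact (hlam.sub hmu).sub ((DlDxF (0, 0)).hasFDerivAt.const_smul _))
    (hDxF_strict.comp_tendsto tendsto_prod_swap)
  have hbase : Tendsto (fun q : (𝕜 × 𝕜) × X => (q.1, q.2, (0 : X))) (𝓝 ((0, 0), 0))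
      (𝓝 (0, 0) ×ˢ 𝓝 (0, 0)) := by
    rw [← nhds_prod_eq]
    exact Continuous.tendsto (by fun_prop) _
  refine (hmean.comp_tendsto hbase).congr' ?_ (Eventually.of_forall fun q => by simp)
  filter_upwards [hfst.fst_nhds.eventually htrivial, hsnd.fst_nhds.eventually htrivial]
    with q hlam hmu
  simp [hlam, hmu]

/-- The rescaled map `(lam, x) ↦ s⁻¹ F(lam, s x)`, in which the trivial branch has been divided out.
The junk value at `s = 0` is `0`, so it is used along `𝓝[≠] 0`. -/
def blowUp (F : 𝕜 × X → Y) (s : 𝕜) (p : 𝕜 × X) : Y :=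
  s⁻¹ • F (p.1, s • p.2)

theorem hasUniformStrictFDerivAt_blowUp_snd
    (hDxF : ∀ᶠ p in 𝓝 (0, 0), HasFDerivAt (fun x => F (p.1, x)) (DxF p) p.2)
    (hDxFcont : ContinuousAt DxF (0, 0)) (x₀ : X) :
    HasUniformStrictFDerivAt (fun (r : 𝕜 × 𝕜) x => blowUp F r.1 (r.2, x)) (DxF (0, 0))
      (𝓝[≠] 0 ×ˢ 𝓝 0) x₀ := by
  have hF : HasUniformStrictFDerivAt (fun lam x => F (lam, x)) (DxF (0, 0)) (𝓝 0) 0 :=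
    hasUniformStrictFDerivAt_of_hasFDerivAt_of_continuousAt
      (f' := fun lam x => DxF (lam, x)) hDxF hDxFcont
  have hscale : Tendsto (fun q : (𝕜 × 𝕜) × X × X => (q.1.2, q.1.1 • q.2.1, q.1.1 • q.2.2))
      ((𝓝[≠] 0 ×ˢ 𝓝 0) ×ˢ 𝓝 (x₀, x₀)) (𝓝 0 ×ˢ 𝓝 (0, 0)) := by
    refine Tendsto.mono_left ?_ (prod_mono_left _ (prod_mono_left _ nhdsWithin_le_nhds))
    simp only [← nhds_prod_eq]
    exact Continuous.tendsto' (by fun_prop) _ _ (by simp)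
  have hs : ∀ᶠ q : (𝕜 × 𝕜) × X × X in (𝓝[≠] 0 ×ˢ 𝓝 0) ×ˢ 𝓝 (x₀, x₀), q.1.1 ≠ 0 :=
    (tendsto_fst.comp tendsto_fst).eventually self_mem_nhdsWithin
  refine ((isBigO_refl (fun q : (𝕜 × 𝕜) × X × X => q.1.1⁻¹) _).smul_isLittleO
    (hF.comp_tendsto hscale)).congr' ?_ ?_
  · filter_upwards [hs] with q hq
    simp only [blowUp, Function.comp_apply, smul_sub, ← map_smul, inv_smul_smul₀ hq]
  · filter_upwards [hs] with q hq
    simp only [Function.comp_apply, ← smul_sub, inv_smul_smul₀ hq]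

theorem isLittleO_blowUp_mixed_difference
    (htrivial : ∀ᶠ lam in 𝓝 0, F (lam, 0) = 0)
    (hDxF : ∀ᶠ p in 𝓝 (0, 0), HasFDerivAt (fun x => F (p.1, x)) (DxF p) p.2)
    (hDlDxF : ∀ᶠ p in 𝓝 (0, 0), HasDerivAt (fun lam => DxF (lam, p.2)) (DlDxF p) p.1)
    (hDlDxFcont : ContinuousAt DlDxF (0, 0)) (x₀ : X) :
    (fun q : (𝕜 × X) × 𝕜 × 𝕜 => blowUp F q.1.1 (q.2.1, q.1.2) - blowUp F q.1.1 (q.2.2, q.1.2)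
        - (q.2.1 - q.2.2) • DlDxF (0, 0) q.1.2)
      =o[(𝓝[≠] 0 ×ˢ 𝓝 x₀) ×ˢ 𝓝 (0, 0)] fun q => ‖q.2.1 - q.2.2‖ * ‖q.1.2‖ := by
  have hs : ∀ᶠ q : (𝕜 × X) × 𝕜 × 𝕜 in (𝓝[≠] 0 ×ˢ 𝓝 x₀) ×ˢ 𝓝 (0, 0), q.1.1 ≠ 0 :=
    (tendsto_fst.comp tendsto_fst).eventually self_mem_nhdsWithin
  have hscale : Tendsto (fun q : (𝕜 × X) × 𝕜 × 𝕜 => (q.2, q.1.1 • q.1.2))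
      ((𝓝[≠] 0 ×ˢ 𝓝 x₀) ×ˢ 𝓝 (0, 0)) (𝓝 ((0, 0), 0)) := by
    refine Tendsto.mono_left ?_ (prod_mono_left _ (prod_mono_left _ nhdsWithin_le_nhds))
    simp only [← nhds_prod_eq]
    exact Continuous.tendsto' (by fun_prop) _ _ (by simp)
  refine ((isBigO_refl (fun q : (𝕜 × X) × 𝕜 × 𝕜 => q.1.1⁻¹) _).norm_right.smul_isLittleO
    ((isLittleO_mixed_difference htrivial hDxF hDlDxF hDlDxFcont).comp_tendsto
      hscale)).congr' ?_ ?_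
  · filter_upwards [hs] with q hq
    simp only [blowUp, Function.comp_apply, map_smul, smul_sub,
      smul_comm (q.2.1 - q.2.2) q.1.1, inv_smul_smul₀ hq]
  · filter_upwards [hs] with q hq
    simp only [Function.comp_apply, norm_smul, norm_inv, smul_eq_mul]
    field_simp

theorem hasUniformStrictFDerivAt_blowUp_fst
    (htrivial : ∀ᶠ lam in 𝓝 0, F (lam, 0) = 0)
    (hDxF : ∀ᶠ p in 𝓝 (0, 0), HasFDerivAt (fun x => F (p.1, x)) (DxF p) p.2)
    (hDlDxF : ∀ᶠ p in 𝓝 (0, 0), HasDerivAt (fun lam => DxF (lam, p.2)) (DlDxF p) p.1)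
    (hDlDxFcont : ContinuousAt DlDxF (0, 0)) (x₀ : X) :
    HasUniformStrictFDerivAt (fun (r : 𝕜 × X) lam => blowUp F r.1 (lam, r.2))
      (.toSpanSingleton 𝕜 (DlDxF (0, 0) x₀)) (𝓝[≠] 0 ×ˢ 𝓝 x₀) 0 := by
  set l : Filter ((𝕜 × X) × 𝕜 × 𝕜) := (𝓝[≠] 0 ×ˢ 𝓝 x₀) ×ˢ 𝓝 (0, 0)
  have hx : Tendsto (fun q : (𝕜 × X) × 𝕜 × 𝕜 => q.1.2) l (𝓝 x₀) := tendsto_snd.comp tendsto_fst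
  have hmixed := (isLittleO_blowUp_mixed_difference htrivial hDxF hDlDxF hDlDxFcont
    x₀).trans_isBigO ((isBigO_refl _ l).mul (hx.isBigO_one ℝ).norm_left)
  have hbase : (fun q : (𝕜 × X) × 𝕜 × 𝕜 => DlDxF (0, 0) (q.1.2 - x₀)) =o[l]
      fun _ => (1 : ℝ) :=
    ((DlDxF (0, 0)).isBigO_comp _ l).trans_isLittleO
      ((isLittleO_one_iff ℝ).2 (tendsto_sub_nhds_zero_iff.2 hx))
  have hlam : (fun q : (𝕜 × X) × 𝕜 × 𝕜 => q.2.1 - q.2.2) =O[l] fun q => ‖q.2.1 - q.2.2‖ :=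
    (isBigO_refl _ l).norm_right
  have hsum := hmixed.add (hlam.smul_isLittleO hbase)
  simp only [mul_one] at hsum
  refine hsum.of_norm_right.congr_left fun q => ?_
  simp only [ContinuousLinearMap.toSpanSingleton_apply, map_sub]
  module

theorem hasUniformStrictFDerivAt_blowUp
    (htrivial : ∀ᶠ lam in 𝓝 0, F (lam, 0) = 0)
    (hDxF : ∀ᶠ p in 𝓝 (0, 0), HasFDerivAt (fun x => F (p.1, x)) (DxF p) p.2)
    (hDxFcont : ContinuousAt DxF (0, 0))
    (hDlDxF : ∀ᶠ p in 𝓝 (0, 0), HasDerivAt (fun lam => DxF (lam, p.2)) (DlDxF p) p.1)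
    (hDlDxFcont : ContinuousAt DlDxF (0, 0)) (x₀ : X) :
    HasUniformStrictFDerivAt (blowUp F)
      ((ContinuousLinearMap.toSpanSingleton 𝕜 (DlDxF (0, 0) x₀)).coprod (DxF (0, 0)))
      (𝓝[≠] 0) (0, x₀) :=
  (hasUniformStrictFDerivAt_blowUp_fst htrivial hDxF hDlDxF hDlDxFcont x₀).coprod
    (hasUniformStrictFDerivAt_blowUp_snd hDxF hDxFcont x₀)

theorem tendsto_blowUp (hzero : F (0, 0) = 0)
    (hDxF : HasFDerivAt (fun x => F (0, x)) (DxF (0, 0)) 0) (x₀ : X) :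
    Tendsto (fun s => blowUp F s (0, x₀)) (𝓝[≠] 0) (𝓝 (DxF (0, 0) x₀)) := by
  simpa [blowUp, hzero] using (hDxF.hasLineDerivAt x₀).tendsto_slope_zero

theorem eventually_continuousWithinAt_blowUp
    (hDxF : ∀ᶠ p in 𝓝 (0, 0), HasFDerivAt (fun x => F (p.1, x)) (DxF p) p.2) (x₀ : X) :
    ∀ᶠ q in 𝓝[≠] 0 ×ˢ 𝓝 (0, x₀), ContinuousWithinAt (fun s => blowUp F s q.2) {0}ᶜ q.1 := by
  have hscale : Tendsto (fun q : 𝕜 × 𝕜 × X => (q.2.1, q.1 • q.2.2)) (𝓝[≠] 0 ×ˢ 𝓝 (0, x₀))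
      (𝓝 (0, 0)) := by
    refine Tendsto.mono_left ?_ (prod_mono_left _ nhdsWithin_le_nhds)
    rw [← nhds_prod_eq]
    exact Continuous.tendsto' (by fun_prop) _ _ (by simp)
  filter_upwards [hscale.eventually hDxF, tendsto_fst.eventually self_mem_nhdsWithin] with q hF hq
  refine ContinuousAt.continuousWithinAt ((continuousAt_inv₀ hq).smul ?_)
  exact hF.continuousAt.comp (f := fun s : 𝕜 => s • q.2.2) (by fun_prop)

end BlowUp

section Complements

theorem isCompl_span_singleton_of_finrank_quotient_eq_one {K V : Type*} [DivisionRing K]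
    [AddCommGroup V] [Module K V] {R : Submodule K V} (hR : Module.finrank K (V ⧸ R) = 1) {y : V}
    (hy : y ∉ R) :
    IsCompl (K ∙ y) R :=
  (Submodule.isCompl_span_singleton_of_isCoatom_of_notMem
    (isSimpleModule_iff_isCoatom.1 (isSimpleModule_iff_finrank_eq_one.2 hR)) hy).symm

theorem exists_continuousLinearEquiv_smul_add {𝕜 E F : Type*} [NontriviallyNormedField 𝕜]
    [CompleteSpace 𝕜] [NormedAddCommGroup E] [NormedSpace 𝕜 E] [CompleteSpace E]
    [NormedAddCommGroup F] [NormedSpace 𝕜 F] [CompleteSpace F] {y : F} {g : E →L[𝕜] F}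
    (hy : y ≠ 0) (hg : Function.Injective g) (h : IsCompl (𝕜 ∙ y) g.range) :
    ∃ e : (𝕜 × E) ≃L[𝕜] F, ∀ v, e v = v.1 • y + g v.2 := by
  rw [← LinearMap.range_toSpanSingleton] at h
  have hker : ((ContinuousLinearMap.toSpanSingleton 𝕜 y).coprod g).ker = ⊥ := by
    rw [ContinuousLinearMap.ker_coprod_of_disjoint_range h.disjoint, LinearMap.ker_eq_bot.2 hg,
      ContinuousLinearMap.toLinearMap_toSpanSingleton,
      LinearMap.ker_toSpanSingleton 𝕜 hy, Submodule.prod_bot]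
  have hrange : ((ContinuousLinearMap.toSpanSingleton 𝕜 y).coprod g).range = ⊤ := by
    rw [ContinuousLinearMap.range_coprod, ← h.sup_eq_top]
    rfl
  exact ⟨.ofBijective _ hker hrange, fun v => rfl⟩

theorem range_comp_subtype_of_codisjoint_ker {R V W : Type*} [Ring R] [AddCommGroup V] [Module R V]
    [AddCommGroup W] [Module R W] {f : V →ₗ[R] W} {p : Submodule R V}
    (h : Codisjoint p f.ker) : (f ∘ₗ p.subtype).range = f.range := by
  rw [LinearMap.range_comp, Submodule.range_subtype, Submodule.map_eq_range_iff.2 h]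

theorem exists_continuousLinearEquiv_smul_add_restrict {𝕜 X Y : Type*}
    [NontriviallyNormedField 𝕜] [CompleteSpace 𝕜] [NormedAddCommGroup X] [NormedSpace 𝕜 X]
    [NormedAddCommGroup Y] [NormedSpace 𝕜 Y] [CompleteSpace Y] {L : X →L[𝕜] Y} {y : Y}
    {Z : Submodule 𝕜 X} [CompleteSpace Z] (hL : Module.finrank 𝕜 (Y ⧸ L.range) = 1)
    (hy : y ∉ L.range) (hZ : IsCompl L.ker Z) :
    ∃ A : (𝕜 × Z) ≃L[𝕜] Y, ∀ v, A v = v.1 • y + L v.2 := by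
  refine exists_continuousLinearEquiv_smul_add (g := L ∘L Z.subtypeL)
    (ne_of_mem_of_not_mem L.range.zero_mem hy).symm
    (LinearMap.injective_domRestrict_iff.2 hZ.symm.disjoint) ?_
  rw [show (L ∘L Z.subtypeL).range = L.range from
    range_comp_subtype_of_codisjoint_ker hZ.symm.codisjoint]
  exact isCompl_span_singleton_of_finrank_quotient_eq_one hL hy

end Complements

section ZeroCone

variable {𝕜 X Y E : Type*} [NontriviallyNormedField 𝕜] [NormedAddCommGroup X] [NormedSpace 𝕜 X]
  [NormedAddCommGroup Y] [NormedSpace 𝕜 Y] [NormedAddCommGroup E] [NormedSpace 𝕜 E]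

theorem isLittleO_apply_snd_of_zeros {F : 𝕜 × X → Y} {L : X →L[𝕜] Y}
    (htrivial : ∀ᶠ lam in 𝓝 0, F (lam, 0) = 0)
    (hF : HasUniformStrictFDerivAt (fun lam x => F (lam, x)) L (𝓝 0) 0) :
    (fun p : 𝕜 × X => L p.2) =o[𝓝 (0, 0) ⊓ 𝓟 {p | F p = 0}] fun p => p.2 := by
  have hbase : Tendsto (fun p : 𝕜 × X => (p.1, p.2, (0 : X))) (𝓝 (0, 0))
      (𝓝 0 ×ˢ 𝓝 (0, 0)) := by
    rw [← nhds_prod_eq]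
    exact Continuous.tendsto (by fun_prop) _
  refine ((hF.comp_tendsto hbase).mono inf_le_left).neg_left.congr' ?_
    (Eventually.of_forall fun p => by simp)
  have htrivial' := (continuous_fst.tendsto ((0 : 𝕜), (0 : X))).eventually htrivial
  filter_upwards [mem_inf_of_left htrivial', mem_inf_of_right (mem_principal_self _)]
    with p hp (hFp : F (p.1, p.2) = 0)
  simp [hp, hFp]

-- In the applications `B (t, z) = t • x₀ + z` and `A (t, z) = t • M x₀ + L z`; in these coordinates
-- `L` is the projection `(t, z) ↦ (0, z)`.
theorem isLittleO_snd_of_isLittleO_apply {L : X →L[𝕜] Y} {B : (𝕜 × E) ≃L[𝕜] X}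
    {A : (𝕜 × E) ≃L[𝕜] Y} (hL : ∀ v, L (B v) = A (0, v.2)) {α : Type*} {l : Filter α} {x : α → X}
    (hx : (fun a => L (x a)) =o[l] x) :
    (fun a => (B.symm (x a)).2) =o[l] fun a => (B.symm (x a)).1 := by
  have hLx : ∀ a, L (x a) = A (0, (B.symm (x a)).2) := fun a => by
    rw [← hL, B.apply_symm_apply]
  simp only [hLx] at hx
  have hsnd : (fun a => ((0 : 𝕜), (B.symm (x a)).2)) =o[l] fun a => B.symm (x a) :=
    ((A.isBigO_comp_rev _ l).trans_isLittleO hx).trans_isBigO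
      (B.symm.isBigO_comp_rev _ l)
  have hfst : (fun a => B.symm (x a)) =O[l] fun a => (B.symm (x a)).1 := by
    refine hsnd.right_isBigO_sub.trans (isBigO_of_le l fun a => ?_)
    simp [Prod.norm_def]
  exact (isBigO_snd_prod.trans_isLittleO hsnd).trans_isBigO hfst

theorem eventually_eq_smul_of_isLittleO {S : Set (𝕜 × X)} {B : (𝕜 × E) ≃L[𝕜] X} {w : 𝕜 → 𝕜 × E}
    (hcone : (fun p : 𝕜 × X => (B.symm p.2).2) =o[𝓝 (0, 0) ⊓ 𝓟 S] fun p => (B.symm p.2).1)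
    (hw : ∀ᶠ q in 𝓝[≠] 0 ×ˢ 𝓝 0, (q.2.1, q.1 • B (1, q.2.2)) ∈ S → q.2 = w q.1) :
    ∀ᶠ p in 𝓝 (0, 0), p ∈ S → (B.symm p.2).1 ≠ 0 →
      p = ((w (B.symm p.2).1).1, (B.symm p.2).1 • B (1, (w (B.symm p.2).1).2)) := by
  set s : 𝕜 × X → 𝕜 := fun p => (B.symm p.2).1
  set l : Filter (𝕜 × X) := 𝓝 (0, 0) ⊓ 𝓟 S ⊓ 𝓟 {p | s p ≠ 0}
  have hl : l ≤ 𝓝 (0, 0) := inf_le_left.trans inf_le_left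
  have hs : Tendsto s l (𝓝[≠] 0) :=
    tendsto_nhdsWithin_iff.2 ⟨(Continuous.tendsto' (by fun_prop) _ _ (by simp [s])).mono_left hl,
      mem_inf_of_right (mem_principal_self _)⟩
  have hratio : Tendsto (fun p => (p.1, (s p)⁻¹ • (B.symm p.2).2)) l (𝓝 0) :=
    ((continuous_fst.tendsto _).mono_left hl).prodMk_nhds
      (hcone.mono inf_le_left).tendsto_inv_smul_nhds_zero
  have hnear := (hs.prodMk hratio).eventually hw
  simp only [l, eventually_inf_principal] at hnear
  filter_upwards [hnear] with p hp hpS hsp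
  have hp₂ : s p • B (1, (s p)⁻¹ • (B.symm p.2).2) = p.2 := by
    rw [← map_smul, Prod.smul_mk, smul_inv_smul₀ hsp, smul_eq_mul, mul_one]
    exact B.apply_symm_apply p.2
  rw [← hp hpS hsp (by rwa [hp₂]), hp₂]

end ZeroCone

section Branch

variable {𝕜 X Y : Type*} [RCLike 𝕜] [NormedAddCommGroup X] [NormedSpace 𝕜 X]
  [NormedAddCommGroup Y] [NormedSpace 𝕜 Y] {F : 𝕜 × X → Y} {DxF DlDxF : 𝕜 × X → X →L[𝕜] Y}
  {E : Type*} [NormedAddCommGroup E] [NormedSpace 𝕜 E]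

theorem exists_implicitFunction_blowUp [CompleteSpace E] {B : (𝕜 × E) ≃L[𝕜] X} {A : (𝕜 × E) ≃L[𝕜] Y}
    (htrivial : ∀ᶠ lam in 𝓝 0, F (lam, 0) = 0)
    (hDxF : ∀ᶠ p in 𝓝 (0, 0), HasFDerivAt (fun x => F (p.1, x)) (DxF p) p.2)
    (hDxFcont : ContinuousAt DxF (0, 0))
    (hDlDxF : ∀ᶠ p in 𝓝 (0, 0), HasDerivAt (fun lam => DxF (lam, p.2)) (DlDxF p) p.1)
    (hDlDxFcont : ContinuousAt DlDxF (0, 0))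
    (hL : ∀ v, DxF (0, 0) (B v) = A (0, v.2)) (hM : DlDxF (0, 0) (B (1, 0)) = A (1, 0)) :
    ∃ w : 𝕜 → 𝕜 × E, Tendsto w (𝓝[≠] 0) (𝓝 0) ∧
      (∀ᶠ s in 𝓝[≠] 0, ContinuousWithinAt w {0}ᶜ s) ∧
      ∀ᶠ q in 𝓝[≠] 0 ×ˢ 𝓝 0, F (q.2.1, q.1 • B (1, q.2.2)) = 0 ↔ q.2 = w q.1 := by
  set σ : 𝕜 × E → 𝕜 × X := fun v => (v.1, B (1, v.2))
  have hσ : ∀ v w, σ v - σ w = ContinuousLinearMap.prod (.fst 𝕜 𝕜 E)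
      ((B : 𝕜 × E →L[𝕜] X) ∘L .inr 𝕜 𝕜 E ∘L .snd 𝕜 𝕜 E) (v - w) := fun v w => by
    simp [σ, ← map_sub]
  have hσcont : Continuous σ := by fun_prop
  have hstrict : HasUniformStrictFDerivAt (fun s v => blowUp F s (σ v))
      (A : 𝕜 × E →L[𝕜] Y) (𝓝[≠] 0) 0 := by
    convert (hasUniformStrictFDerivAt_blowUp htrivial hDxF hDxFcont hDlDxF hDlDxFcont
      (B (1, 0))).comp_affine (v₀ := 0) hσ
    ext v <;> simp [hL, hM]
  have hlim : Tendsto (fun s => blowUp F s (σ 0)) (𝓝[≠] 0) (𝓝 0) := by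
    have := tendsto_blowUp htrivial.self_of_nhds hDxF.self_of_nhds (B (1, 0))
    rwa [hL, Prod.mk_zero_zero, map_zero] at this
  have hcont : ∀ᶠ q in 𝓝[≠] 0 ×ˢ 𝓝 0,
      ContinuousWithinAt (fun s => blowUp F s (σ q.2)) {0}ᶜ q.1 :=
    (tendsto_id.prodMap (hσcont.tendsto 0)).eventually
      (eventually_continuousWithinAt_blowUp hDxF (B (1, 0)))
  obtain ⟨w, hw, hzero⟩ := hstrict.exists_implicitFunction hlim
  refine ⟨w, hw, hstrict.eventually_continuousWithinAt (y := 0) hcont hw ?_, ?_⟩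
  · filter_upwards [(tendsto_id.prodMk hw).eventually hzero] with s hs
    exact hs.2 rfl
  · filter_upwards [hzero, tendsto_fst.eventually self_mem_nhdsWithin] with q hq hs
    rw [← hq, blowUp, smul_eq_zero_iff_right (inv_ne_zero hs)]

theorem exists_branch_eventually_zero_iff [CompleteSpace E] {B : (𝕜 × E) ≃L[𝕜] X}
    {A : (𝕜 × E) ≃L[𝕜] Y}
    (htrivial : ∀ᶠ lam in 𝓝 0, F (lam, 0) = 0)
    (hDxF : ∀ᶠ p in 𝓝 (0, 0), HasFDerivAt (fun x => F (p.1, x)) (DxF p) p.2)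
    (hDxFcont : ContinuousAt DxF (0, 0))
    (hDlDxF : ∀ᶠ p in 𝓝 (0, 0), HasDerivAt (fun lam => DxF (lam, p.2)) (DlDxF p) p.1)
    (hDlDxFcont : ContinuousAt DlDxF (0, 0))
    (hL : ∀ v, DxF (0, 0) (B v) = A (0, v.2)) (hM : DlDxF (0, 0) (B (1, 0)) = A (1, 0)) :
    ∃ w : 𝕜 → 𝕜 × E, w 0 = 0 ∧ (∀ᶠ s in 𝓝 0, ContinuousAt w s) ∧
      ∀ᶠ p in 𝓝 (0, 0), F p = 0 ↔ p.2 = 0 ∨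
        p = ((w (B.symm p.2).1).1, (B.symm p.2).1 • B (1, (w (B.symm p.2).1).2)) := by
  obtain ⟨w, hw, hwcont, hzero⟩ :=
    exists_implicitFunction_blowUp htrivial hDxF hDxFcont hDlDxF hDlDxFcont hL hM
  have hcone : (fun p : 𝕜 × X => (B.symm p.2).2) =o[𝓝 (0, 0) ⊓ 𝓟 {p | F p = 0}]
      fun p => (B.symm p.2).1 :=
    isLittleO_snd_of_isLittleO_apply hL (isLittleO_apply_snd_of_zeros htrivial
      (hasUniformStrictFDerivAt_of_hasFDerivAt_of_continuousAt
        (f' := fun lam x => DxF (lam, x)) hDxF hDxFcont))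
  have hs : Tendsto (fun p : 𝕜 × X => (B.symm p.2).1) (𝓝 (0, 0)) (𝓝 0) :=
    Continuous.tendsto' (by fun_prop) _ _ (by simp)
  have hFw : ∀ᶠ s in 𝓝 0, s ≠ 0 → F ((w s).1, s • B (1, (w s).2)) = 0 := by
    refine eventually_nhdsWithin_iff.1 ?_
    filter_upwards [(tendsto_id.prodMk hw).eventually hzero] with s hs
    exact hs.2 rfl
  refine ⟨Function.update w 0 0, Function.update_self .., ?_, ?_⟩
  · filter_upwards [eventually_nhdsWithin_iff.1 hwcont] with s hs
    rcases eq_or_ne s 0 with rfl | hs₀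
    · exact continuousAt_update_same.2 hw
    · exact (continuousAt_update_of_ne hs₀).2
        ((hs hs₀).continuousAt (isOpen_compl_singleton.mem_nhds hs₀))
  · filter_upwards [hs.eventually hFw, (continuous_fst.tendsto _).eventually htrivial,
      eventually_inf_principal.1 hcone.isBigO.eq_zero_imp,
      eventually_eq_smul_of_isLittleO hcone (hzero.mono fun q => Iff.mp)]
      with p hFw htriv hcone hzero
    have hline : p.2 = 0 → F p = 0 := fun hp => by rwa [← hp] at htriv
    rcases eq_or_ne (B.symm p.2).1 0 with hs₀ | hs₀
    · refine ⟨fun hFp => Or.inl (B.symm.map_eq_zero_iff.1 (Prod.ext hs₀ (hcone hFp hs₀))), ?_⟩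
      rintro (hp | hp)
      · exact hline hp
      · exact hline ((congrArg Prod.snd hp).trans (by rw [hs₀, zero_smul]))
    · rw [Function.update_of_ne hs₀]
      refine ⟨fun hFp => Or.inr (hzero hFp hs₀), ?_⟩
      rintro (hp | hp)
      · exact hline hp
      · exact (congrArg F hp).trans (hFw hs₀)

theorem exists_nhds_inter_zeros_eq_branch_union [CompleteSpace E] {B : (𝕜 × E) ≃L[𝕜] X}
    {A : (𝕜 × E) ≃L[𝕜] Y} {W : Set (𝕜 × X)} (hW : W ∈ 𝓝 (0, 0))
    (htrivial : ∀ᶠ lam in 𝓝 0, F (lam, 0) = 0)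
    (hDxF : ∀ᶠ p in 𝓝 (0, 0), HasFDerivAt (fun x => F (p.1, x)) (DxF p) p.2)
    (hDxFcont : ContinuousAt DxF (0, 0))
    (hDlDxF : ∀ᶠ p in 𝓝 (0, 0), HasDerivAt (fun lam => DxF (lam, p.2)) (DlDxF p) p.1)
    (hDlDxFcont : ContinuousAt DlDxF (0, 0))
    (hL : ∀ v, DxF (0, 0) (B v) = A (0, v.2)) (hM : DlDxF (0, 0) (B (1, 0)) = A (1, 0)) :
    ∃ U ∈ 𝓝 ((0 : 𝕜), (0 : X)), U ⊆ W ∧ ∃ a : ℝ, 0 < a ∧ ∃ w : 𝕜 → 𝕜 × E,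
      ContinuousOn w (ball 0 a) ∧ w 0 = 0 ∧
      U ∩ {p | F p = 0} =
        (fun s => ((w s).1, s • B (1, (w s).2))) '' ball 0 a ∪ U ∩ {p | p.2 = 0} := by
  obtain ⟨w, hw₀, hwcont, hzero⟩ :=
    exists_branch_eventually_zero_iff htrivial hDxF hDxFcont hDlDxF hDlDxFcont hL hM
  obtain ⟨r, hr, hwr⟩ := eventually_nhds_iff_ball.1 hwcont
  set γ : 𝕜 → 𝕜 × X := fun s => ((w s).1, s • B (1, (w s).2))
  have hγ₀ : γ 0 = (0, 0) := by simp [γ, hw₀]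
  have hγ : ContinuousAt γ 0 := by
    have := hwcont.self_of_nhds
    fun_prop
  rw [← hγ₀] at hW hzero ⊢
  obtain ⟨U, hU, hUW, a, ha, har, hUS⟩ := exists_mem_nhds_inter_eq_image_ball_union
    (S := {p | F p = 0}) (L := {p | p.2 = 0}) (π := fun p => (B.symm p.2).1)
    hr hW (by fun_prop) hγ (fun s => by simp [γ]) hzero
  exact ⟨U, hU, hUW, a, ha, w,
    fun s hs => (hwr s (ball_subset_ball har hs)).continuousWithinAt, hw₀, hUS⟩

end Branch

theorem crandall_rabinowitz_general {𝕜 X Y : Type*} [RCLike 𝕜]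
    [NormedAddCommGroup X] [NormedSpace 𝕜 X] [CompleteSpace X]
    [NormedAddCommGroup Y] [NormedSpace 𝕜 Y] [CompleteSpace Y]
    {F : 𝕜 × X → Y} {DxF DlDxF : 𝕜 × X → X →L[𝕜] Y} {x₀ : X} {Z : Submodule 𝕜 X}
    {W : Set (𝕜 × X)} (hW : W ∈ 𝓝 (0, 0))
    (htrivial : ∀ᶠ lam in 𝓝 0, F (lam, 0) = 0)
    (hDxF : ∀ᶠ p in 𝓝 (0, 0), HasFDerivAt (fun x => F (p.1, x)) (DxF p) p.2)
    (hDxFcont : ContinuousAt DxF (0, 0))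
    (hDlDxF : ∀ᶠ p in 𝓝 (0, 0), HasDerivAt (fun lam => DxF (lam, p.2)) (DlDxF p) p.1)
    (hDlDxFcont : ContinuousAt DlDxF (0, 0))
    (hker : (DxF (0, 0)).ker = 𝕜 ∙ x₀)
    (hcodim : Module.finrank 𝕜 (Y ⧸ (DxF (0, 0)).range) = 1)
    (htrans : DlDxF (0, 0) x₀ ∉ (DxF (0, 0)).range)
    (hZclosed : IsClosed (Z : Set X)) (hcompl : IsCompl (𝕜 ∙ x₀) Z) :
    ∃ U ∈ 𝓝 ((0 : 𝕜), (0 : X)), U ⊆ W ∧ ∃ a : ℝ, 0 < a ∧ ∃ φ : 𝕜 → 𝕜, ∃ ψ : 𝕜 → X,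
      ContinuousOn φ (ball 0 a) ∧ ContinuousOn ψ (ball 0 a) ∧ (∀ e ∈ ball 0 a, ψ e ∈ Z) ∧
      φ 0 = 0 ∧ ψ 0 = 0 ∧
      {p | p ∈ U ∧ F p = 0} =
        {p | ∃ e ∈ ball 0 a, p = (φ e, e • x₀ + e • ψ e)} ∪ {p | p ∈ U ∧ p.2 = 0} := by
  have := hZclosed.completeSpace_coe
  have hx₀ : x₀ ≠ 0 := by
    rintro rfl
    exact htrans (map_zero (DlDxF (0, 0)) ▸ zero_mem _)
  obtain ⟨B, hB⟩ : ∃ B : (𝕜 × Z) ≃L[𝕜] X, ∀ v, B v = v.1 • x₀ + v.2 :=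
    exists_continuousLinearEquiv_smul_add (g := Z.subtypeL) hx₀ Subtype.val_injective
      (Z.range_subtype.symm ▸ hcompl)
  obtain ⟨A, hA⟩ := exists_continuousLinearEquiv_smul_add_restrict hcodim htrans (hker ▸ hcompl)
  have hLx₀ : DxF (0, 0) x₀ = 0 :=
    LinearMap.mem_ker.1 (hker ▸ Submodule.mem_span_singleton_self x₀)
  obtain ⟨U, hU, hUW, a, ha, w, hw, hw₀, hUzero⟩ := exists_nhds_inter_zeros_eq_branch_union
    (B := B) (A := A) hW htrivial hDxF hDxFcont hDlDxF hDlDxFcont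
    (fun v => by simp [hA, hB, hLx₀]) (by simp [hA, hB])
  refine ⟨U, hU, hUW, a, ha, fun s => (w s).1, fun s => (w s).2, by fun_prop, by fun_prop,
    fun s _ => (w s).2.2, by simp [hw₀], by simp [hw₀], hUzero.trans ?_⟩
  congr 1
  ext p
  simp [hB, eq_comm]

/-- Crandall–Rabinowitz bifurcation theorem: let `X, Y` be real Banach spaces,
`V` a neighborhood of `0` in `X` and `F : ℝ × V → Y` with `F(λ,0) = 0` for all
`λ`, `F` of class `C¹` with continuous partial derivative `DxF` in `x` and
continuous mixed derivative `DλDxF`; assume the kernel of `L₀ = DxF(0,0)` is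
one-dimensional, spanned by `x₀`, the range of `L₀` is closed of codimension
one, and the transversality condition `DλDxF(0,0)x₀ ∉ R(L₀)` holds.  Then for
any closed complement `Z` of `span{x₀}` there are a neighborhood `U` of
`(0,0)`, a number `a > 0` and continuous functions `φ : (-a,a) → ℝ`,
`ψ : (-a,a) → Z` with `φ(0) = 0`, `ψ(0) = 0`, such that
`F⁻¹(0) ∩ U = {(φ(ε), ε x₀ + ε ψ(ε)) : |ε| < a} ∪ {(λ,0) ∈ U}`. -/
theorem crandall_rabinowitz
    {X Y : Type*} [NormedAddCommGroup X] [NormedSpace ℝ X] [CompleteSpace X]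
    [NormedAddCommGroup Y] [NormedSpace ℝ Y] [CompleteSpace Y]
    (V : Set X) (hV : V ∈ nhds (0 : X))
    (F : ℝ × X → Y)
    (htrivial : ∀ lam : ℝ, F (lam, 0) = 0)
    (hC1 : ContDiffOn ℝ 1 F {p : ℝ × X | p.2 ∈ V})
    (DxF : ℝ × X → X →L[ℝ] Y)
    (hDxF : ∀ p : ℝ × X, p.2 ∈ V → HasFDerivAt (fun x => F (p.1, x)) (DxF p) p.2)
    (hDxFcont : ContinuousOn DxF {p : ℝ × X | p.2 ∈ V})
    (DlDxF : ℝ × X → X →L[ℝ] Y)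
    (hDlDxF : ∀ p : ℝ × X, p.2 ∈ V →
      HasDerivAt (fun lam : ℝ => DxF (lam, p.2)) (DlDxF p) p.1)
    (hDlDxFcont : ContinuousOn DlDxF {p : ℝ × X | p.2 ∈ V})
    (x₀ : X) (hx₀ : x₀ ≠ 0)
    (hker : LinearMap.ker (DxF (0, 0) : X →ₗ[ℝ] Y) = Submodule.span ℝ {x₀})
    (hclosed : IsClosed (LinearMap.range (DxF (0, 0) : X →ₗ[ℝ] Y) : Set Y))
    (hcodim : Module.finrank ℝ (Y ⧸ LinearMap.range (DxF (0, 0) : X →ₗ[ℝ] Y)) = 1)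
    (htrans : DlDxF (0, 0) x₀ ∉ LinearMap.range (DxF (0, 0) : X →ₗ[ℝ] Y))
    (Z : Submodule ℝ X) (hZclosed : IsClosed (Z : Set X))
    (hcompl : IsCompl (Submodule.span ℝ {x₀}) Z) :
    ∃ U ∈ nhds ((0 : ℝ), (0 : X)), (∀ p ∈ U, p.2 ∈ V) ∧
    ∃ a : ℝ, 0 < a ∧ ∃ φ : ℝ → ℝ, ∃ ψ : ℝ → X,
      ContinuousOn φ (Set.Ioo (-a) a) ∧
      ContinuousOn ψ (Set.Ioo (-a) a) ∧
      (∀ e ∈ Set.Ioo (-a) a, ψ e ∈ Z) ∧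
      φ 0 = 0 ∧ ψ 0 = 0 ∧
      {p : ℝ × X | p ∈ U ∧ F p = 0} =
        {p : ℝ × X | ∃ e : ℝ, e ∈ Set.Ioo (-a) a ∧ p = (φ e, e • x₀ + e • ψ e)}
          ∪ {p : ℝ × X | p ∈ U ∧ p.2 = 0} := by
  have hW : {p : ℝ × X | p.2 ∈ V} ∈ 𝓝 (0, 0) := continuous_snd.continuousAt.preimage_mem_nhds hV
  simpa only [Real.ball_zero_eq_Ioo, subset_def, mem_ofPred_eq] using
    crandall_rabinowitz_general hW (Eventually.of_forall htrivial) (mem_of_superset hW hDxF)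
      (hDxFcont.continuousAt hW) (mem_of_superset hW hDlDxF) (hDlDxFcont.continuousAt hW)
      hker hcodim htrans hZclosed hcompl
end

section
/- Let ε ∈ (0,1), Q ∈ (0, ε], and let f be holomorphic on the open unit disc, such that f and its derivative f′ extend continuously to the closed unit disc, with sup_{|z|≤1} |f′(z)| ≤ (1−ε)/2. Then for all w, ξ on the unit circle 𝕋: |(α_Q(w) + f(w)) − (α_Q(ξ) + f(ξ))| ≥ ((1−ε)/2)|w − ξ|. In particular the map w ↦ α_Q(w) + f(w) is injective on 𝕋. -/
/-! The ellipse parametrization satisfies `α_Q w - α_Q ξ = (1 - Q / (w ξ)) (w - ξ)`, so on the unit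
circle it expands distances by at least the factor `1 - ‖Q‖`. The mean value inequality on the
convex open disc passes to the closed disc by continuity, so a perturbation with derivative bounded
by `C` reduces this factor by at most `C`. -/

open Metric

open scoped NNReal

/-- The map `α_Q : w ↦ w + Q / w`, which for `𝕜 = ℂ` and `0 < Q < 1` parametrizes an ellipse by the
unit circle. Its value at `0` is the junk value `0`. -/
def ellipseParam {𝕜 : Type*} [Field 𝕜] (Q w : 𝕜) : 𝕜 := w + Q / w

theorem ellipseParam_sub_ellipseParam {𝕜 : Type*} [Field 𝕜] (Q : 𝕜) {w ξ : 𝕜}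
    (hw : w ≠ 0) (hξ : ξ ≠ 0) :
    ellipseParam Q w - ellipseParam Q ξ = (1 - Q / (w * ξ)) * (w - ξ) := by
  unfold ellipseParam
  field_simp
  ring

theorem mul_norm_sub_le_norm_ellipseParam_sub {𝕜 : Type*} [NormedField 𝕜] (Q : 𝕜) {w ξ : 𝕜}
    (hw : w ≠ 0) (hξ : ξ ≠ 0) :
    (1 - ‖Q‖ / (‖w‖ * ‖ξ‖)) * ‖w - ξ‖ ≤ ‖ellipseParam Q w - ellipseParam Q ξ‖ := by
  rw [ellipseParam_sub_ellipseParam Q hw hξ, norm_mul]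
  gcongr
  simpa only [norm_one, norm_div, norm_mul] using norm_sub_norm_le 1 (Q / (w * ξ))

theorem one_sub_norm_mul_norm_sub_le_norm_ellipseParam_sub {𝕜 : Type*} [NormedField 𝕜] (Q : 𝕜)
    {w ξ : 𝕜} (hw : w ∈ sphere 0 1) (hξ : ξ ∈ sphere 0 1) :
    (1 - ‖Q‖) * ‖w - ξ‖ ≤ ‖ellipseParam Q w - ellipseParam Q ξ‖ := by
  simpa only [norm_eq_of_mem_sphere ⟨w, hw⟩, norm_eq_of_mem_sphere ⟨ξ, hξ⟩, mul_one, div_one] using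
    mul_norm_sub_le_norm_ellipseParam_sub Q
      (ne_zero_of_mem_unit_sphere ⟨w, hw⟩) (ne_zero_of_mem_unit_sphere ⟨ξ, hξ⟩)

theorem norm_sub_le_of_norm_hasDerivWithinAt_le_of_mem_closure {𝕜 E : Type*} [RCLike 𝕜]
    [NormedAddCommGroup E] [NormedSpace 𝕜 E] {f f' : 𝕜 → E} {s : Set 𝕜} {C : ℝ}
    (hs : Convex ℝ s) (hfc : ContinuousOn f (closure s))
    (hderiv : ∀ z ∈ s, HasDerivWithinAt f (f' z) s z) (hbound : ∀ z ∈ s, ‖f' z‖ ≤ C) {x y : 𝕜}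
    (hx : x ∈ closure s) (hy : y ∈ closure s) :
    ‖f x - f y‖ ≤ C * ‖x - y‖ := by
  obtain ⟨z, hz⟩ : s.Nonempty := closure_nonempty_iff.mp ⟨x, hx⟩
  lift C to ℝ≥0 using (norm_nonneg _).trans (hbound z hz)
  have hlip : LipschitzOnWith C f s := hs.lipschitzOnWith_of_nnnorm_hasDerivWithin_le hderiv hbound
  exact (hlip.closure hfc).norm_sub_le hx hy

theorem sub_mul_norm_sub_le_norm_add_sub_add {E F : Type*} [SeminormedAddCommGroup E]
    [SeminormedAddCommGroup F] {g f : E → F} {a b : ℝ} {x y : E}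
    (hg : a * ‖x - y‖ ≤ ‖g x - g y‖) (hf : ‖f x - f y‖ ≤ b * ‖x - y‖) :
    (a - b) * ‖x - y‖ ≤ ‖(g x + f x) - (g y + f y)‖ :=
  calc (a - b) * ‖x - y‖ = a * ‖x - y‖ - b * ‖x - y‖ := sub_mul ..
    _ ≤ ‖g x - g y‖ - ‖f x - f y‖ := sub_le_sub hg hf
    _ ≤ ‖(g x - g y) + (f x - f y)‖ := norm_sub_le_norm_add ..
    _ = ‖(g x + f x) - (g y + f y)‖ := by rw [add_sub_add_comm]

theorem injOn_of_mul_norm_sub_le {E F : Type*} [NormedAddCommGroup E] [SeminormedAddCommGroup F]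
    {g : E → F} {s : Set E} {κ : ℝ} (hκ : 0 < κ)
    (hg : ∀ x ∈ s, ∀ y ∈ s, κ * ‖x - y‖ ≤ ‖g x - g y‖) : Set.InjOn g s := by
  intro x hx y hy hxy
  have hle : κ * ‖x - y‖ ≤ 0 := by simpa only [hxy, sub_self, norm_zero] using hg x hx y hy
  exact sub_eq_zero.mp (norm_le_zero_iff.mp (nonpos_of_mul_nonpos_right hle hκ))

theorem perturbed_ellipse_coercivity_general {𝕜 : Type*} [RCLike 𝕜] {Q : 𝕜} {f f' : 𝕜 → 𝕜}
    {κ C : ℝ} (hκ : 0 < κ) (hκC : κ ≤ 1 - ‖Q‖ - C) (hfc : ContinuousOn f (closedBall 0 1))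
    (hderiv : ∀ z ∈ ball 0 1, HasDerivAt f (f' z) z) (hbound : ∀ z ∈ ball 0 1, ‖f' z‖ ≤ C) :
    (∀ w ∈ sphere 0 1, ∀ ξ ∈ sphere 0 1,
      κ * ‖w - ξ‖ ≤ ‖(ellipseParam Q w + f w) - (ellipseParam Q ξ + f ξ)‖) ∧
    Set.InjOn (fun w => ellipseParam Q w + f w) (sphere 0 1) := by
  have hclosure : closure (ball (0 : 𝕜) 1) = closedBall 0 1 := closure_ball 0 one_ne_zero
  have hcoercive : ∀ w ∈ sphere 0 1, ∀ ξ ∈ sphere 0 1,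
      κ * ‖w - ξ‖ ≤ ‖(ellipseParam Q w + f w) - (ellipseParam Q ξ + f ξ)‖ := by
    intro w hw ξ hξ
    have hellipse := one_sub_norm_mul_norm_sub_le_norm_ellipseParam_sub Q hw hξ
    have hpert : ‖f w - f ξ‖ ≤ C * ‖w - ξ‖ :=
      norm_sub_le_of_norm_hasDerivWithinAt_le_of_mem_closure (convex_ball 0 1)
        (hclosure ▸ hfc) (fun z hz => (hderiv z hz).hasDerivWithinAt) hbound
        (hclosure ▸ sphere_subset_closedBall hw) (hclosure ▸ sphere_subset_closedBall hξ)
    calc κ * ‖w - ξ‖ ≤ (1 - ‖Q‖ - C) * ‖w - ξ‖ := by gcongr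
      _ ≤ _ := sub_mul_norm_sub_le_norm_add_sub_add hellipse hpert
  exact ⟨hcoercive, injOn_of_mul_norm_sub_le hκ hcoercive⟩

/-- Coercivity of the perturbed ellipse parametrization: if `Q ∈ (0, ε]` with
`ε ∈ (0,1)` and `f` is holomorphic in the unit disc, with `f` and `f'`
continuous up to the closed disc and `sup_{|z|≤1} |f'(z)| ≤ (1-ε)/2`, then
`|(α_Q + f)(w) - (α_Q + f)(ξ)| ≥ ((1-ε)/2)|w - ξ|` for `w, ξ` on the unit
circle; in particular `α_Q + f` is injective on the circle. -/
theorem perturbed_ellipse_coercivity (ε : ℝ) (hε : ε ∈ Set.Ioo (0:ℝ) 1)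
    (Q : ℝ) (hQ : Q ∈ Set.Ioc (0:ℝ) ε)
    (f f' : ℂ → ℂ)
    (hf : DifferentiableOn ℂ f (Metric.ball (0:ℂ) 1))
    (hfc : ContinuousOn f (Metric.closedBall (0:ℂ) 1))
    (hderiv : ∀ z ∈ Metric.ball (0:ℂ) 1, HasDerivAt f (f' z) z)
    (hf'c : ContinuousOn f' (Metric.closedBall (0:ℂ) 1))
    (hbound : ∀ z ∈ Metric.closedBall (0:ℂ) 1, ‖f' z‖ ≤ (1 - ε) / 2) :
    (∀ w ∈ Metric.sphere (0:ℂ) 1, ∀ ξ ∈ Metric.sphere (0:ℂ) 1,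
      (1 - ε) / 2 * ‖w - ξ‖
        ≤ ‖(w + (Q : ℂ) / w + f w) - (ξ + (Q : ℂ) / ξ + f ξ)‖) ∧
    Set.InjOn (fun w : ℂ => w + (Q : ℂ) / w + f w) (Metric.sphere (0:ℂ) 1) :=
  perturbed_ellipse_coercivity_general (by linarith [hε.2])
    (by rw [Complex.norm_of_nonneg hQ.1.le]; linarith [hQ.2]) hfc hderiv
    fun z hz => hbound z (ball_subset_closedBall hz)
end

section
/- Let α ∈ (0,1). There is a constant C = C(α) > 0 with the following property. Let C₀ > 0 and let K : 𝕋 × 𝕋 → ℂ be measurable with |K(ξ,w)| ≤ C₀ for all ξ, w ∈ 𝕋, and suppose that for each ξ ∈ 𝕋 the map θ ↦ K(ξ, e^{iθ}) is differentiable at every point with e^{iθ} ≠ ξ, with tangential derivative ∂_w K satisfying |∂_w K(ξ,w)| ≤ C₀/|w − ξ| for all w ∈ 𝕋 \ {ξ}. Then for every continuous φ : 𝕋 → ℂ, the function Tφ(w) = (1/(2πi))∮_{|ξ|=1} K(ξ,w)φ(ξ) dξ is α-Hölder continuous on 𝕋 with |Tφ(w₁) − Tφ(w₂)| ≤ C·C₀·‖φ‖_{L^∞(𝕋)}·|w₁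 − w₂|^α for all w₁, w₂ ∈ 𝕋. -/
open Metric Complex

/-!
Away from the diagonal the derivative bound makes `K ξ` Lipschitz near `w₁` with constant of order
`C₀ / ‖w₁ - ξ‖`, and everywhere `K ξ` oscillates by at most `2 * C₀`. Interpolating the two bounds
with weights `α` and `1 - α` gives `‖K ξ w₁ - K ξ w₂‖ ≲ C₀ * (‖w₁ - w₂‖ / ‖ξ - w₁‖) ^ α`, and
`ξ ↦ ‖ξ - w₁‖ ^ (-α)` is integrable on the circle since `α < 1`.
-/

open MeasureTheory
open scoped Real Interval

variable {E : Type*} [NormedAddCommGroup E]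

section Interpolation

lemma le_mul_rpow_of_le_of_le_mul {α A q x : ℝ} (hα : α ∈ Set.Icc (0 : ℝ) 1) (hA : 0 ≤ A)
    (hq : 0 ≤ q) (hxA : x ≤ A) (hxq : x ≤ A * q) : x ≤ A * q ^ α := by
  rcases le_total q 1 with hq1 | hq1
  · exact hxq.trans (mul_le_mul_of_nonneg_left (Real.self_le_rpow_of_le_one hq hq1 hα.2) hA)
  · exact hxA.trans (le_mul_of_one_le_right hA (Real.one_le_rpow hq1 hα.1))

variable [NormedSpace ℝ E] {f f' : ℝ → E} {δ : ℝ → ℝ} {a b C : ℝ}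

lemma norm_sub_le_of_norm_deriv_le_div_of_near (hδ : LipschitzWith 1 δ) (hC : 0 ≤ C)
    (hf : ∀ t, 0 < δ t → HasDerivAt f (f' t) t) (hf' : ∀ t, 0 < δ t → ‖f' t‖ ≤ C / δ t)
    (ha : 0 < δ a) (hab : 2 * |a - b| ≤ δ a) :
    ‖f a - f b‖ ≤ C * (2 * |a - b| / δ a) := by
  have hδ_half : ∀ t ∈ [[b, a]], δ a / 2 ≤ δ t := by
    intro t ht
    have hta : |a - t| ≤ |a - b| := Set.abs_sub_right_of_mem_uIcc ht
    have hδta : |δ a - δ t| ≤ |a - t| := by simpa [Real.dist_eq] using hδ.dist_le_mul a t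
    linarith [le_abs_self (δ a - δ t)]
  have hδ_pos : ∀ t ∈ [[b, a]], 0 < δ t := fun t ht => (half_pos ha).trans_le (hδ_half t ht)
  have hmvt : ‖f a - f b‖ ≤ C / (δ a / 2) * ‖a - b‖ :=
    (convex_uIcc b a).norm_image_sub_le_of_norm_hasDerivWithin_le
      (fun t ht => (hf t (hδ_pos t ht)).hasDerivWithinAt)
      (fun t ht => (hf' t (hδ_pos t ht)).trans
        (div_le_div_of_nonneg_left hC (half_pos ha) (hδ_half t ht)))
      Set.left_mem_uIcc Set.right_mem_uIcc
  calc ‖f a - f b‖ ≤ C / (δ a / 2) * ‖a - b‖ := hmvt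
    _ = C * (2 * |a - b| / δ a) := by rw [Real.norm_eq_abs]; field_simp

lemma norm_sub_le_rpow_of_norm_deriv_le_div {α : ℝ} (hα : α ∈ Set.Icc (0 : ℝ) 1)
    (hδ : LipschitzWith 1 δ) (hfC : ∀ t, ‖f t‖ ≤ C)
    (hf : ∀ t, 0 < δ t → HasDerivAt f (f' t) t) (hf' : ∀ t, 0 < δ t → ‖f' t‖ ≤ C / δ t)
    (ha : 0 < δ a) : ‖f a - f b‖ ≤ 2 * C * (2 * |a - b| / δ a) ^ α := by
  have hC : 0 ≤ C := (norm_nonneg _).trans (hfC a)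
  have hosc : ‖f a - f b‖ ≤ 2 * C := by linarith [norm_sub_le (f a) (f b), hfC a, hfC b]
  refine le_mul_rpow_of_le_of_le_mul hα (by positivity) (by positivity) hosc ?_
  rcases le_total (2 * |a - b|) (δ a) with hnear | hfar
  · refine (norm_sub_le_of_norm_deriv_le_div_of_near hδ hC hf hf' ha hnear).trans ?_
    gcongr
    linarith
  · exact hosc.trans (le_mul_of_one_le_right (by positivity) ((one_le_div ha).2 hfar))

end Interpolation

lemma exists_exp_mul_I_eq_and_abs_sub_le {w₁ w₂ : ℂ} (h₁ : ‖w₁‖ = 1) (h₂ : ‖w₂‖ = 1) :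
    ∃ a b : ℝ, exp (a * I) = w₁ ∧ exp (b * I) = w₂ ∧ |a - b| ≤ π / 2 * ‖w₁ - w₂‖ := by
  have hw₁ : w₁ ≠ 0 := norm_pos_iff.1 (h₁ ▸ one_pos)
  have hw₂ : w₂ ≠ 0 := norm_pos_iff.1 (h₂ ▸ one_pos)
  have hexp₂ : exp (arg w₂ * I) = w₂ := by simpa [h₂] using norm_mul_exp_arg_mul_I w₂
  have hexp_div : exp (arg (w₁ / w₂) * I) = w₁ / w₂ := by
    simpa [h₁, h₂] using norm_mul_exp_arg_mul_I (w₁ / w₂)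
  refine ⟨arg (w₁ / w₂) + arg w₂, arg w₂, ?_, hexp₂, ?_⟩
  · rw [ofReal_add, add_mul, Complex.exp_add, hexp_div, hexp₂, div_mul_cancel₀ _ hw₂]
  · rw [add_sub_cancel_right, ← angle_eq_abs_arg hw₁ hw₂]
    exact angle_le_mul_norm_sub h₁ h₂

lemma two_div_pi_mul_abs_le_norm_exp_sub_exp {a t : ℝ} (ht : t ∈ Set.Ioc (-π) π) :
    2 / π * |t| ≤ ‖exp ((a + t : ℝ) * I) - exp (a * I)‖ := by
  have hangle : InnerProductGeometry.angle (exp ((a + t : ℝ) * I)) (exp (a * I)) = |t| := by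
    rw [angle_exp_exp, add_sub_cancel_left, (toIocMod_eq_self _).2]
    rwa [show -π + 2 * π = π by ring]
  simpa only [hangle] using
    mul_angle_le_norm_sub (norm_exp_ofReal_mul_I (a + t)) (norm_exp_ofReal_mul_I a)

lemma lipschitzWith_norm_exp_mul_I_sub (z : ℂ) :
    LipschitzWith 1 fun t : ℝ => ‖exp (t * I) - z‖ := by
  have hcircleMap : circleMap 0 1 = fun t : ℝ => exp (t * I) := by
    ext t
    rw [circleMap_zero, ofReal_one, one_mul]
  have hexp : LipschitzWith 1 fun t : ℝ => exp (t * I) := by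
    simpa only [hcircleMap, map_one] using lipschitzWith_circleMap 0 1
  simpa only [dist_eq_norm, Function.comp_def, one_mul] using
    (LipschitzWith.dist_left z).comp hexp

lemma norm_sub_le_rpow_of_tangential_deriv_le_div [NormedSpace ℂ E] {α C : ℝ}
    (hα : α ∈ Set.Icc (0 : ℝ) 1) {k k' : ℂ → E} {ξ w₁ w₂ : ℂ}
    (hkC : ∀ w ∈ sphere (0 : ℂ) 1, ‖k w‖ ≤ C)
    (hk : ∀ θ : ℝ, exp (θ * I) ≠ ξ →
      HasDerivAt (fun t : ℝ => k (exp (t * I))) ((exp (θ * I) * I) • k' (exp (θ * I))) θ)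
    (hk' : ∀ w ∈ sphere (0 : ℂ) 1, w ≠ ξ → ‖k' w‖ ≤ C / ‖w - ξ‖)
    (hw₁ : w₁ ∈ sphere (0 : ℂ) 1) (hw₂ : w₂ ∈ sphere (0 : ℂ) 1) (hξ : w₁ ≠ ξ) :
    ‖k w₁ - k w₂‖ ≤ 2 * C * (π * ‖w₁ - w₂‖) ^ α * ‖w₁ - ξ‖ ^ (-α) := by
  have hmem (t : ℝ) : exp (t * I) ∈ sphere (0 : ℂ) 1 :=
    mem_sphere_zero_iff_norm.2 (norm_exp_ofReal_mul_I t)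
  have hne {t : ℝ} (ht : 0 < ‖exp (t * I) - ξ‖) : exp (t * I) ≠ ξ := norm_sub_pos_iff.1 ht
  have hC : 0 ≤ C := (norm_nonneg _).trans (hkC w₁ hw₁)
  obtain ⟨a, b, rfl, rfl, hab⟩ := exists_exp_mul_I_eq_and_abs_sub_le
    (mem_sphere_zero_iff_norm.1 hw₁) (mem_sphere_zero_iff_norm.1 hw₂)
  calc ‖k (exp (a * I)) - k (exp (b * I))‖
      ≤ 2 * C * (2 * |a - b| / ‖exp (a * I) - ξ‖) ^ α :=
        norm_sub_le_rpow_of_norm_deriv_le_div hα (lipschitzWith_norm_exp_mul_I_sub ξ)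
          (fun t => hkC _ (hmem t)) (fun t ht => hk t (hne ht))
          (fun t ht => by simpa [norm_smul] using hk' _ (hmem t) (hne ht))
          (norm_sub_pos_iff.2 hξ)
    _ ≤ 2 * C * (π * ‖exp (a * I) - exp (b * I)‖ / ‖exp (a * I) - ξ‖) ^ α := by
        have harc : 2 * |a - b| ≤ π * ‖exp (a * I) - exp (b * I)‖ := by linarith
        have hα0 : 0 ≤ α := hα.1
        gcongr
    _ = _ := by
        rw [Real.div_rpow (by positivity) (norm_nonneg _), Real.rpow_neg (norm_nonneg _),
          ← div_eq_mul_inv, mul_div_assoc]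

section AbsRpow

variable {r c : ℝ}

lemma intervalIntegrable_abs_rpow (hr : -1 < r) :
    IntervalIntegrable (fun t : ℝ => |t| ^ r) volume (-c) c := by
  refine intervalIntegrable_of_even (fun t => by simp only [abs_neg]) fun x hx => ?_
  refine (intervalIntegral.intervalIntegrable_rpow' hr).congr fun t ht => ?_
  rw [Set.uIoc_of_le hx.le] at ht
  simp only [abs_of_pos ht.1]

lemma integral_abs_rpow (hr : -1 < r) (hc : 0 ≤ c) :
    ∫ t in (-c)..c, |t| ^ r = 2 * c ^ (r + 1) / (r + 1) := by
  have hright : ∫ t in 0..c, |t| ^ r = c ^ (r + 1) / (r + 1) := by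
    rw [intervalIntegral.integral_congr (g := fun t => t ^ r), integral_rpow (Or.inl hr),
      Real.zero_rpow (by linarith), sub_zero]
    intro t ht
    rw [Set.uIcc_of_le hc] at ht
    simp only [abs_of_nonneg ht.1]
  have hleft : ∫ t in (-c)..0, |t| ^ r = ∫ t in 0..c, |t| ^ r := by
    simpa using (intervalIntegral.integral_comp_neg (a := 0) (b := c) fun t => |t| ^ r).symm
  have hint := intervalIntegrable_abs_rpow (c := c) hr
  rw [← intervalIntegral.integral_add_adjacent_intervals (b := 0)
    (hint.mono_set (Set.uIcc_subset_uIcc_left (by simp [hc])))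
    (hint.mono_set (Set.uIcc_subset_uIcc_right (by simp [hc]))), hleft, hright]
  ring

end AbsRpow

lemma circleIntegrable_smul_of_norm_le {𝕜 : Type*} [NormedField 𝕜] [NormedSpace 𝕜 E]
    {k : ℂ → 𝕜} {φ : ℂ → E} {c : ℂ} {R C : ℝ} (hk : CircleIntegrable k c R)
    (hkC : ∀ ξ ∈ sphere c |R|, ‖k ξ‖ ≤ C) (hφ : CircleIntegrable φ c R) :
    CircleIntegrable (fun ξ => k ξ • φ ξ) c R := by
  rw [CircleIntegrable, intervalIntegrable_iff] at *
  exact Integrable.bdd_smul hφ C hk.aestronglyMeasurable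
    (Filter.Eventually.of_forall fun θ => hkC _ (circleMap_mem_sphere' c R θ))

lemma circleIntegrable_of_stronglyMeasurable_of_norm_le {f : ℂ → E} {c : ℂ} {R C : ℝ}
    (hf : StronglyMeasurable f) (hfC : ∀ ξ ∈ sphere c |R|, ‖f ξ‖ ≤ C) : CircleIntegrable f c R :=
  (intervalIntegrable_const (c := C)).mono_fun
    (hf.comp_measurable (measurable_circleMap c R)).aestronglyMeasurable
    (Filter.Eventually.of_forall fun θ =>
      (hfC _ (circleMap_mem_sphere' c R θ)).trans (Real.le_norm_self C))

lemma norm_circleIntegral_le_integral [NormedSpace ℂ E] {f : ℂ → E} {c : ℂ} {R : ℝ} {g : ℝ → ℝ}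
    (a : ℝ) (hg : IntervalIntegrable g volume (-π) π)
    (hfg : ∀ᵐ t, t ∈ Set.Ioc (-π) π → ‖f (circleMap c R (a + t))‖ ≤ g t) :
    ‖∮ ξ in C(c, R), f ξ‖ ≤ |R| * ∫ t in (-π)..π, g t := by
  set F : ℝ → E := fun θ => deriv (circleMap c R) θ • f (circleMap c R θ) with hF
  have hperiodic : Function.Periodic F (2 * π) := fun θ => by
    simp only [hF, deriv_circleMap, periodic_circleMap c R θ, periodic_circleMap 0 R θ]
  have hshift : ∮ ξ in C(c, R), f ξ = ∫ t in (-π)..π, F (a + t) := by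
    rw [circleIntegral, intervalIntegral.integral_comp_add_left F a]
    convert! hperiodic.intervalIntegral_add_eq 0 (a + -π) using 2 <;> ring
  rw [hshift, ← intervalIntegral.integral_const_mul]
  refine intervalIntegral.norm_integral_le_of_norm_le (by linarith [Real.pi_pos]) ?_
    (hg.const_mul |R|)
  filter_upwards [hfg] with t ht htmem
  have hspeed : ‖deriv (circleMap c R) (a + t)‖ = |R| := by simp [deriv_circleMap]
  rw [hF, norm_smul, hspeed]
  exact mul_le_mul_of_nonneg_left (ht htmem) (abs_nonneg R)

lemma norm_circleIntegral_le_of_norm_le_rpow [NormedSpace ℂ E] {f : ℂ → E} {w : ℂ} {α A : ℝ}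
    (hα : α ∈ Set.Ico (0 : ℝ) 1) (hA : 0 ≤ A) (hw : w ∈ sphere (0 : ℂ) 1)
    (hf : ∀ ξ ∈ sphere (0 : ℂ) 1, ξ ≠ w → ‖f ξ‖ ≤ A * ‖ξ - w‖ ^ (-α)) :
    ‖∮ ξ in C(0, 1), f ξ‖ ≤ A * (π / 2) ^ α * (2 * π ^ (1 - α) / (1 - α)) := by
  have hα1 : -1 < -α := neg_lt_neg hα.2
  obtain ⟨a, rfl⟩ := (norm_eq_one_iff w).1 (mem_sphere_zero_iff_norm.1 hw)
  have hbound : ‖∮ ξ in C(0, 1), f ξ‖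
      ≤ |1| * ∫ t in (-π)..π, A * (2 / π) ^ (-α) * |t| ^ (-α) := by
    refine norm_circleIntegral_le_integral a
      ((intervalIntegrable_abs_rpow hα1).const_mul _) ?_
    filter_upwards [compl_mem_ae_iff.2 (measure_singleton 0)] with t (ht0 : t ≠ 0) ht
    have hchord : 2 / π * |t| ≤ ‖exp ((a + t : ℝ) * I) - exp (a * I)‖ :=
      two_div_pi_mul_abs_le_norm_exp_sub_exp ht
    have hpos : 0 < 2 / π * |t| := by positivity
    rw [circleMap_zero, ofReal_one, one_mul, mul_assoc, ← Real.mul_rpow (by positivity) (by simp)]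
    have hne : exp ((a + t : ℝ) * I) ≠ exp (a * I) := norm_sub_pos_iff.1 (hpos.trans_le hchord)
    exact (hf _ (mem_sphere_zero_iff_norm.2 (norm_exp_ofReal_mul_I _)) hne).trans
      (mul_le_mul_of_nonneg_left
        (Real.rpow_le_rpow_of_nonpos hpos hchord (neg_nonpos.2 hα.1)) hA)
  rwa [abs_one, one_mul, intervalIntegral.integral_const_mul,
    integral_abs_rpow hα1 Real.pi_pos.le, neg_add_eq_sub,
    Real.rpow_neg_eq_inv_rpow, inv_div] at hbound

/-- The integral operator `Tφ(w) = (1/2πi) ∮ K(ξ, w) φ(ξ) dξ` on the unit circle with kernel `K`.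
It takes the junk value `0` at points `w` where the integrand is not integrable. -/
noncomputable def circleKernelOperator [NormedSpace ℂ E] (K : ℂ → ℂ → ℂ) (φ : ℂ → E) (w : ℂ) : E :=
  (2 * π * I : ℂ)⁻¹ • ∮ ξ in C(0, 1), K ξ w • φ ξ

theorem kernel_holder_estimate_general [NormedSpace ℂ E] [CompleteSpace E] {α C₀ M : ℝ}
    (hα : α ∈ Set.Ico (0 : ℝ) 1) {K K' : ℂ → ℂ → ℂ} {φ : ℂ → E}
    (hKint : ∀ w ∈ sphere (0 : ℂ) 1, CircleIntegrable (fun ξ => K ξ w) 0 1)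
    (hKC : ∀ ξ ∈ sphere (0 : ℂ) 1, ∀ w ∈ sphere (0 : ℂ) 1, ‖K ξ w‖ ≤ C₀)
    (hK : ∀ ξ ∈ sphere (0 : ℂ) 1, ∀ θ : ℝ, exp (θ * I) ≠ ξ →
      HasDerivAt (fun t : ℝ => K ξ (exp (t * I)))
        (exp (θ * I) * I * K' ξ (exp (θ * I))) θ)
    (hK' : ∀ ξ ∈ sphere (0 : ℂ) 1, ∀ w ∈ sphere (0 : ℂ) 1, w ≠ ξ → ‖K' ξ w‖ ≤ C₀ / ‖w - ξ‖)
    (hφint : CircleIntegrable φ 0 1) (hφM : ∀ ξ ∈ sphere (0 : ℂ) 1, ‖φ ξ‖ ≤ M)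
    {w₁ w₂ : ℂ} (hw₁ : w₁ ∈ sphere (0 : ℂ) 1) (hw₂ : w₂ ∈ sphere (0 : ℂ) 1) :
    ‖circleKernelOperator K φ w₁ - circleKernelOperator K φ w₂‖
      ≤ 2 * (π / 2) ^ α / (1 - α) * C₀ * M * ‖w₁ - w₂‖ ^ α := by
  have hC₀ : 0 ≤ C₀ := (norm_nonneg _).trans (hKC w₁ hw₁ w₁ hw₁)
  have hM : 0 ≤ M := (norm_nonneg _).trans (hφM w₁ hw₁)
  have htwo_pi_I : ‖(2 * π * I : ℂ)‖ = 2 * π := by simp [Real.pi_pos.le]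
  have hint {w : ℂ} (hw : w ∈ sphere (0 : ℂ) 1) : CircleIntegrable (fun ξ => K ξ w • φ ξ) 0 1 :=
    circleIntegrable_smul_of_norm_le (hKint w hw)
      (fun ξ hξ => hKC ξ (by simpa using hξ) w hw) hφint
  have hpointwise : ∀ ξ ∈ sphere (0 : ℂ) 1, ξ ≠ w₁ → ‖K ξ w₁ • φ ξ - K ξ w₂ • φ ξ‖
      ≤ 2 * C₀ * (π * ‖w₁ - w₂‖) ^ α * M * ‖ξ - w₁‖ ^ (-α) := fun ξ hξ hne => by
    rw [← sub_smul, norm_smul, mul_right_comm, norm_sub_rev ξ]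
    exact mul_le_mul (norm_sub_le_rpow_of_tangential_deriv_le_div (Set.Ico_subset_Icc_self hα)
      (hKC ξ hξ) (hK ξ hξ) (hK' ξ hξ) hw₁ hw₂ hne.symm) (hφM ξ hξ) (norm_nonneg _) (by positivity)
  rw [circleKernelOperator, circleKernelOperator, ← smul_sub,
    ← circleIntegral.integral_sub (hint hw₁) (hint hw₂), norm_smul, norm_inv, htwo_pi_I,
    inv_mul_le_iff₀ Real.two_pi_pos]
  calc ‖∮ ξ in C(0, 1), (K ξ w₁ • φ ξ - K ξ w₂ • φ ξ)‖
      ≤ 2 * C₀ * (π * ‖w₁ - w₂‖) ^ α * M * (π / 2) ^ α * (2 * π ^ (1 - α) / (1 - α)) :=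
        norm_circleIntegral_le_of_norm_le_rpow hα (by positivity) hw₁ hpointwise
    _ = 2 * (π ^ α * π ^ (1 - α)) * (2 * (π / 2) ^ α / (1 - α) * C₀ * M * ‖w₁ - w₂‖ ^ α) := by
        rw [Real.mul_rpow Real.pi_pos.le (norm_nonneg _)]
        ring
    _ = 2 * π * (2 * (π / 2) ^ α / (1 - α) * C₀ * M * ‖w₁ - w₂‖ ^ α) := by
        rw [← Real.rpow_add Real.pi_pos, add_sub_cancel, Real.rpow_one]

/-- Mateu–Orobitg–Verdera type lemma: if `K : 𝕋 × 𝕋 → ℂ` is measurable and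
bounded by `C₀`, and for each fixed `ξ` the map `w ↦ K(ξ,w)` is differentiable
along the circle off the diagonal with tangential derivative `K'` bounded by
`C₀/|w - ξ|`, then `Tφ(w) = (1/2πi)∮ K(ξ,w)φ(ξ)dξ` is `α`-Hölder with constant
`C(α)·C₀·‖φ‖_∞`. -/
theorem kernel_holder_estimate (α : ℝ) (hα : α ∈ Set.Ioo (0:ℝ) 1) :
    ∃ C : ℝ, 0 < C ∧
      ∀ (C₀ : ℝ) (K K' : ℂ → ℂ → ℂ) (φ : ℂ → ℂ),
        0 < C₀ →
        Measurable (fun p : ℂ × ℂ => K p.1 p.2) →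
        (∀ ξ ∈ sphere (0:ℂ) 1, ∀ w ∈ sphere (0:ℂ) 1, ‖K ξ w‖ ≤ C₀) →
        (∀ ξ ∈ sphere (0:ℂ) 1, ∀ θ : ℝ, Complex.exp (θ * Complex.I) ≠ ξ →
          HasDerivAt (fun t : ℝ => K ξ (Complex.exp (t * Complex.I)))
            (Complex.exp (θ * Complex.I) * Complex.I * K' ξ (Complex.exp (θ * Complex.I))) θ) →
        (∀ ξ ∈ sphere (0:ℂ) 1, ∀ w ∈ sphere (0:ℂ) 1, w ≠ ξ →
          ‖K' ξ w‖ ≤ C₀ / ‖w - ξ‖) →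
        ContinuousOn φ (sphere (0:ℂ) 1) →
        ∀ M : ℝ, (∀ ξ ∈ sphere (0:ℂ) 1, ‖φ ξ‖ ≤ M) →
        ∀ w₁ ∈ sphere (0:ℂ) 1, ∀ w₂ ∈ sphere (0:ℂ) 1,
          ‖(∮ ξ in C(0, 1), K ξ w₁ * φ ξ) / (2 * Real.pi * Complex.I)
              - (∮ ξ in C(0, 1), K ξ w₂ * φ ξ) / (2 * Real.pi * Complex.I)‖
            ≤ C * C₀ * M * ‖w₁ - w₂‖ ^ α := by
  have hα' : 0 < 1 - α := sub_pos.2 hα.2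
  refine ⟨2 * (π / 2) ^ α / (1 - α), by positivity, ?_⟩
  intro C₀ K K' φ _ hKm hKC hK hK' hφ M hφM w₁ hw₁ w₂ hw₂
  simpa only [circleKernelOperator, smul_eq_mul, inv_mul_eq_div] using
    kernel_holder_estimate_general (Set.Ioo_subset_Ico_self hα)
      (fun w hw => circleIntegrable_of_stronglyMeasurable_of_norm_le
        hKm.of_uncurry_right.stronglyMeasurable fun ξ hξ => hKC ξ (by simpa using hξ) w hw)
      hKC hK hK' (hφ.circleIntegrable zero_le_one) hφM hw₁ hw₂
end
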